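/- arXiv:1112.5677 — 2 statements merged into one kernel-verified Lean document; each statement's English description precedes it below -/
import Mathlib

section
/- Suppose ω(2δ) < 2ω(δ) for all sufficiently small δ > 0. Then there exists a nowhere linear C^{1,ω}-diffeomorphism h of the circle 𝕋 such that for every p with 1 ≤ p < 2, ‖e^{inh}‖_{A_p(𝕋)} = O(Θ_p(|n|)) as |n| → ∞, n ∈ ℤ, where Θ_1(y) = (y/log y)·χ^{-1}((log y)²/y) and Θ_p(y) = (∫₁^y (χ^{-1}(1/τ))^p dτ)^{1/p} for 1 < p < 2. -/
open MeasureTheory Real Set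
open scoped ENNReal

/-- The k-th Fourier coefficient of a (2π-periodic) function on the circle,
identified with a function on [0, 2π]. -/
noncomputable def fourierCoef (f : ℝ → ℂ) (k : ℤ) : ℂ :=
  (1 / (2 * (Real.pi : ℂ))) *
    ∫ t in (0:ℝ)..(2 * Real.pi), f t * Complex.exp (-Complex.I * (k : ℂ) * (t : ℂ))

/-- The A_p(𝕋) norm: ℓ^p norm of the sequence of Fourier coefficients
(valued in ℝ≥0∞ so that divergence gives ∞). -/
noncomputable def ApNorm (p : ℝ) (f : ℝ → ℂ) : ℝ≥0∞ :=
  (∑' k : ℤ, ((‖fourierCoef f k‖₊ : ℝ≥0∞) ^ p)) ^ (1 / p)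


/-! ### Part 1: the staircase functions -/

/-- Finite-level approximations of the staircase. -/
noncomputable def stairApprox (δ : ℕ → ℝ) : ℕ → ℕ → ℝ → ℝ
  | 0, n, t => if δ n ≤ t then 1 else 0
  | k + 1, n, t =>
      (stairApprox δ k (n + 1) t + stairApprox δ k (n + 1) (t - (δ n - δ (n + 1)))) / 2

/-- The family of staircase functions. -/
structure IsStair (δ : ℕ → ℝ) (G : ℕ → ℝ → ℝ) : Prop where
  pos : ∀ n, 0 < δ n
  half : ∀ n, 2 * δ (n + 1) < δ n
  mono : ∀ n, Monotone (G n)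
  zero : ∀ n t, t ≤ 0 → G n t = 0
  one : ∀ n t, δ n ≤ t → G n t = 1
  fe : ∀ n t, G n t = (G (n + 1) t + G (n + 1) (t - (δ n - δ (n + 1)))) / 2

theorem stairApprox_mono (δ : ℕ → ℝ) (k n : ℕ) : Monotone (stairApprox δ k n) := by
  induction k generalizing n with
  | zero =>
    intro s t hst
    simp only [stairApprox]
    split_ifs <;> linarith
  | succ k ih =>
    intro s t hst
    simp only [stairApprox]
    have h1 := ih (n + 1) hst
    have h2 := ih (n + 1) (sub_le_sub_right hst (δ n - δ (n + 1)))
    linarith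

theorem stairApprox_nonneg (δ : ℕ → ℝ) (k n : ℕ) (t : ℝ) : 0 ≤ stairApprox δ k n t := by
  induction k generalizing n t with
  | zero => simp only [stairApprox]; split_ifs <;> norm_num
  | succ k ih =>
    simp only [stairApprox]
    have h1 := ih (n + 1) t
    have h2 := ih (n + 1) (t - (δ n - δ (n + 1)))
    linarith

theorem stairApprox_le_one (δ : ℕ → ℝ) (k n : ℕ) (t : ℝ) : stairApprox δ k n t ≤ 1 := by
  induction k generalizing n t with
  | zero => simp only [stairApprox]; split_ifs <;> norm_num
  | succ k ih =>
    simp only [stairApprox]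
    have h1 := ih (n + 1) t
    have h2 := ih (n + 1) (t - (δ n - δ (n + 1)))
    linarith

theorem stairApprox_zero (δ : ℕ → ℝ) (hpos : ∀ n, 0 < δ n) (hhalf : ∀ n, 2 * δ (n + 1) < δ n)
    (k n : ℕ) (t : ℝ) (ht : t ≤ 0) : stairApprox δ k n t = 0 := by
  induction k generalizing n t with
  | zero => simp only [stairApprox]; rw [if_neg]; have := hpos n; linarith
  | succ k ih =>
    simp only [stairApprox]
    have h1 := ih (n + 1) t ht
    have h2 := ih (n + 1) (t - (δ n - δ (n + 1)))
      (by have := hpos (n+1); have := hhalf n; linarith)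
    rw [h1, h2]; norm_num

theorem stairApprox_one (δ : ℕ → ℝ) (hpos : ∀ n, 0 < δ n) (hhalf : ∀ n, 2 * δ (n + 1) < δ n)
    (k n : ℕ) (t : ℝ) (ht : δ n ≤ t) : stairApprox δ k n t = 1 := by
  induction k generalizing n t with
  | zero => simp only [stairApprox]; rw [if_pos ht]
  | succ k ih =>
    simp only [stairApprox]
    have h1 := ih (n + 1) t (by have := hpos (n+1); have := hhalf n; linarith)
    have h2 := ih (n + 1) (t - (δ n - δ (n + 1))) (by linarith)
    rw [h1, h2]; norm_num

theorem stairApprox_succ_le (δ : ℕ → ℝ) (hpos : ∀ n, 0 < δ n) (hhalf : ∀ n, 2 * δ (n + 1) < δ n)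
    (k n : ℕ) (t : ℝ) : stairApprox δ k n t ≤ stairApprox δ (k + 1) n t := by
  induction k generalizing n t with
  | zero =>
    by_cases h : δ n ≤ t
    · rw [stairApprox_one δ hpos hhalf _ _ _ h, stairApprox_one δ hpos hhalf _ _ _ h]
    · have : stairApprox δ 0 n t = 0 := by simp only [stairApprox]; rw [if_neg h]
      rw [this]; exact stairApprox_nonneg _ _ _ _
  | succ k ih =>
    have h1 := ih (n + 1) t
    have h2 := ih (n + 1) (t - (δ n - δ (n + 1)))
    rw [stairApprox, stairApprox]
    linarith

theorem exists_isStair (δ : ℕ → ℝ) (hpos : ∀ n, 0 < δ n) (hhalf : ∀ n, 2 * δ (n + 1) < δ n) :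
    ∃ G : ℕ → ℝ → ℝ, IsStair δ G := by
  have hlim : ∀ n t, Filter.Tendsto (fun k => stairApprox δ k n t) Filter.atTop
      (nhds (⨆ k, stairApprox δ k n t)) := by
    intro n t
    apply tendsto_atTop_ciSup
    · exact monotone_nat_of_le_succ fun k => stairApprox_succ_le δ hpos hhalf k n t
    · exact ⟨1, by rintro _ ⟨k, rfl⟩; exact stairApprox_le_one _ _ _ _⟩
  refine ⟨fun n t => ⨆ k, stairApprox δ k n t, hpos, hhalf, ?_, ?_, ?_, ?_⟩
  · intro n s t hst
    exact le_of_tendsto_of_tendsto' (hlim n s) (hlim n t) fun k => stairApprox_mono δ k n hst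
  · intro n t ht
    simp [stairApprox_zero δ hpos hhalf _ n t ht]
  · intro n t ht
    simp [stairApprox_one δ hpos hhalf _ n t ht]
  · intro n t
    have h1 := (hlim n t).comp (Filter.tendsto_add_atTop_nat 1)
    have h2 := ((hlim (n + 1) t).add (hlim (n + 1) (t - (δ n - δ (n + 1))))).div_const 2
    exact tendsto_nhds_unique h1 h2

namespace IsStair

variable {δ : ℕ → ℝ} {G : ℕ → ℝ → ℝ}

theorem nonneg (h : IsStair δ G) (n : ℕ) (t : ℝ) : 0 ≤ G n t := by
  rw [← h.zero n (min t 0) (min_le_right _ _)]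
  exact h.mono n (min_le_left _ _)

theorem le_one (h : IsStair δ G) (n : ℕ) (t : ℝ) : G n t ≤ 1 := by
  rw [← h.one n (max t (δ n)) (le_max_right _ _)]
  exact h.mono n (le_max_left _ _)

theorem left (h : IsStair δ G) (n : ℕ) (t : ℝ) (ht : t ≤ δ n - δ (n + 1)) :
    G n t = G (n + 1) t / 2 := by
  rw [h.fe, h.zero (n + 1) (t - (δ n - δ (n + 1))) (by linarith), add_zero]

theorem right (h : IsStair δ G) (n : ℕ) (t : ℝ) (ht : δ (n + 1) ≤ t) :
    G n t = (1 + G (n + 1) (t - (δ n - δ (n + 1)))) / 2 := by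
  rw [h.fe, h.one (n + 1) t ht]

theorem anti (h : IsStair δ G) (n k : ℕ) : δ (n + k) ≤ δ n := by
  induction k with
  | zero => rfl
  | succ k ih =>
    have := h.half (n + k)
    have := h.pos (n + k + 1)
    rw [← add_assoc]; linarith

theorem small_left (h : IsStair δ G) (k n : ℕ) (t : ℝ) (ht : t ≤ δ (n + k)) :
    G n t ≤ (1 / 2) ^ k := by
  induction k generalizing n t with
  | zero => simpa using h.le_one n t
  | succ k ih =>
    have h1 := h.anti (n + 1) k
    have e : n + 1 + k = n + (k + 1) := by ring
    rw [e] at h1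
    have h2 := h.half n
    rw [h.left n t (by linarith), pow_succ]
    have := ih (n + 1) t (by rw [e]; exact ht)
    linarith

theorem small_right (h : IsStair δ G) (k n : ℕ) (t : ℝ) (ht : δ n - δ (n + k) ≤ t) :
    1 - G n t ≤ (1 / 2) ^ k := by
  induction k generalizing n t with
  | zero => have := h.nonneg n t; simp; linarith
  | succ k ih =>
    have h1 := h.anti (n + 1) k
    have e : n + 1 + k = n + (k + 1) := by ring
    rw [e] at h1
    have h2 := h.half n
    rw [h.right n t (by linarith), pow_succ]
    have := ih (n + 1) (t - (δ n - δ (n + 1))) (by rw [e]; linarith)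
    linarith

theorem modulus (h : IsStair δ G) (k n : ℕ) (s t : ℝ) (hst : s ≤ t) (ht : t - s ≤ δ (n + k)) :
    G n t - G n s ≤ 2 * (1 / 2) ^ k := by
  induction k generalizing n s t with
  | zero => have := h.nonneg n s; have := h.le_one n t; simp; linarith
  | succ k ih =>
    have e : n + 1 + k = n + (k + 1) := by ring
    have h2 := h.half n
    by_cases c1 : t ≤ δ n - δ (n + 1)
    · rw [h.left n t c1, h.left n s (by linarith), pow_succ]
      have := ih (n + 1) s t hst (by rw [e]; exact ht)
      linarith
    by_cases c2 : δ (n + 1) ≤ s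
    · rw [h.right n t (by linarith), h.right n s c2, pow_succ]
      have := ih (n + 1) (s - (δ n - δ (n + 1))) (t - (δ n - δ (n + 1)))
        (by linarith) (by rw [e]; linarith)
      linarith
    push Not at c1 c2
    rw [h.right n t (by linarith), h.left n s (by linarith), pow_succ]
    have a1 := h.small_left k (n + 1) (t - (δ n - δ (n + 1))) (by rw [e]; linarith)
    have a2 := h.small_right k (n + 1) s (by rw [e]; linarith)
    linarith

theorem value (h : IsStair δ G) (k n : ℕ) (s t : ℝ) (hst : s ≤ t) (ht : δ (n + k) < t - s) :
    ∃ j : ℤ, G n s ≤ j / 2 ^ k ∧ (j : ℝ) / 2 ^ k ≤ G n t := by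
  induction k generalizing n s t with
  | zero =>
    by_cases c : s ≤ 0
    · exact ⟨0, by simp [h.zero n s c], by simpa using h.nonneg n t⟩
    · exact ⟨1, by simpa using h.le_one n s, by
        rw [h.one n t (by simp at ht; linarith)]; simp⟩
  | succ k ih =>
    have e : n + 1 + k = n + (k + 1) := by ring
    have h2 := h.half n
    have p2 : (0:ℝ) < 2 ^ k := by positivity
    by_cases c1 : t ≤ δ n - δ (n + 1)
    · rw [h.left n t c1, h.left n s (by linarith)]
      obtain ⟨j, h3, h4⟩ := ih (n + 1) s t hst (by rw [e]; exact ht)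
      refine ⟨j, ?_, ?_⟩
      · rw [pow_succ, ← div_div]; linarith
      · rw [pow_succ, ← div_div]; linarith
    by_cases c2 : δ (n + 1) ≤ s
    · rw [h.right n t (by linarith), h.right n s c2]
      obtain ⟨j, h3, h4⟩ := ih (n + 1) (s - (δ n - δ (n + 1))) (t - (δ n - δ (n + 1)))
        (by linarith) (by rw [e]; linarith)
      have e3 : (((2 ^ k + j : ℤ) : ℝ)) / 2 ^ (k + 1) = (1 + j / 2 ^ k) / 2 := by
        push_cast; field_simp; ring
      exact ⟨2 ^ k + j, by rw [e3]; linarith, by rw [e3]; linarith⟩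
    push Not at c1 c2
    rw [h.right n t (by linarith), h.left n s (by linarith)]
    have e3 : (((2 ^ k : ℤ) : ℝ)) / 2 ^ (k + 1) = 1 / 2 := by
      push_cast; field_simp; ring
    refine ⟨2 ^ k, ?_, ?_⟩
    · rw [e3]; have := h.le_one (n + 1) s; linarith
    · rw [e3]; have := h.nonneg (n + 1) (t - (δ n - δ (n + 1))); linarith

theorem plateau (h : IsStair δ G) (k n : ℕ) (s t : ℝ) (hst : s < t) (ht : δ (n + k) < t - s) :
    ∃ u v c : ℝ, s ≤ u ∧ u < v ∧ v ≤ t ∧ ∀ x ∈ Ioo u v, G n x = c := by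
  induction k generalizing n s t with
  | zero =>
    by_cases c : s < 0
    · refine ⟨s, min t 0, 0, le_rfl, lt_min hst c, min_le_left _ _, fun x hx => ?_⟩
      exact h.zero n x (hx.2.le.trans (min_le_right _ _))
    · refine ⟨max s (δ n), t, 1, le_max_left _ _, max_lt hst ?_, le_rfl, fun x hx => ?_⟩
      · simp at ht; linarith
      · exact h.one n x ((le_max_right _ _).trans hx.1.le)
  | succ k ih =>
    have e : n + 1 + k = n + (k + 1) := by ring
    have h2 := h.half n
    by_cases c1 : t ≤ δ n - δ (n + 1)
    · obtain ⟨u, v, c, h3, h4, h5, h6⟩ := ih (n + 1) s t hst (by rw [e]; exact ht)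
      refine ⟨u, v, c / 2, h3, h4, h5, fun x hx => ?_⟩
      rw [h.left n x (by linarith [hx.2]), h6 x hx]
    by_cases c2 : δ (n + 1) ≤ s
    · obtain ⟨u, v, c, h3, h4, h5, h6⟩ := ih (n + 1) (s - (δ n - δ (n + 1)))
        (t - (δ n - δ (n + 1))) (by linarith) (by rw [e]; linarith)
      refine ⟨u + (δ n - δ (n + 1)), v + (δ n - δ (n + 1)), (1 + c) / 2, by linarith,
        by linarith, by linarith, fun x hx => ?_⟩
      rw [h.right n x (by linarith [hx.1]), h6]
      exact ⟨by linarith [hx.1], by linarith [hx.2]⟩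
    push Not at c1 c2
    refine ⟨δ (n + 1), δ n - δ (n + 1), 1 / 2, c2.le, by linarith, c1.le, fun x hx => ?_⟩
    rw [h.right n x hx.1.le, h.zero _ _ (by linarith [hx.2])]; norm_num

theorem delta_le (h : IsStair δ G) (n k : ℕ) : δ (n + k) ≤ δ n * (1 / 2) ^ k := by
  induction k with
  | zero => simp
  | succ k ih =>
    have := h.half (n + k)
    rw [← add_assoc, pow_succ]
    linarith

theorem exists_small (h : IsStair δ G) (n : ℕ) {ε : ℝ} (hε : 0 < ε) : ∃ k, δ (n + k) < ε := by
  obtain ⟨k, hk⟩ := exists_pow_lt_of_lt_one (div_pos hε (h.pos n)) (by norm_num : (1/2:ℝ) < 1)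
  refine ⟨k, (h.delta_le n k).trans_lt ?_⟩
  rw [lt_div_iff₀ (h.pos n)] at hk
  linarith

theorem cont (h : IsStair δ G) (n : ℕ) : Continuous (G n) := by
  rw [Metric.continuous_iff]
  intro t ε hε
  obtain ⟨k, hk⟩ := exists_pow_lt_of_lt_one (half_pos hε) (by norm_num : (1/2:ℝ) < 1)
  refine ⟨δ (n + k), h.pos _, fun s hs => ?_⟩
  rw [Real.dist_eq] at hs ⊢
  rw [abs_lt] at hs ⊢
  rcases le_total s t with c | c
  · have a1 := h.modulus k n s t c (by linarith)
    have a2 := h.mono n c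
    constructor <;> linarith
  · have a1 := h.modulus k n t s c (by linarith)
    have a2 := h.mono n c
    constructor <;> linarith

end IsStair


/-! ### Part 2: van der Corput type estimates -/

theorem norm_cexp_I_real (x : ℝ) : ‖Complex.exp (Complex.I * (x : ℂ))‖ = 1 := by
  rw [mul_comm]; exact Complex.norm_exp_ofReal_mul_I x

theorem vdc_step (φ φ' : ℝ → ℝ) (hφ : ∀ t, HasDerivAt φ (φ' t) t) (hc : Continuous φ')
    (x y wx wy ε : ℝ) (hxy : x ≤ y)
    (hε : ∀ t ∈ Icc x y, |1 - φ' t * wx| ≤ ε) :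
    ‖(∫ t in x..y, Complex.exp (Complex.I * (φ t : ℂ))) +
      Complex.I * Complex.exp (Complex.I * (φ y : ℂ)) * (wy : ℂ) -
      Complex.I * Complex.exp (Complex.I * (φ x : ℂ)) * (wx : ℂ)‖ ≤ |wy - wx| + ε * (y - x) := by
  have hφc : Continuous φ := continuous_iff_continuousAt.2 fun t => (hφ t).continuousAt
  have hI : (∫ t in x..y, Complex.exp (Complex.I * (φ t : ℂ)) * (Complex.I * (φ' t : ℂ))) =
      Complex.exp (Complex.I * (φ y : ℂ)) - Complex.exp (Complex.I * (φ x : ℂ)) := by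
    apply intervalIntegral.integral_eq_sub_of_hasDerivAt
    · intro t _
      exact ((hφ t).ofReal_comp.const_mul Complex.I).cexp
    · apply Continuous.intervalIntegrable; fun_prop
  have hd : (∫ t in x..y, Complex.exp (Complex.I * (φ t : ℂ)) * ((1 - φ' t * wx : ℝ) : ℂ)) =
      (∫ t in x..y, Complex.exp (Complex.I * (φ t : ℂ))) + Complex.I * wx *
      (∫ t in x..y, Complex.exp (Complex.I * (φ t : ℂ)) * (Complex.I * (φ' t : ℂ))) := by
    rw [← intervalIntegral.integral_const_mul, ← intervalIntegral.integral_add]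
    · congr 1; ext t; push_cast
      linear_combination (-Complex.exp (Complex.I * (φ t : ℂ)) * φ' t * wx) * Complex.I_sq
    · apply Continuous.intervalIntegrable; fun_prop
    · apply Continuous.intervalIntegrable; fun_prop
  have hb : ‖∫ t in x..y, Complex.exp (Complex.I * (φ t : ℂ)) * ((1 - φ' t * wx : ℝ) : ℂ)‖
      ≤ ε * |y - x| := by
    apply intervalIntegral.norm_integral_le_of_norm_le_const
    intro t ht
    rw [uIoc_of_le hxy] at ht
    rw [norm_mul, norm_cexp_I_real, one_mul, Complex.norm_real, Real.norm_eq_abs]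
    exact hε t ⟨ht.1.le, ht.2⟩
  rw [abs_of_nonneg (by linarith)] at hb
  have e : (∫ t in x..y, Complex.exp (Complex.I * (φ t : ℂ))) +
      Complex.I * Complex.exp (Complex.I * (φ y : ℂ)) * (wy : ℂ) -
      Complex.I * Complex.exp (Complex.I * (φ x : ℂ)) * (wx : ℂ) =
      Complex.I * Complex.exp (Complex.I * (φ y : ℂ)) * ((wy - wx : ℝ) : ℂ) +
      ∫ t in x..y, Complex.exp (Complex.I * (φ t : ℂ)) * ((1 - φ' t * wx : ℝ) : ℂ) := by
    rw [hd, hI]; push_cast; ring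
  rw [e]
  refine (norm_add_le _ _).trans (add_le_add ?_ hb)
  rw [norm_mul, norm_mul, norm_cexp_I_real, Complex.norm_I, Complex.norm_real, Real.norm_eq_abs]
  simp

theorem vdc_refined (φ φ' : ℝ → ℝ) (hφ : ∀ t, HasDerivAt φ (φ' t) t) (hc : Continuous φ')
    (a b : ℝ) (hab : a ≤ b) (hne : ∀ t ∈ Icc a b, φ' t ≠ 0)
    (hw : MonotoneOn (fun t => (φ' t)⁻¹) (Icc a b) ∨ AntitoneOn (fun t => (φ' t)⁻¹) (Icc a b)) :
    ‖(∫ t in a..b, Complex.exp (Complex.I * (φ t : ℂ))) +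
      Complex.I * Complex.exp (Complex.I * (φ b : ℂ)) * (((φ' b)⁻¹ : ℝ) : ℂ) -
      Complex.I * Complex.exp (Complex.I * (φ a : ℂ)) * (((φ' a)⁻¹ : ℝ) : ℂ)‖
      ≤ |(φ' b)⁻¹ - (φ' a)⁻¹| := by
  have hφc : Continuous φ := continuous_iff_continuousAt.2 fun t => (hφ t).continuousAt
  apply le_of_forall_pos_le_add
  intro ε0 hε0
  set ε := ε0 / (b - a + 1) with hεdef
  have hε : 0 < ε := div_pos hε0 (by linarith)
  have hwc : ContinuousOn (fun t => (φ' t)⁻¹) (Icc a b) := hc.continuousOn.inv₀ hne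
  obtain ⟨W, hW⟩ := isCompact_Icc.exists_bound_of_continuousOn hwc
  have hW0 : 0 ≤ W := (norm_nonneg _).trans (hW a ⟨le_rfl, hab⟩)
  have huc := isCompact_Icc.uniformContinuousOn_of_continuous (hc.continuousOn (s := Icc a b))
  rw [Metric.uniformContinuousOn_iff] at huc
  obtain ⟨η, hη, hu⟩ := huc (ε / (W + 1)) (by positivity)
  obtain ⟨N, hN⟩ := exists_nat_gt ((b - a) / η)
  have hN0 : (0:ℝ) < N := lt_of_le_of_lt (div_nonneg (by linarith) hη.le) hN
  set p : ℕ → ℝ := fun i => a + (b - a) * (i / N) with hp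
  have hp0 : p 0 = a := by simp [hp]
  have hpN : p N = b := by simp [hp, div_self hN0.ne']
  have hpm : Monotone p := by
    intro i j hij
    have : (i:ℝ) ≤ j := by exact_mod_cast hij
    simp only [hp]
    gcongr
  have hpmem : ∀ i ≤ N, p i ∈ Icc a b := fun i hi =>
    ⟨hp0 ▸ hpm (Nat.zero_le i), hpN ▸ hpm hi⟩
  have hpstep : ∀ i, p (i + 1) - p i = (b - a) / N := by
    intro i; simp only [hp]; push_cast; field_simp; ring
  have hstep_lt : (b - a) / N < η := by
    rw [div_lt_iff₀ hN0]; rw [div_lt_iff₀ hη] at hN; linarith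
  set E : ℕ → ℂ := fun i => (∫ t in a..p i, Complex.exp (Complex.I * (φ t : ℂ))) +
    Complex.I * Complex.exp (Complex.I * (φ (p i) : ℂ)) * (((φ' (p i))⁻¹ : ℝ) : ℂ) with hE
  have key : ∀ i ∈ Finset.range N, ‖E (i + 1) - E i‖ ≤
      |(φ' (p (i + 1)))⁻¹ - (φ' (p i))⁻¹| + ε * (p (i + 1) - p i) := by
    intro i hi
    rw [Finset.mem_range] at hi
    have hle : p i ≤ p (i + 1) := hpm (Nat.le_succ i)
    have h1 := vdc_step φ φ' hφ hc (p i) (p (i + 1)) (φ' (p i))⁻¹ (φ' (p (i + 1)))⁻¹ ε hle ?_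
    · convert h1 using 2
      simp only [hE]
      rw [← intervalIntegral.integral_add_adjacent_intervals
        (a := a) (b := p i) (c := p (i + 1))]
      · ring
      · apply Continuous.intervalIntegrable; fun_prop
      · apply Continuous.intervalIntegrable; fun_prop
    · intro t ht
      have hpi := hpmem i hi.le
      have hpi1 := hpmem (i + 1) hi
      have htm : t ∈ Icc a b := ⟨hpi.1.trans ht.1, ht.2.trans hpi1.2⟩
      have hd : dist (p i) t < η := by
        rw [Real.dist_eq, abs_sub_comm, abs_of_nonneg (by linarith [ht.1])]
        have := hpstep i
        linarith [ht.2]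
      have h2 := hu (p i) hpi t htm hd
      rw [Real.dist_eq] at h2
      have h3 : 1 - φ' t * (φ' (p i))⁻¹ = (φ' (p i) - φ' t) * (φ' (p i))⁻¹ := by
        rw [sub_mul, mul_inv_cancel₀ (hne _ hpi)]
      rw [h3, abs_mul]
      have h4 := hW (p i) hpi
      rw [Real.norm_eq_abs] at h4
      calc |φ' (p i) - φ' t| * |(φ' (p i))⁻¹| ≤ ε / (W + 1) * W := by
            apply mul_le_mul h2.le h4 (abs_nonneg _) (by positivity)
        _ ≤ ε := by
          rw [div_mul_eq_mul_div, div_le_iff₀ (by positivity)]; nlinarith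
  have hsum : ∑ i ∈ Finset.range N, |(φ' (p (i + 1)))⁻¹ - (φ' (p i))⁻¹| =
      |(φ' b)⁻¹ - (φ' a)⁻¹| := by
    rcases hw with hw | hw
    · rw [abs_of_nonneg (sub_nonneg.2 (hw ⟨le_rfl, hab⟩ ⟨hab, le_rfl⟩ hab)), ← hpN, ← hp0,
        ← Finset.sum_range_sub (fun i => (φ' (p i))⁻¹)]
      apply Finset.sum_congr rfl
      intro i hi
      rw [Finset.mem_range] at hi
      exact abs_of_nonneg (sub_nonneg.2 (hw (hpmem i hi.le) (hpmem (i+1) hi) (hpm (Nat.le_succ i))))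
    · rw [abs_of_nonpos (sub_nonpos.2 (hw ⟨le_rfl, hab⟩ ⟨hab, le_rfl⟩ hab)), ← hpN, ← hp0,
        ← Finset.sum_range_sub (fun i => (φ' (p i))⁻¹), ← Finset.sum_neg_distrib]
      apply Finset.sum_congr rfl
      intro i hi
      rw [Finset.mem_range] at hi
      exact abs_of_nonpos (sub_nonpos.2 (hw (hpmem i hi.le) (hpmem (i+1) hi) (hpm (Nat.le_succ i))))
  have h5 := (norm_sum_le (Finset.range N) (fun i => E (i + 1) - E i)).trans (Finset.sum_le_sum key)
  rw [Finset.sum_range_sub, Finset.sum_add_distrib, hsum, ← Finset.mul_sum,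
    Finset.sum_range_sub, hpN, hp0] at h5
  have h6 : E N - E 0 = (∫ t in a..b, Complex.exp (Complex.I * (φ t : ℂ))) +
      Complex.I * Complex.exp (Complex.I * (φ b : ℂ)) * (((φ' b)⁻¹ : ℝ) : ℂ) -
      Complex.I * Complex.exp (Complex.I * (φ a : ℂ)) * (((φ' a)⁻¹ : ℝ) : ℂ) := by
    simp only [hE, hpN, hp0]; simp
  rw [h6] at h5
  refine h5.trans (by gcongr; rw [hεdef, div_mul_eq_mul_div, div_le_iff₀ (by linarith)]; nlinarith)

/-- monotone or antitone -/
def MonoOrAnti (f : ℝ → ℝ) (s : Set ℝ) : Prop := MonotoneOn f s ∨ AntitoneOn f s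

theorem sign_of_ne (f : ℝ → ℝ) (hc : Continuous f) (a b : ℝ) (hne : ∀ t ∈ Icc a b, f t ≠ 0) :
    (∀ t ∈ Icc a b, 0 < f t) ∨ (∀ t ∈ Icc a b, f t < 0) := by
  by_contra hcon
  push Not at hcon
  obtain ⟨⟨s, hs, hs'⟩, t, ht, ht'⟩ := hcon
  have := isPreconnected_Icc.intermediate_value hs ht hc.continuousOn ⟨hs', ht'⟩
  obtain ⟨x, hx, hx0⟩ := this
  exact hne x hx hx0

theorem inv_monoOrAnti (f : ℝ → ℝ) (hc : Continuous f) (a b : ℝ)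
    (hne : ∀ t ∈ Icc a b, f t ≠ 0) (hm : MonoOrAnti f (Icc a b)) :
    MonoOrAnti (fun t => (f t)⁻¹) (Icc a b) := by
  rcases sign_of_ne f hc a b hne with h | h <;> rcases hm with hm | hm
  · right; intro s hs t ht hst
    exact inv_anti₀ (h s hs) (hm hs ht hst)
  · left; intro s hs t ht hst
    exact inv_anti₀ (h t ht) (hm hs ht hst)
  · right; intro s hs t ht hst
    exact (inv_le_inv_of_neg (h t ht) (h s hs)).2 (hm hs ht hst)
  · left; intro s hs t ht hst
    exact (inv_le_inv_of_neg (h s hs) (h t ht)).2 (hm hs ht hst)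

theorem vdc_bound (φ φ' : ℝ → ℝ) (hφ : ∀ t, HasDerivAt φ (φ' t) t) (hc : Continuous φ')
    (a b ρ : ℝ) (hab : a ≤ b) (hρ : 0 < ρ) (hm : MonoOrAnti φ' (Icc a b))
    (hne : ∀ t ∈ Icc a b, ρ ≤ |φ' t|) :
    ‖∫ t in a..b, Complex.exp (Complex.I * (φ t : ℂ))‖ ≤ 4 / ρ := by
  have hne' : ∀ t ∈ Icc a b, φ' t ≠ 0 := fun t ht h => by
    have := hne t ht; rw [h, abs_zero] at this; linarith
  have h := vdc_refined φ φ' hφ hc a b hab hne' (inv_monoOrAnti φ' hc a b hne' hm)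
  have hinv : ∀ t ∈ Icc a b, |(φ' t)⁻¹| ≤ 1 / ρ := fun t ht => by
    rw [abs_inv, one_div]; exact inv_anti₀ hρ (hne t ht)
  have ha := hinv a ⟨le_rfl, hab⟩
  have hb := hinv b ⟨hab, le_rfl⟩
  have h2 : |(φ' b)⁻¹ - (φ' a)⁻¹| ≤ 2 / ρ := (abs_sub _ _).trans (by
    have : 2 / ρ = 1 / ρ + 1 / ρ := by ring
    linarith)
  set X := ∫ t in a..b, Complex.exp (Complex.I * (φ t : ℂ))
  set Y := Complex.I * Complex.exp (Complex.I * (φ b : ℂ)) * (((φ' b)⁻¹ : ℝ) : ℂ) with hY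
  set Z := Complex.I * Complex.exp (Complex.I * (φ a : ℂ)) * (((φ' a)⁻¹ : ℝ) : ℂ) with hZ
  have nY : ‖Y‖ ≤ 1 / ρ := by
    rw [hY, norm_mul, norm_mul, norm_cexp_I_real, Complex.norm_I, Complex.norm_real]; simpa using hb
  have nZ : ‖Z‖ ≤ 1 / ρ := by
    rw [hZ, norm_mul, norm_mul, norm_cexp_I_real, Complex.norm_I, Complex.norm_real]; simpa using ha
  have : X = (X + Y - Z) - Y + Z := by ring
  rw [this]
  have e4 : 4 / ρ = 2 / ρ + 1 / ρ + 1 / ρ := by ring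
  rw [e4]
  exact (norm_add_le _ _).trans (add_le_add ((norm_sub_le _ _).trans
    (add_le_add (h.trans h2) nY)) nZ)

theorem norm_int_le_len (φ : ℝ → ℝ) (a b : ℝ) (hab : a ≤ b) :
    ‖∫ t in a..b, Complex.exp (Complex.I * (φ t : ℂ))‖ ≤ b - a := by
  have := intervalIntegral.norm_integral_le_of_norm_le_const (a := a) (b := b) (C := 1)
    (f := fun t => Complex.exp (Complex.I * (φ t : ℂ))) (fun t _ => by rw [norm_cexp_I_real])
  rwa [one_mul, abs_of_nonneg (by linarith)] at this

theorem vdc_mixed (φ φ' : ℝ → ℝ) (hφ : ∀ t, HasDerivAt φ (φ' t) t) (hc : Continuous φ')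
    (a b ρ y : ℝ) (hab : a ≤ b) (hρ : 0 < ρ) (hm : MonoOrAnti φ' (Icc a b)) (hy0 : 0 ≤ y)
    (hy : ∀ s ∈ Icc a b, ∀ t ∈ Icc a b, s ≤ t → |φ' s| ≤ ρ → |φ' t| ≤ ρ → t - s ≤ y) :
    ‖∫ t in a..b, Complex.exp (Complex.I * (φ t : ℂ))‖ ≤ y + 8 / ρ := by
  have hφc : Continuous φ := continuous_iff_continuousAt.2 fun t => (hφ t).continuousAt
  have h8 : 8 / ρ = 4 / ρ + 4 / ρ := by ring
  have h4 : 0 < 4 / ρ := by positivity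
  set E := Icc a b ∩ {t | |φ' t| ≤ ρ} with hE
  have hEc : IsCompact E := isCompact_Icc.inter_right (isClosed_le hc.abs continuous_const)
  rcases E.eq_empty_or_nonempty with hemp | hnon
  · have := vdc_bound φ φ' hφ hc a b ρ hab hρ hm (fun t ht => by
      by_contra hcon
      have : t ∈ E := ⟨ht, (not_le.1 hcon).le⟩
      rw [hemp] at this; exact this)
    linarith
  · obtain ⟨s, hs, hsl⟩ := hEc.exists_isLeast hnon
    obtain ⟨t, ht, htl⟩ := hEc.exists_isGreatest hnon
    have hst : s ≤ t := hsl ht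
    have hlen := hy s hs.1 t ht.1 hst hs.2 ht.2
    -- left part
    have hsub1 : Icc a s ⊆ Icc a b := Icc_subset_Icc le_rfl hs.1.2
    have hsub2 : Icc t b ⊆ Icc a b := Icc_subset_Icc ht.1.1 le_rfl
    have hge1 : ‖∫ t in a..s, Complex.exp (Complex.I * (φ t : ℂ))‖ ≤ 4 / ρ := by
      rcases hs.1.1.eq_or_lt with h | h
      · rw [← h]; simp; positivity
      apply vdc_bound φ φ' hφ hc a s ρ hs.1.1 hρ
      · exact hm.imp (fun h => h.mono hsub1) (fun h => h.mono hsub1)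
      · have hcl : IsClosed {x | ρ ≤ |φ' x|} := isClosed_le continuous_const hc.abs
        have : Icc a s ⊆ {x | ρ ≤ |φ' x|} := by
          rw [← closure_Ico h.ne]
          apply closure_minimal _ hcl
          intro x hx
          by_contra hcon
          rw [mem_ofPred_eq, not_le] at hcon
          have hx' : x ∈ E := ⟨hsub1 ⟨hx.1, hx.2.le⟩, hcon.le⟩
          exact absurd (hsl hx') (not_le.2 hx.2)
        exact this
    have hge2 : ‖∫ t in t..b, Complex.exp (Complex.I * (φ t : ℂ))‖ ≤ 4 / ρ := by
      rcases ht.1.2.eq_or_lt with h | h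
      · rw [← h]; simp; positivity
      apply vdc_bound φ φ' hφ hc t b ρ ht.1.2 hρ
      · exact hm.imp (fun h => h.mono hsub2) (fun h => h.mono hsub2)
      · have hcl : IsClosed {x | ρ ≤ |φ' x|} := isClosed_le continuous_const hc.abs
        have : Icc t b ⊆ {x | ρ ≤ |φ' x|} := by
          rw [← closure_Ioc h.ne]
          apply closure_minimal _ hcl
          intro x hx
          by_contra hcon
          rw [mem_ofPred_eq, not_le] at hcon
          have hx' : x ∈ E := ⟨hsub2 ⟨hx.1.le, hx.2⟩, hcon.le⟩
          exact absurd (htl hx') (not_le.2 hx.1)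
        exact this
    have hmid := norm_int_le_len φ s t hst
    have hIntg : ∀ x y : ℝ, IntervalIntegrable (fun t => Complex.exp (Complex.I * (φ t : ℂ)))
        volume x y := fun x y => by apply Continuous.intervalIntegrable; fun_prop
    rw [← intervalIntegral.integral_add_adjacent_intervals (hIntg a s) (hIntg s b),
      ← intervalIntegral.integral_add_adjacent_intervals (hIntg s t) (hIntg t b)]
    have n1 := norm_add_le (∫ t in a..s, Complex.exp (Complex.I * (φ t : ℂ)))
      ((∫ t in s..t, Complex.exp (Complex.I * (φ t : ℂ))) +
        ∫ t in t..b, Complex.exp (Complex.I * (φ t : ℂ)))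
    have n2 := norm_add_le (∫ t in s..t, Complex.exp (Complex.I * (φ t : ℂ)))
        (∫ t in t..b, Complex.exp (Complex.I * (φ t : ℂ)))
    linarith


/-! ### Part 3: the bump -/

/-- A continuous ramp from 0 to 1 on the interval from 0 to ℓ. -/
structure IsRamp (G : ℝ → ℝ) (ℓ : ℝ) : Prop where
  pos : 0 < ℓ
  mono : Monotone G
  zero : ∀ t, t ≤ 0 → G t = 0
  one : ∀ t, ℓ ≤ t → G t = 1
  cont : Continuous G

/-- Derivative profile of the bump. -/
def psi (G : ℝ → ℝ) (ℓ t : ℝ) : ℝ := G t - G (t - ℓ) - G (t - 2 * ℓ) + G (t - 3 * ℓ)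

/-- The bump. -/
noncomputable def bumpInt (G : ℝ → ℝ) (ℓ t : ℝ) : ℝ := ∫ x in (0:ℝ)..t, psi G ℓ x

/-- The local Fourier integral of the bump. -/
noncomputable def bumpV (G : ℝ → ℝ) (ℓ κ μ : ℝ) : ℂ :=
  ∫ t in (0:ℝ)..(4 * ℓ),
    (Complex.exp (Complex.I * ((κ * bumpInt G ℓ t : ℝ) : ℂ)) - 1) *
      Complex.exp (Complex.I * ((μ * t : ℝ) : ℂ))

namespace IsRamp

variable {G : ℝ → ℝ} {ℓ : ℝ}

theorem nonneg (h : IsRamp G ℓ) (t : ℝ) : 0 ≤ G t := by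
  rw [← h.zero (min t 0) (min_le_right _ _)]
  exact h.mono (min_le_left _ _)

theorem le_one (h : IsRamp G ℓ) (t : ℝ) : G t ≤ 1 := by
  rw [← h.one (max t ℓ) (le_max_right _ _)]
  exact h.mono (le_max_left _ _)

theorem psi_cont (h : IsRamp G ℓ) : Continuous (psi G ℓ) := by
  have := h.cont
  unfold psi
  fun_prop

theorem psi_abs_le (h : IsRamp G ℓ) (t : ℝ) : |psi G ℓ t| ≤ 1 := by
  unfold psi
  have hℓ := h.pos
  have h0 := h.nonneg t
  have h1 := h.le_one t
  have a1 := h.mono (show t - ℓ ≤ t by linarith)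
  have a2 := h.mono (show t - 2 * ℓ ≤ t - ℓ by linarith)
  have a3 := h.mono (show t - 3 * ℓ ≤ t - 2 * ℓ by linarith)
  have b2 := h.nonneg (t - 3 * ℓ)
  have b3 := h.le_one (t - 2 * ℓ)
  have b4 := h.le_one (t - ℓ)
  have b5 := h.nonneg (t - 2 * ℓ)
  rcases le_total t (2 * ℓ) with c | c
  · have e1 := h.zero (t - 2 * ℓ) (by linarith)
    rw [abs_le]; constructor <;> linarith
  · have e1 := h.one (t - ℓ) (by linarith)
    have e2 := h.one t (by linarith)
    rw [abs_le]; constructor <;> linarith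

theorem psi_left (h : IsRamp G ℓ) (t : ℝ) (ht : t ≤ 0) : psi G ℓ t = 0 := by
  have hℓ := h.pos
  unfold psi
  rw [h.zero t ht, h.zero _ (by linarith), h.zero _ (by linarith), h.zero _ (by linarith)]; simp

theorem psi_right (h : IsRamp G ℓ) (t : ℝ) (ht : 4 * ℓ ≤ t) : psi G ℓ t = 0 := by
  have hℓ := h.pos
  unfold psi
  rw [h.one t (by linarith), h.one _ (by linarith), h.one _ (by linarith),
    h.one _ (by linarith)]; simp

theorem psi_at (h : IsRamp G ℓ) : psi G ℓ ℓ = 1 := by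
  have hℓ := h.pos
  unfold psi
  rw [h.one ℓ le_rfl, h.zero _ (by linarith), h.zero _ (by linarith), h.zero _ (by linarith)]; simp

theorem pieces (h : IsRamp G ℓ) (i : ℕ) (hi : i < 4) : ∃ c ε : ℤ, (ε = 1 ∨ ε = -1) ∧
    ∀ t ∈ Icc (i * ℓ) ((i + 1 : ℕ) * ℓ), psi G ℓ t = c + ε * G (t - i * ℓ) := by
  have hℓ := h.pos
  interval_cases i
  · refine ⟨0, 1, Or.inl rfl, fun t ht => ?_⟩
    norm_num at ht
    unfold psi
    rw [h.zero (t - ℓ) (by linarith), h.zero (t - 2 * ℓ) (by linarith),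
      h.zero (t - 3 * ℓ) (by linarith)]; simp
  · refine ⟨1, -1, Or.inr rfl, fun t ht => ?_⟩
    norm_num at ht
    unfold psi
    rw [h.one t (by linarith), h.zero (t - 2 * ℓ) (by linarith),
      h.zero (t - 3 * ℓ) (by linarith)]; simp; ring
  · refine ⟨0, -1, Or.inr rfl, fun t ht => ?_⟩
    norm_num at ht
    unfold psi
    rw [h.one t (by linarith), h.one (t - ℓ) (by linarith),
      h.zero (t - 3 * ℓ) (by linarith)]; simp
  · refine ⟨-1, 1, Or.inl rfl, fun t ht => ?_⟩
    norm_num at ht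
    unfold psi
    rw [h.one t (by linarith), h.one (t - ℓ) (by linarith),
      h.one (t - 2 * ℓ) (by linarith)]; simp

theorem bumpInt_deriv (h : IsRamp G ℓ) (t : ℝ) : HasDerivAt (bumpInt G ℓ) (psi G ℓ t) t :=
  intervalIntegral.integral_hasDerivAt_right (h.psi_cont.intervalIntegrable _ _)
    (h.psi_cont.stronglyMeasurableAtFilter _ _) h.psi_cont.continuousAt

theorem bumpInt_cont (h : IsRamp G ℓ) : Continuous (bumpInt G ℓ) :=
  continuous_iff_continuousAt.2 fun t => (h.bumpInt_deriv t).continuousAt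

theorem bumpInt_left (h : IsRamp G ℓ) (t : ℝ) (ht : t ≤ 0) : bumpInt G ℓ t = 0 := by
  unfold bumpInt
  rw [intervalIntegral.integral_zero_ae]
  refine Filter.Eventually.of_forall fun x hx => ?_
  rw [uIoc_of_ge ht] at hx
  exact h.psi_left x hx.2

theorem bumpInt_end (h : IsRamp G ℓ) : bumpInt G ℓ (4 * ℓ) = 0 := by
  have hℓ := h.pos
  have hi : ∀ a b : ℝ, IntervalIntegrable (psi G ℓ) volume a b :=
    fun a b => h.psi_cont.intervalIntegrable _ _
  unfold bumpInt
  rw [← intervalIntegral.integral_add_adjacent_intervals (hi 0 (2 * ℓ)) (hi (2 * ℓ) (4 * ℓ))]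
  have e : (∫ x in (2 * ℓ)..(4 * ℓ), psi G ℓ x) = ∫ x in (0:ℝ)..(2 * ℓ), psi G ℓ (x + 2 * ℓ) := by
    rw [intervalIntegral.integral_comp_add_right (fun x => psi G ℓ x)]
    congr 1 <;> ring
  rw [e]
  have e2 : (∫ x in (0:ℝ)..(2 * ℓ), psi G ℓ (x + 2 * ℓ)) = ∫ x in (0:ℝ)..(2 * ℓ), - psi G ℓ x := by
    apply intervalIntegral.integral_congr
    intro t ht
    rw [uIcc_of_le (by linarith)] at ht
    have e3 : t + 2 * ℓ - 2 * ℓ = t := by ring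
    have e4 : t + 2 * ℓ - 3 * ℓ = t - ℓ := by ring
    simp only [psi]
    rw [h.one (t + 2 * ℓ) (by linarith [ht.1]), h.one (t + 2 * ℓ - ℓ) (by linarith [ht.1]), e3, e4,
      h.zero (t - 2 * ℓ) (by linarith [ht.2]), h.zero (t - 3 * ℓ) (by linarith [ht.2])]
    ring
  rw [e2, intervalIntegral.integral_neg]; ring

theorem bumpInt_right (h : IsRamp G ℓ) (t : ℝ) (ht : 4 * ℓ ≤ t) : bumpInt G ℓ t = 0 := by
  have hi : ∀ a b : ℝ, IntervalIntegrable (psi G ℓ) volume a b :=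
    fun a b => h.psi_cont.intervalIntegrable _ _
  have h0 := h.bumpInt_end
  unfold bumpInt at h0 ⊢
  rw [← intervalIntegral.integral_add_adjacent_intervals (hi 0 (4 * ℓ)) (hi (4 * ℓ) t), h0, zero_add,
    intervalIntegral.integral_zero_ae]
  refine Filter.Eventually.of_forall fun x hx => ?_
  rw [uIoc_of_le ht] at hx
  exact h.psi_right x hx.1.le

theorem phase_deriv (h : IsRamp G ℓ) (κ μ t : ℝ) :
    HasDerivAt (fun t => κ * bumpInt G ℓ t + μ * t) (κ * psi G ℓ t + μ) t := by
  have := ((h.bumpInt_deriv t).const_mul κ).fun_add ((hasDerivAt_id t).const_mul μ)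
  simpa using this

theorem phase_cont (h : IsRamp G ℓ) (κ μ : ℝ) : Continuous (fun t => κ * psi G ℓ t + μ) := by
  have := h.psi_cont
  fun_prop

theorem bumpV_eq (h : IsRamp G ℓ) (κ μ : ℝ) : bumpV G ℓ κ μ =
    (∑ i ∈ Finset.range 4, ∫ t in ((i : ℕ) * ℓ)..((i + 1 : ℕ) * ℓ),
      Complex.exp (Complex.I * ((κ * bumpInt G ℓ t + μ * t : ℝ) : ℂ))) -
    ∫ t in (0:ℝ)..(4 * ℓ), Complex.exp (Complex.I * ((μ * t : ℝ) : ℂ)) := by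
  have hc := h.bumpInt_cont
  have hs := intervalIntegral.sum_integral_adjacent_intervals (n := 4) (a := fun i : ℕ => (i:ℝ) * ℓ)
    (μ := volume) (f := fun t => Complex.exp (Complex.I * ((κ * bumpInt G ℓ t + μ * t : ℝ) : ℂ)))
    (fun k _ => by apply Continuous.intervalIntegrable; fun_prop)
  rw [hs]
  norm_num only [Nat.cast_zero, zero_mul, Nat.cast_ofNat]
  rw [← intervalIntegral.integral_sub]
  · unfold bumpV
    congr 1; ext t
    rw [sub_mul, one_mul, ← Complex.exp_add]
    congr 2
    push_cast; ring
  · apply Continuous.intervalIntegrable; fun_prop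
  · apply Continuous.intervalIntegrable; fun_prop

theorem phase_mono (h : IsRamp G ℓ) (κ μ : ℝ) (i : ℕ) (hi : i < 4) :
    MonoOrAnti (fun t => κ * psi G ℓ t + μ) (Icc (i * ℓ) ((i + 1 : ℕ) * ℓ)) := by
  obtain ⟨c, ε, hε, hp⟩ := h.pieces i hi
  have key : MonoOrAnti (fun t => κ * (c + ε * G (t - i * ℓ)) + μ)
      (Icc (i * ℓ) ((i + 1 : ℕ) * ℓ)) := by
    rcases le_total 0 (κ * ε) with hk | hk
    · left; intro s _ t _ hst
      have := h.mono (sub_le_sub_right hst (i * ℓ))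
      have := mul_le_mul_of_nonneg_left this hk
      simp only; linarith
    · right; intro s _ t _ hst
      have := h.mono (sub_le_sub_right hst (i * ℓ))
      have := mul_le_mul_of_nonpos_left this hk
      simp only; linarith
  refine key.imp (fun k => k.congr ?_) (fun k => k.congr ?_) <;>
  · intro t ht
    simp only [hp t ht]

theorem piece_le (h : IsRamp G ℓ) (i : ℕ) : (i:ℝ) * ℓ ≤ (i + 1 : ℕ) * ℓ := by
  have := h.pos
  push_cast; nlinarith

theorem E1 (h : IsRamp G ℓ) (κ μ : ℝ) : ‖bumpV G ℓ κ μ‖ ≤ 8 * ℓ := by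
  have := intervalIntegral.norm_integral_le_of_norm_le_const (a := 0) (b := 4 * ℓ) (C := 2)
    (f := fun t => (Complex.exp (Complex.I * ((κ * bumpInt G ℓ t : ℝ) : ℂ)) - 1) *
      Complex.exp (Complex.I * ((μ * t : ℝ) : ℂ))) (fun t _ => by
        rw [norm_mul, norm_cexp_I_real, mul_one]
        refine (norm_sub_le _ _).trans ?_
        rw [norm_cexp_I_real]; norm_num)
  have hℓ := h.pos
  rw [sub_zero, abs_of_pos (by linarith)] at this
  unfold bumpV
  linarith

theorem E2 (h : IsRamp G ℓ) (κ μ : ℝ) (hμ : 2 * |κ| < |μ|) :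
    ‖bumpV G ℓ κ μ‖ ≤ 32 * |κ| / μ ^ 2 := by
  have hμ0 : 0 < |μ| := lt_of_le_of_lt (by positivity) hμ
  have hge : ∀ t, |μ| / 2 ≤ |κ * psi G ℓ t + μ| := by
    intro t
    have h1 : |κ * psi G ℓ t| ≤ |κ| := by
      rw [abs_mul]; exact mul_le_of_le_one_right (abs_nonneg _) (h.psi_abs_le t)
    have h2 := abs_sub_abs_le_abs_sub μ (-(κ * psi G ℓ t))
    rw [abs_neg, sub_neg_eq_add, add_comm μ] at h2
    linarith
  have hne : ∀ t, κ * psi G ℓ t + μ ≠ 0 := fun t h0 => by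
    have := hge t; rw [h0, abs_zero] at this; linarith
  set P : ℝ → ℂ := fun t => Complex.I *
    Complex.exp (Complex.I * ((κ * bumpInt G ℓ t + μ * t : ℝ) : ℂ)) *
    (((κ * psi G ℓ t + μ)⁻¹ : ℝ) : ℂ) with hP
  have hpiece : ∀ i ∈ Finset.range 4, ‖(∫ t in ((i : ℕ) * ℓ)..((i + 1 : ℕ) * ℓ),
      Complex.exp (Complex.I * ((κ * bumpInt G ℓ t + μ * t : ℝ) : ℂ))) +
      (P ((i + 1 : ℕ) * ℓ) - P (i * ℓ))‖ ≤ 8 * |κ| / μ ^ 2 := by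
    intro i hi
    rw [Finset.mem_range] at hi
    have := vdc_refined _ _ (h.phase_deriv κ μ) (h.phase_cont κ μ) _ _ (h.piece_le i)
      (fun t _ => hne t) (inv_monoOrAnti _ (h.phase_cont κ μ) _ _ (fun t _ => hne t)
        (h.phase_mono κ μ i hi))
    rw [← add_sub_assoc]
    refine this.trans ?_
    rw [inv_sub_inv (hne _) (hne _), abs_div, abs_mul]
    have n1 : |κ * psi G ℓ (i * ℓ) + μ - (κ * psi G ℓ ((i + 1 : ℕ) * ℓ) + μ)| ≤ 2 * |κ| := by
      have e : κ * psi G ℓ (i * ℓ) + μ - (κ * psi G ℓ ((i + 1 : ℕ) * ℓ) + μ) =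
        κ * (psi G ℓ (i * ℓ) - psi G ℓ ((i + 1 : ℕ) * ℓ)) := by ring
      rw [e, abs_mul, mul_comm]
      refine mul_le_mul_of_nonneg_right ((abs_sub _ _).trans ?_) (abs_nonneg _)
      have := h.psi_abs_le (i * ℓ)
      have := h.psi_abs_le ((i + 1 : ℕ) * ℓ)
      linarith
    have n2 : μ ^ 2 / 4 ≤ |κ * psi G ℓ ((i + 1 : ℕ) * ℓ) + μ| * |κ * psi G ℓ (i * ℓ) + μ| := by
      have := mul_le_mul (hge ((i + 1 : ℕ) * ℓ)) (hge (i * ℓ)) (by positivity) (abs_nonneg _)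
      rw [← sq_abs μ]; linarith
    have hμ2 : 0 < μ ^ 2 := by rw [← sq_abs]; positivity
    calc _ ≤ 2 * |κ| / (μ ^ 2 / 4) := div_le_div₀ (by positivity) n1 (by positivity) n2
      _ = _ := by field_simp; ring
  have hlin := vdc_refined (fun t => μ * t) (fun _ => μ)
    (fun t => by simpa using (hasDerivAt_id t).const_mul μ) continuous_const 0 (4 * ℓ)
    (by have := h.pos; linarith) (fun t _ => abs_pos.1 hμ0) (Or.inl fun _ _ _ _ _ => le_rfl)
  rw [sub_self, abs_zero, norm_le_zero_iff] at hlin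
  have hsum := (norm_sum_le (Finset.range 4) (fun i => (∫ t in ((i : ℕ) * ℓ)..((i + 1 : ℕ) * ℓ),
      Complex.exp (Complex.I * ((κ * bumpInt G ℓ t + μ * t : ℝ) : ℂ))) +
      (P ((i + 1 : ℕ) * ℓ) - P (i * ℓ)))).trans (Finset.sum_le_sum hpiece)
  rw [Finset.sum_add_distrib, Finset.sum_range_sub (fun i : ℕ => P (i * ℓ))] at hsum
  rw [h.bumpV_eq]
  have e0 : P ((0 : ℕ) * ℓ) = Complex.I * Complex.exp (Complex.I * ((μ * 0 : ℝ) : ℂ)) *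
      ((μ⁻¹ : ℝ) : ℂ) := by
    simp only [hP]; norm_num [h.bumpInt_left 0 le_rfl, h.psi_left 0 le_rfl]
  have e4 : P ((4 : ℕ) * ℓ) = Complex.I * Complex.exp (Complex.I * ((μ * (4 * ℓ) : ℝ) : ℂ)) *
      ((μ⁻¹ : ℝ) : ℂ) := by
    simp only [hP]
    have : ((4 : ℕ) : ℝ) = 4 := by norm_num
    rw [this, h.bumpInt_end, h.psi_right _ le_rfl]; simp
  rw [e0, e4] at hsum
  calc _ = _ := ?_
    _ ≤ _ := hsum
    _ = _ := by rw [Finset.sum_const, Finset.card_range, nsmul_eq_mul]; push_cast; ring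
  congr 1
  linear_combination -hlin

theorem E3 (h : IsRamp G ℓ) (κ μ y : ℝ) (N : ℕ) (hN : 0 < N) (hy : 0 < y)
    (hG : ∀ s t, s ≤ t → y < t - s → ∃ j : ℤ, G s ≤ j / N ∧ (j : ℝ) / N ≤ G t)
    (hgood : ∀ j : ℤ, |j| ≤ (N : ℤ) → 1 / y < |κ * (j / N) + μ|) :
    ‖bumpV G ℓ κ μ‖ ≤ 40 * y := by
  have hN' : (0:ℝ) < N := by exact_mod_cast hN
  have h1y : 0 < 1 / y := by positivity
  rw [h.bumpV_eq]
  have hpiece : ∀ i ∈ Finset.range 4, ‖∫ t in ((i : ℕ) * ℓ)..((i + 1 : ℕ) * ℓ),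
      Complex.exp (Complex.I * ((κ * bumpInt G ℓ t + μ * t : ℝ) : ℂ))‖ ≤ 9 * y := by
    intro i hi
    rw [Finset.mem_range] at hi
    have e9 : 9 * y = y + 8 / (1 / y) := by field_simp; norm_num
    rw [e9]
    apply vdc_mixed _ _ (h.phase_deriv κ μ) (h.phase_cont κ μ) _ _ _ _ (h.piece_le i) h1y
      (h.phase_mono κ μ i hi) hy.le
    intro s hs t ht hst hs' ht'
    by_contra hcon
    push Not at hcon
    obtain ⟨c, ε, hε, hp⟩ := h.pieces i hi
    obtain ⟨j, hj1, hj2⟩ := hG (s - i * ℓ) (t - i * ℓ) (by linarith) (by linarith)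
    have hps := hp s hs
    have hpt := hp t ht
    have bs := abs_le.1 (h.psi_abs_le s)
    have bt := abs_le.1 (h.psi_abs_le t)
    have e : (((c * N + ε * j : ℤ) : ℝ)) / N = c + ε * (j / N) := by
      push_cast; field_simp
    have hbetween : (psi G ℓ s ≤ (((c * N + ε * j : ℤ) : ℝ)) / N ∧
        (((c * N + ε * j : ℤ) : ℝ)) / N ≤ psi G ℓ t) ∨ (psi G ℓ t ≤ (((c * N + ε * j : ℤ) : ℝ)) / N ∧
        (((c * N + ε * j : ℤ) : ℝ)) / N ≤ psi G ℓ s) := by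
      rw [e, hps, hpt]
      rcases hε with rfl | rfl
      · left; push_cast; constructor <;> linarith
      · right; push_cast; constructor <;> linarith
    have habs : |(((c * N + ε * j : ℤ) : ℝ)) / N| ≤ 1 := by
      rw [abs_le]
      rcases hbetween with hb | hb <;> constructor <;> linarith [hb.1, hb.2]
    have hIntg : |c * N + ε * j| ≤ (N : ℤ) := by
      rw [abs_div, abs_of_pos hN', div_le_one hN'] at habs
      exact_mod_cast habs
    have hg := hgood _ hIntg
    have hle : |κ * ((((c * N + ε * j : ℤ) : ℝ)) / N) + μ| ≤ 1 / y := by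
      generalize (((c * N + ε * j : ℤ) : ℝ)) / N = σ at *
      rw [abs_le] at hs' ht' ⊢
      rcases le_total 0 κ with hk | hk
      · rcases hbetween with hb | hb <;>
        · have b1 := mul_le_mul_of_nonneg_left hb.1 hk
          have b2 := mul_le_mul_of_nonneg_left hb.2 hk
          constructor <;> linarith
      · rcases hbetween with hb | hb <;>
        · have b1 := mul_le_mul_of_nonpos_left hb.1 hk
          have b2 := mul_le_mul_of_nonpos_left hb.2 hk
          constructor <;> linarith
    linarith
  have h0 := hgood 0 (by simp)
  simp only [Int.cast_zero, zero_div, mul_zero, zero_add] at h0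
  have hlin := vdc_bound (fun t => μ * t) (fun _ => μ)
    (fun t => by simpa using (hasDerivAt_id t).const_mul μ) continuous_const 0 (4 * ℓ) (1 / y)
    (by have := h.pos; linarith) h1y (Or.inl fun _ _ _ _ _ => le_rfl) (fun _ _ => h0.le)
  have e4 : 4 / (1 / y) = 4 * y := by field_simp
  rw [e4] at hlin
  refine (norm_sub_le _ _).trans ?_
  have := (norm_sum_le _ _).trans (Finset.sum_le_sum hpiece)
  rw [Finset.sum_const, Finset.card_range, nsmul_eq_mul] at this
  push_cast at this
  push_cast at hlin
  push_cast
  linarith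

end IsRamp


/-! ### Part 4: counting lemmas -/

theorem card_near (F : Finset ℤ) (η r : ℝ) (hr : 0 ≤ r) :
    ((F.filter (fun k : ℤ => |(k : ℝ) - η| ≤ r)).card : ℝ) ≤ 2 * r + 1 := by
  have hsub : F.filter (fun k : ℤ => |(k : ℝ) - η| ≤ r) ⊆ Finset.Icc ⌈η - r⌉ ⌊η + r⌋ := by
    intro k hk
    rw [Finset.mem_filter, abs_le] at hk
    rw [Finset.mem_Icc, Int.ceil_le, Int.le_floor]
    constructor <;> linarith [hk.2.1, hk.2.2]
  have h1 := Finset.card_le_card hsub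
  rw [Int.card_Icc] at h1
  have h2 : ((F.filter (fun k : ℤ => |(k : ℝ) - η| ≤ r)).card : ℝ) ≤
      (((⌊η + r⌋ + 1 - ⌈η - r⌉).toNat : ℕ) : ℝ) := by exact_mod_cast h1
  refine h2.trans ?_
  have h3 : (((⌊η + r⌋ + 1 - ⌈η - r⌉).toNat : ℕ) : ℝ) =
      ((max (⌊η + r⌋ + 1 - ⌈η - r⌉) 0 : ℤ) : ℝ) := by
    rw [← Int.toNat_eq_max]; rfl
  rw [h3]
  push_cast
  apply max_le
  · have := Int.floor_le (η + r)
    have := Int.le_ceil (η - r)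
    linarith
  · linarith

theorem sum_inv_sq_aux (x : ℝ) (hx : 1 ≤ x) (M : ℕ) :
    ∑ m ∈ Finset.range M, 1 / (x + m) ^ 2 ≤ 2 / x - 2 / (x + M) := by
  induction M with
  | zero => simp
  | succ M ih =>
    rw [Finset.sum_range_succ]
    have hp : 0 < x + M := by positivity
    have h1 : 1 / (x + M) ^ 2 ≤ 2 / (x + M) - 2 / (x + (M + 1 : ℕ)) := by
      push_cast
      have hp2 : 0 < x + (M + 1) := by positivity
      rw [div_sub_div _ _ hp.ne' hp2.ne', div_le_div_iff₀ (by positivity) (by positivity)]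
      have : (1:ℝ) ≤ x + M := by have : (0:ℝ) ≤ M := by positivity
                                 linarith
      nlinarith
    linarith

theorem tail_right (F : Finset ℤ) (η R : ℝ) (hR : 1 ≤ R) (hF : ∀ k ∈ F, R < (k : ℝ) - η) :
    ∑ k ∈ F, 1 / ((k : ℝ) - η) ^ 2 ≤ 2 / R := by
  set K := ⌊η + R⌋ + 1 with hK
  have hK1 : R < (K : ℝ) - η := by
    have := Int.lt_floor_add_one (η + R)
    rw [hK]; push_cast; linarith
  have hKF : ∀ k ∈ F, K ≤ k := by
    intro k hk
    have := hF k hk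
    rw [hK, Int.add_one_le_iff, Int.floor_lt]; linarith
  set f : ℤ → ℕ := fun k => (k - K).toNat with hf
  have hfk : ∀ k ∈ F, ((f k : ℕ) : ℤ) = k - K := fun k hk => by
    have := hKF k hk
    simp only [hf]; omega
  have hinj : Set.InjOn f F := by
    intro a ha b hb hab
    have h1 := hfk a ha
    have h2 := hfk b hb
    rw [hab] at h1; omega
  obtain ⟨M, hM⟩ := (F.image f).exists_nat_subset_range
  have e : ∑ k ∈ F, 1 / ((k : ℝ) - η) ^ 2 =
      ∑ m ∈ F.image f, 1 / (((K : ℝ) - η) + m) ^ 2 := by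
    rw [Finset.sum_image hinj]
    refine Finset.sum_congr rfl fun k hk => ?_
    have h1 : ((f k : ℕ) : ℝ) = (k : ℝ) - K := by exact_mod_cast hfk k hk
    rw [h1]; congr 2; ring
  rw [e]
  calc _ ≤ ∑ m ∈ Finset.range M, 1 / (((K : ℝ) - η) + m) ^ 2 :=
        Finset.sum_le_sum_of_subset_of_nonneg hM fun _ _ _ => by positivity
    _ ≤ _ := sum_inv_sq_aux _ (by linarith) M
    _ ≤ 2 / ((K : ℝ) - η) := by
        have : 0 ≤ 2 / (((K : ℝ) - η) + M) := by
          apply div_nonneg (by norm_num)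
          have : (0:ℝ) ≤ M := by positivity
          linarith
        linarith
    _ ≤ _ := div_le_div_of_nonneg_left (by norm_num) (by linarith) hK1.le

theorem tail_sum (F : Finset ℤ) (η R : ℝ) (hR : 1 ≤ R) (hF : ∀ k ∈ F, R < |(k : ℝ) - η|) :
    ∑ k ∈ F, 1 / ((k : ℝ) - η) ^ 2 ≤ 4 / R := by
  rw [← Finset.sum_filter_add_sum_filter_not F (fun k : ℤ => η < (k : ℝ))]
  have h1 := tail_right (F.filter (fun k : ℤ => η < (k : ℝ))) η R hR (by
    intro k hk
    rw [Finset.mem_filter] at hk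
    have := hF k hk.1
    rwa [abs_of_pos (by linarith [hk.2])] at this)
  set F2 := F.filter (fun k : ℤ => ¬ η < (k : ℝ)) with hF2
  have h2 := tail_right (F2.image Neg.neg) (-η) R hR (by
    intro k hk
    rw [Finset.mem_image] at hk
    obtain ⟨j, hj, rfl⟩ := hk
    rw [hF2, Finset.mem_filter] at hj
    have := hF j hj.1
    rw [abs_of_nonpos (by linarith [hj.2])] at this
    push_cast; linarith)
  rw [Finset.sum_image (fun a _ b _ h => neg_injective h)] at h2
  have e : ∑ k ∈ F2, 1 / ((k : ℝ) - η) ^ 2 = ∑ k ∈ F2, 1 / (((-k : ℤ) : ℝ) - -η) ^ 2 := by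
    refine Finset.sum_congr rfl fun k _ => ?_
    congr 1; push_cast; ring
  rw [e]
  have : 4 / R = 2 / R + 2 / R := by ring
  linarith

theorem layer_pointwise (v M C0 p : ℝ) (y : ℕ → ℝ) (hv : 0 ≤ v) (hvM : v ≤ M) (hC0 : 0 ≤ C0)
    (hy : ∀ i, 0 ≤ y i) (hp : 0 ≤ p) (I : ℕ) :
    v ^ p ≤ (if C0 * y 0 < v then M ^ p else 0) +
      ∑ i ∈ Finset.range I, (if C0 * y (i + 1) < v then (C0 * y i) ^ p else 0) + (C0 * y I) ^ p := by
  have hnn : ∀ i, 0 ≤ (C0 * y i) ^ p := fun i => rpow_nonneg (mul_nonneg hC0 (hy i)) p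
  have hM : 0 ≤ M ^ p := rpow_nonneg (hv.trans hvM) p
  induction I with
  | zero =>
    simp only [Finset.range_zero, Finset.sum_empty, add_zero]
    split_ifs with c
    · have := rpow_le_rpow hv hvM hp
      linarith [hnn 0]
    · push Not at c
      have := rpow_le_rpow hv c hp
      linarith
  | succ I ih =>
    rw [Finset.sum_range_succ]
    by_cases c : C0 * y (I + 1) < v
    · rw [if_pos c]
      linarith [hnn (I + 1)]
    · rw [if_neg c]
      push Not at c
      have h1 := rpow_le_rpow hv c hp
      have h2 : 0 ≤ ∑ i ∈ Finset.range I, (if C0 * y (i + 1) < v then (C0 * y i) ^ p else 0) :=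
        Finset.sum_nonneg fun i _ => by split_ifs; exacts [hnn i, le_rfl]
      have h3 : 0 ≤ (if C0 * y 0 < v then M ^ p else 0) := by split_ifs; exacts [hM, le_rfl]
      linarith

theorem layer_sum (S : Finset ℤ) (v : ℤ → ℝ) (M C0 p Q : ℝ) (y : ℕ → ℝ) (hv : ∀ k, 0 ≤ v k)
    (hvM : ∀ k, v k ≤ M) (hC0 : 0 ≤ C0) (hy : ∀ i, 0 ≤ y i) (hp : 0 ≤ p) (I : ℕ)
    (hcount : ∀ i, i ≤ I → ((S.filter (fun k => C0 * y i < v k)).card : ℝ) ≤ Q * 2 ^ i) :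
    ∑ k ∈ S, v k ^ p ≤ Q * M ^ p + ∑ i ∈ Finset.range I, Q * 2 ^ (i + 1) * (C0 * y i) ^ p +
      S.card * (C0 * y I) ^ p := by
  have hnn : ∀ i, 0 ≤ (C0 * y i) ^ p := fun i => rpow_nonneg (mul_nonneg hC0 (hy i)) p
  have hM : 0 ≤ M ^ p := rpow_nonneg ((hv 0).trans (hvM 0)) p
  refine (Finset.sum_le_sum fun k _ =>
    layer_pointwise (v k) M C0 p y (hv k) (hvM k) hC0 hy hp I).trans ?_
  rw [Finset.sum_add_distrib, Finset.sum_add_distrib, Finset.sum_comm, ← Finset.sum_filter,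
    Finset.sum_const, Finset.sum_const, nsmul_eq_mul, nsmul_eq_mul]
  gcongr with i hi
  · simpa using hcount 0 (Nat.zero_le _)
  · rw [← Finset.sum_filter, Finset.sum_const, nsmul_eq_mul]
    rw [Finset.mem_range] at hi
    exact mul_le_mul_of_nonneg_right (hcount (i + 1) hi) (hnn i)

theorem bump_sum (F : Finset ℤ) (v : ℤ → ℝ) (M C0 C1 p κ η r lam : ℝ) (y : ℕ → ℝ)
    (hv : ∀ k, 0 ≤ v k) (hvM : ∀ k, v k ≤ M) (hMr : M ≤ 8 * r) (hr : 0 < r) (hr1 : r ≤ 1)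
    (hC0 : 0 ≤ C0) (hC1 : 0 ≤ C1)
    (hy : ∀ i, 0 ≤ y i) (hp : 1 ≤ p) (I : ℕ) (hκ : 0 ≤ κ) (hκr : κ ≤ lam * r)
    (hcount : ∀ i, i ≤ I → ∀ F : Finset ℤ,
      ((F.filter (fun k => C0 * y i < v k)).card : ℝ) ≤ C1 * r * 2 ^ i)
    (htail : ∀ k : ℤ, 2 * κ < |(k : ℝ) - η| → v k ≤ 32 * κ / ((k : ℝ) - η) ^ 2) :
    ∑ k ∈ F, v k ^ p ≤ r * ((C1 + 3) * 8 ^ p + C1 * C0 ^ p * ∑ i ∈ Finset.range I, 2 ^ (i + 1) * y i ^ p +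
      6 * C0 ^ p * (lam * y I ^ p)) + 128 * (8 * r) ^ (p - 1) * min κ 1 := by
  have hM0 : 0 ≤ M := (hv 0).trans (hvM 0)
  have hMp : M ^ p ≤ 8 ^ p * r := by
    calc M ^ p ≤ (8 * r) ^ p := rpow_le_rpow hM0 hMr (by linarith)
      _ = 8 ^ p * r ^ p := mul_rpow (by norm_num) hr.le
      _ ≤ 8 ^ p * r := by
        gcongr
        calc r ^ p ≤ r ^ (1:ℝ) := rpow_le_rpow_of_exponent_ge hr hr1 hp
          _ = r := rpow_one r
  have hMp0 : 0 ≤ M ^ p := rpow_nonneg hM0 p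
  rw [← Finset.sum_filter_add_sum_filter_not F (fun k : ℤ => |(k : ℝ) - η| ≤ 1)]
  have hA : ∑ k ∈ F.filter (fun k : ℤ => |(k : ℝ) - η| ≤ 1), v k ^ p ≤ 3 * M ^ p := by
    calc _ ≤ ∑ k ∈ F.filter (fun k : ℤ => |(k : ℝ) - η| ≤ 1), M ^ p :=
          Finset.sum_le_sum fun k _ => rpow_le_rpow (hv k) (hvM k) (by linarith)
      _ ≤ _ := by
        rw [Finset.sum_const, nsmul_eq_mul]
        have := card_near F η 1 (by norm_num)
        exact mul_le_mul_of_nonneg_right (by linarith) hMp0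
  set F1 := F.filter (fun k : ℤ => ¬ |(k : ℝ) - η| ≤ 1) with hF1
  rw [← Finset.sum_filter_add_sum_filter_not F1 (fun k : ℤ => |(k : ℝ) - η| ≤ 2 * κ)]
  set S := F1.filter (fun k : ℤ => |(k : ℝ) - η| ≤ 2 * κ) with hS
  have hScard : (S.card : ℝ) ≤ 6 * κ := by
    rcases le_total (2 * κ) 1 with c | c
    · have : S = ∅ := by
        rw [hS, Finset.filter_eq_empty_iff]
        intro k hk hk2
        rw [hF1, Finset.mem_filter] at hk
        exact hk.2 (hk2.trans c)
      rw [this]; simp; linarith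
    · have := card_near F1 η (2 * κ) (by linarith)
      rw [← hS] at this; linarith
  have hB := layer_sum S v M C0 p (C1 * r) y hv hvM hC0 hy (by linarith) I
    (fun i hi => hcount i hi S)
  have hyI : 0 ≤ y I ^ p := rpow_nonneg (hy I) p
  have hC0p : 0 ≤ C0 ^ p := rpow_nonneg hC0 p
  have hB2 : (S.card : ℝ) * (C0 * y I) ^ p ≤ r * (6 * C0 ^ p * (lam * y I ^ p)) := by
    rw [mul_rpow hC0 (hy I)]
    calc (S.card : ℝ) * (C0 ^ p * y I ^ p) ≤ (6 * (lam * r)) * (C0 ^ p * y I ^ p) := by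
          apply mul_le_mul_of_nonneg_right (by linarith) (by positivity)
      _ = _ := by ring
  have hB3 : ∑ i ∈ Finset.range I, C1 * r * 2 ^ (i + 1) * (C0 * y i) ^ p =
      r * (C1 * C0 ^ p * ∑ i ∈ Finset.range I, 2 ^ (i + 1) * y i ^ p) := by
    rw [Finset.mul_sum, Finset.mul_sum]
    refine Finset.sum_congr rfl fun i _ => ?_
    rw [mul_rpow hC0 (hy i)]; ring
  have hB1 : C1 * r * M ^ p ≤ r * (C1 * 8 ^ p) := by
    have h1 : M ^ p ≤ 8 ^ p := hMp.trans (mul_le_of_le_one_right (by positivity) hr1)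
    calc C1 * r * M ^ p ≤ C1 * r * 8 ^ p := by gcongr
      _ = _ := by ring
  set T := F1.filter (fun k : ℤ => ¬ |(k : ℝ) - η| ≤ 2 * κ) with hT
  have hTk : ∀ k ∈ T, max 1 (2 * κ) < |(k : ℝ) - η| := by
    intro k hk
    rw [hT, hF1, Finset.mem_filter, Finset.mem_filter] at hk
    push Not at hk
    exact max_lt hk.1.2 hk.2
  have hts := tail_sum T η _ (le_max_left 1 (2 * κ)) hTk
  have hC : ∑ k ∈ T, v k ^ p ≤ 128 * (8 * r) ^ (p - 1) * min κ 1 := by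
    have h1 : ∀ k ∈ T, v k ^ p ≤ (8 * r) ^ (p - 1) * (32 * κ) * (1 / ((k : ℝ) - η) ^ 2) := by
      intro k hk
      have h2 := htail k ((le_max_right _ _).trans_lt (hTk k hk))
      rcases (hv k).eq_or_lt with h0 | h0
      · rw [← h0, zero_rpow (by linarith)]; positivity
      · calc v k ^ p = v k ^ (p - 1) * v k := by
              rw [← rpow_add_one h0.ne']; congr 1; ring
          _ ≤ (8 * r) ^ (p - 1) * (32 * κ / ((k : ℝ) - η) ^ 2) := by
              apply mul_le_mul _ h2 (hv k) (by positivity)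
              exact rpow_le_rpow (hv k) ((hvM k).trans hMr) (by linarith)
          _ = _ := by ring
    calc _ ≤ ∑ k ∈ T, (8 * r) ^ (p - 1) * (32 * κ) * (1 / ((k : ℝ) - η) ^ 2) :=
          Finset.sum_le_sum h1
      _ = (8 * r) ^ (p - 1) * (32 * κ) * ∑ k ∈ T, (1 / ((k : ℝ) - η) ^ 2) := by
          rw [Finset.mul_sum]
      _ ≤ (8 * r) ^ (p - 1) * (32 * κ) * (4 / max 1 (2 * κ)) := by gcongr
      _ = 128 * (8 * r) ^ (p - 1) * (κ / max 1 (2 * κ)) := by ring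
      _ ≤ _ := by
        gcongr
        have hmax : 0 < max 1 (2 * κ) := lt_max_of_lt_left one_pos
        apply le_min
        · exact div_le_self hκ (le_max_left _ _)
        · rw [div_le_one hmax]
          exact (by linarith : κ ≤ 2 * κ).trans (le_max_right _ _)
  rw [hB3] at hB
  nlinarith


/-! ### Part 5: the modulus of continuity and its inverse -/

/-- The hypotheses on the modulus of continuity. -/
structure ModData (ω χinv : ℝ → ℝ) : Prop where
  cont : ContinuousOn ω (Ici 0)
  mono : MonotoneOn ω (Ici 0)
  zero : ω 0 = 0
  pos : ∀ δ : ℝ, 0 < δ → 0 < ω δ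
  chi_mono : StrictMonoOn (fun δ => δ * ω δ) (Ici 0)
  inv_right : ∀ y : ℝ, 0 ≤ y → 0 ≤ χinv y ∧ χinv y * ω (χinv y) = y
  doubling : ∃ δ₀ : ℝ, 0 < δ₀ ∧ ∀ δ : ℝ, 0 < δ → δ < δ₀ → ω (2 * δ) < 2 * ω δ

namespace ModData

variable {ω χinv : ℝ → ℝ}

theorem exists_scale (h : ModData ω χinv) : ∃ (A : ℝ) (D : ℕ → ℝ), 0 < A ∧ D 0 ≤ 1 ∧
    (∀ m, 0 < D m) ∧ (∀ m, ω (D m) = A * (1 / 2) ^ m) ∧ ∀ m, 2 * D (m + 1) < D m := by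
  obtain ⟨δ₀, hδ₀, hd⟩ := h.doubling
  set d := min 1 (δ₀ / 2) with hdd
  have hd0 : 0 < d := lt_min one_pos (by linarith)
  have hA := h.pos d hd0
  have hex : ∀ m : ℕ, ∃ x ∈ Icc 0 d, ω x = ω d * (1 / 2) ^ m := by
    intro m
    have hc : ContinuousOn ω (Icc 0 d) := h.cont.mono fun x hx => hx.1
    have hv : ω d * (1 / 2) ^ m ∈ Icc (ω 0) (ω d) := by
      rw [h.zero]
      refine ⟨by positivity, mul_le_of_le_one_right hA.le (pow_le_one₀ (by norm_num) (by norm_num))⟩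
    exact intermediate_value_Icc hd0.le hc hv
  choose D hD hDω using hex
  have hpos : ∀ m, 0 < D m := by
    intro m
    refine lt_of_le_of_ne (hD m).1 fun h0 => ?_
    have := hDω m
    rw [← h0, h.zero] at this
    have : 0 < ω d * (1 / 2) ^ m := by positivity
    linarith
  refine ⟨ω d, D, hA, (hD 0).2.trans (min_le_left _ _), hpos, hDω, fun m => ?_⟩
  by_contra hcon
  push Not at hcon
  have h1 := h.mono (hpos m).le (show (0:ℝ) ≤ 2 * D (m + 1) by have := hpos (m + 1); linarith) hcon
  have h2 := hd (D (m + 1)) (hpos _) (by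
    have := (hD (m + 1)).2
    have := min_le_right 1 (δ₀ / 2)
    linarith)
  rw [hDω, pow_succ] at h2
  rw [hDω] at h1
  linarith

theorem inv_pos (h : ModData ω χinv) {y : ℝ} (hy : 0 < y) : 0 < χinv y := by
  obtain ⟨h1, h2⟩ := h.inv_right y hy.le
  refine lt_of_le_of_ne h1 fun h0 => ?_
  rw [← h0, zero_mul] at h2; linarith

theorem inv_eq (h : ModData ω χinv) {y : ℝ} (hy : 0 < y) : χinv y * ω (χinv y) = y :=
  (h.inv_right y hy.le).2

theorem inv_mono (h : ModData ω χinv) {x y : ℝ} (hx : 0 < x) (hxy : x ≤ y) : χinv x ≤ χinv y := by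
  by_contra hcon
  push Not at hcon
  have := h.chi_mono (h.inv_pos (hx.trans_le hxy)).le (h.inv_pos hx).le hcon
  simp only at this
  rw [h.inv_eq hx, h.inv_eq (hx.trans_le hxy)] at this
  linarith

/-- The function of the frequency. -/
theorem Y_anti (h : ModData ω χinv) {s t : ℝ} (hs : 0 < s) (hst : s ≤ t) :
    χinv (1 / t) ≤ χinv (1 / s) :=
  h.inv_mono (one_div_pos.2 (hs.trans_le hst)) (one_div_le_one_div_of_le hs hst)

theorem Y_eq (h : ModData ω χinv) {s : ℝ} (hs : 0 < s) :
    s * χinv (1 / s) = 1 / ω (χinv (1 / s)) := by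
  have hs' : 0 < 1 / s := one_div_pos.2 hs
  have h1 := h.inv_eq hs'
  have h2 := h.pos _ (h.inv_pos hs')
  rw [eq_div_iff h2.ne', mul_assoc, h1]
  field_simp

theorem Y_mul_mono (h : ModData ω χinv) {s t : ℝ} (hs : 0 < s) (hst : s ≤ t) :
    s * χinv (1 / s) ≤ t * χinv (1 / t) := by
  have ht := hs.trans_le hst
  rw [h.Y_eq hs, h.Y_eq ht]
  apply one_div_le_one_div_of_le (h.pos _ (h.inv_pos (one_div_pos.2 ht)))
  exact h.mono (h.inv_pos (one_div_pos.2 ht)).le (h.inv_pos (one_div_pos.2 hs)).le (h.Y_anti hs hst)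

theorem quasi_small (h : ModData ω χinv) (δ₀ : ℝ)
    (hd : ∀ δ : ℝ, 0 < δ → δ < δ₀ → ω (2 * δ) < 2 * ω δ) (t : ℝ) (htδ : t < δ₀) (k : ℕ) :
    ∀ s, 0 < s → s ≤ t → t ≤ 2 ^ k * s → ω t * s ≤ 2 * ω s * t := by
  induction k with
  | zero =>
    intro s hs hst hts
    have : s = t := by simp at hts; linarith
    subst this
    have := h.pos s hs
    nlinarith
  | succ k ih =>
    intro s hs hst hts
    have hds := hd s hs (by linarith)
    have hωs := h.pos s hs
    rcases le_total t (2 * s) with c | c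
    · have h1 := h.mono (hs.trans_le hst).le (show (0:ℝ) ≤ 2 * s by linarith) c
      calc ω t * s ≤ (2 * ω s) * s := by gcongr; linarith
        _ ≤ _ := by gcongr
    · have := ih (2 * s) (by linarith) c (by rw [pow_succ] at hts; linarith)
      have : 2 * ω (2 * s) * t ≤ 2 * (2 * ω s) * t := by
        have : 0 ≤ t := by linarith
        gcongr
      linarith

theorem quasi (h : ModData ω χinv) (T : ℝ) (hT : 0 < T) : ∃ C : ℝ, 0 < C ∧ ∀ s t, 0 < s → s ≤ t →
    t ≤ T → ω t * s ≤ C * ω s * t := by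
  obtain ⟨δ₀, hδ₀, hd⟩ := h.doubling
  have hsm : ∀ s t, 0 < s → s ≤ t → t < δ₀ → ω t * s ≤ 2 * ω s * t := by
    intro s t hs hst ht
    obtain ⟨k, hk⟩ := pow_unbounded_of_one_lt (t / s) (by norm_num : (1:ℝ) < 2)
    rw [div_lt_iff₀ hs] at hk
    exact h.quasi_small δ₀ hd t ht k s hs hst hk.le
  set t0 := δ₀ / 2 with ht0
  have ht0p : 0 < t0 := by rw [ht0]; linarith
  have hω0 := h.pos t0 ht0p
  have hωT := h.pos T hT
  refine ⟨2 + 2 * (ω T / ω t0), by positivity, fun s t hs hst htT => ?_⟩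
  have ht := hs.trans_le hst
  have hωs := h.pos s hs
  have hq : 0 < ω T / ω t0 := by positivity
  have e : (2 + 2 * (ω T / ω t0)) * ω s * t = 2 * ω s * t + 2 * (ω T / ω t0) * ω s * t := by ring
  have n1 : 0 ≤ 2 * ω s * t := by positivity
  have n2 : 0 ≤ 2 * (ω T / ω t0) * ω s * t := by positivity
  rw [e]
  rcases lt_or_ge t δ₀ with c | c
  · have := hsm s t hs hst c
    linarith
  · have htT' : ω t ≤ ω T := h.mono ht.le hT.le htT
    have key : ω t0 * s ≤ 2 * ω s * t := by
      rcases le_total s t0 with c2 | c2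
      · refine (hsm s t0 hs c2 (by rw [ht0]; linarith)).trans ?_
        have : t0 ≤ t := by rw [ht0]; linarith
        gcongr
      · have : ω t0 ≤ ω s := h.mono ht0p.le hs.le c2
        calc ω t0 * s ≤ ω s * t := by gcongr
          _ ≤ _ := by nlinarith [mul_pos hωs ht]
    have : ω t * s ≤ 2 * (ω T / ω t0) * ω s * t := by
      calc ω t * s ≤ ω T * s := by gcongr
        _ = (ω T / ω t0) * (ω t0 * s) := by field_simp
        _ ≤ (ω T / ω t0) * (2 * ω s * t) := by gcongr
        _ = _ := by ring
    linarith

theorem Y_decay (h : ModData ω χinv) : ∃ C : ℝ, 0 < C ∧ ∀ s t, 1 ≤ s → s ≤ t →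
    χinv (1 / t) ≤ C * χinv (1 / s) * Real.sqrt (s / t) := by
  obtain ⟨C, hC, hq⟩ := h.quasi (χinv (1 / 1)) (h.inv_pos (by norm_num))
  refine ⟨Real.sqrt C, Real.sqrt_pos.2 hC, fun s t hs hst => ?_⟩
  have hs0 : 0 < s := by linarith
  have ht0 : 0 < t := by linarith
  have hYt := h.inv_pos (one_div_pos.2 ht0)
  have hYs := h.inv_pos (one_div_pos.2 hs0)
  have h1 := hq _ _ hYt (h.Y_anti hs0 hst) (h.Y_anti one_pos hs)
  have et := h.inv_eq (one_div_pos.2 ht0)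
  have es := h.inv_eq (one_div_pos.2 hs0)
  have hωt := h.pos _ hYt
  have hωs := h.pos _ hYs
  set x := χinv (1 / t)
  set z := χinv (1 / s)
  have key : x ^ 2 ≤ C * z ^ 2 * (s / t) := by
    have h2 : x ^ 2 * (1 / s) ≤ C * z ^ 2 * (1 / t) := by
      rw [← et, ← es]
      calc x ^ 2 * (z * ω z) = (ω z * x) * (x * z) := by ring
        _ ≤ (C * ω x * z) * (x * z) := by gcongr
        _ = _ := by ring
    calc x ^ 2 = (x ^ 2 * (1 / s)) * s := by field_simp
      _ ≤ (C * z ^ 2 * (1 / t)) * s := by gcongr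
      _ = _ := by ring
  have : x = Real.sqrt (x ^ 2) := (Real.sqrt_sq hYt.le).symm
  rw [this]
  refine (Real.sqrt_le_sqrt key).trans (le_of_eq ?_)
  rw [Real.sqrt_mul (by positivity), Real.sqrt_mul hC.le, Real.sqrt_sq hYs.le]

end ModData

theorem log_sq_le (x : ℝ) (hx : 1 ≤ x) : Real.log x ^ 2 ≤ x := by
  set u := x ^ ((1:ℝ) / 4) with hu
  have hx0 : 0 < x := by linarith
  have hu0 : 0 < u := rpow_pos_of_pos hx0 _
  have e : u ^ 4 = x := by
    rw [hu, ← Real.rpow_natCast, ← Real.rpow_mul hx0.le]; norm_num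
  have h1 := Real.log_le_sub_one_of_pos hu0
  have h2 : Real.log x = 4 * Real.log u := by rw [← e, Real.log_pow]; norm_num
  have h0 : 0 ≤ Real.log x := Real.log_nonneg hx
  have h3 : Real.log x ≤ u ^ 2 := by nlinarith [sq_nonneg (u - 2)]
  calc Real.log x ^ 2 ≤ (u ^ 2) ^ 2 := by gcongr
    _ = x := by rw [← e]; ring

namespace ModData

variable {ω χinv : ℝ → ℝ}

/-- The majorant for p = 1. -/
noncomputable def thetaOne (χinv : ℝ → ℝ) (lam : ℝ) : ℝ :=
  (lam / Real.log lam) * χinv ((Real.log lam) ^ 2 / lam)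

theorem log_le_thetaOne (h : ModData ω χinv) : ∃ C : ℝ, 0 < C ∧ ∀ lam, 2 ≤ lam →
    Real.log lam ≤ C * thetaOne χinv lam := by
  refine ⟨ω (χinv (1 / 1)), h.pos _ (h.inv_pos (by norm_num)), fun lam hl => ?_⟩
  have hL : 0 < Real.log lam := Real.log_pos (by linarith)
  have hτ : 1 ≤ lam / Real.log lam ^ 2 := by
    rw [one_le_div (by positivity)]; exact log_sq_le lam (by linarith)
  have h1 := h.Y_mul_mono one_pos hτ
  rw [h.Y_eq one_pos, div_le_iff₀ (h.pos _ (h.inv_pos (by norm_num))), one_div_div] at h1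
  unfold thetaOne
  calc Real.log lam = Real.log lam * 1 := by ring
    _ ≤ _ := mul_le_mul_of_nonneg_left h1 hL.le
    _ = _ := by field_simp

theorem thetaOne_pos (h : ModData ω χinv) {lam : ℝ} (hl : 2 ≤ lam) : 0 < thetaOne χinv lam := by
  have hL : 0 < Real.log lam := Real.log_pos (by linarith)
  unfold thetaOne
  have := h.inv_pos (show 0 < (Real.log lam) ^ 2 / lam by positivity)
  positivity

theorem geom_sqrt (I : ℕ) : ∑ i ∈ Finset.range (I + 1), Real.sqrt (2 ^ i) ≤ 4 * Real.sqrt (2 ^ I) := by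
  induction I with
  | zero => simp
  | succ I ih =>
    rw [Finset.sum_range_succ]
    have e : Real.sqrt (2 ^ (I + 1)) = Real.sqrt 2 * Real.sqrt (2 ^ I) := by
      rw [pow_succ, mul_comm, Real.sqrt_mul (by norm_num)]
    have h2 : (4 / 3 : ℝ) ≤ Real.sqrt 2 := Real.le_sqrt_of_sq_le (by norm_num)
    have := Real.sqrt_nonneg (2 ^ I)
    rw [e]
    nlinarith

theorem sum_le_thetaOne (h : ModData ω χinv) : ∃ C : ℝ, 0 < C ∧ ∀ lam, 2 ≤ lam → ∀ I : ℕ,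
    (2:ℝ) ^ I ≤ lam → lam < 2 ^ (I + 1) →
    ∑ i ∈ Finset.range I, 2 ^ (i + 1) * χinv (1 / 2 ^ i) + lam * χinv (1 / 2 ^ I) ≤
      C * thetaOne χinv lam := by
  obtain ⟨C, hC, hdec⟩ := h.Y_decay
  refine ⟨8 + 8 * C, by positivity, fun lam hl I hI1 hI2 => ?_⟩
  have hL : 0 < Real.log lam := Real.log_pos (by linarith)
  set L := Real.log lam with hLd
  set τ := lam / L ^ 2 with hτd
  have hτ : 1 ≤ τ := by
    rw [hτd, one_le_div (by positivity)]; exact log_sq_le lam (by linarith)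
  set Y := χinv (1 / τ) with hY
  have hY0 : 0 < Y := h.inv_pos (by positivity)
  have hΘ : thetaOne χinv lam = lam / L * Y := by
    unfold thetaOne
    rw [hY, hτd, one_div_div]
  have hterm : ∀ i : ℕ, (2:ℝ) ^ i * χinv (1 / 2 ^ i) ≤ τ * Y + C * Y * Real.sqrt τ * Real.sqrt (2 ^ i) := by
    intro i
    have hp : (0:ℝ) < 2 ^ i := by positivity
    have n1 : 0 ≤ C * Y * Real.sqrt τ * Real.sqrt (2 ^ i) := by positivity
    have n2 : 0 ≤ τ * Y := by positivity
    rcases le_total ((2:ℝ) ^ i) τ with c | c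
    · have := h.Y_mul_mono hp c
      linarith
    · have h1 := hdec τ (2 ^ i) hτ c
      have : (2:ℝ) ^ i * χinv (1 / 2 ^ i) ≤ C * Y * Real.sqrt τ * Real.sqrt (2 ^ i) := by
        calc (2:ℝ) ^ i * χinv (1 / 2 ^ i) ≤ 2 ^ i * (C * Y * Real.sqrt (τ / 2 ^ i)) := by gcongr
          _ = C * Y * Real.sqrt τ * (2 ^ i / Real.sqrt (2 ^ i)) := by
              rw [Real.sqrt_div (by linarith)]; ring
          _ = _ := by rw [Real.div_sqrt]
      linarith
  have hYI := h.inv_pos (show (0:ℝ) < 1 / 2 ^ I by positivity)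
  have hsum : ∑ i ∈ Finset.range I, 2 ^ (i + 1) * χinv (1 / 2 ^ i) + lam * χinv (1 / 2 ^ I) ≤
      2 * ∑ i ∈ Finset.range (I + 1), (2:ℝ) ^ i * χinv (1 / 2 ^ i) := by
    rw [Finset.sum_range_succ, mul_add, Finset.mul_sum]
    apply add_le_add
    · apply le_of_eq
      refine Finset.sum_congr rfl fun i _ => ?_
      rw [pow_succ]; ring
    · rw [← mul_assoc]
      apply mul_le_mul_of_nonneg_right _ hYI.le
      rw [pow_succ] at hI2; linarith
  have hsum2 : ∑ i ∈ Finset.range (I + 1), (2:ℝ) ^ i * χinv (1 / 2 ^ i) ≤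
      (I + 1) * (τ * Y) + C * Y * Real.sqrt τ * (4 * Real.sqrt lam) := by
    refine (Finset.sum_le_sum fun i _ => hterm i).trans ?_
    rw [Finset.sum_add_distrib, Finset.sum_const, Finset.card_range, nsmul_eq_mul, ← Finset.mul_sum]
    push_cast
    have := geom_sqrt I
    have : Real.sqrt (2 ^ I) ≤ Real.sqrt lam := Real.sqrt_le_sqrt hI1
    gcongr
    linarith
  have hIL : (I + 1 : ℝ) ≤ 4 * L := by
    have hl2 : (1:ℝ) / 2 < Real.log 2 := by have := Real.log_two_gt_d9; linarith
    have h1 : (I:ℝ) * Real.log 2 ≤ L := by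
      rw [← Real.log_pow]; exact Real.log_le_log (by positivity) hI1
    have h2 : Real.log 2 ≤ L := Real.log_le_log (by norm_num) hl
    have : (0:ℝ) ≤ I := by positivity
    nlinarith
  have e1 : (4 * L) * (τ * Y) = 4 * thetaOne χinv lam := by
    rw [hΘ, hτd]; field_simp
  have e2 : C * Y * Real.sqrt τ * (4 * Real.sqrt lam) = 4 * C * thetaOne χinv lam := by
    rw [hΘ, hτd, Real.sqrt_div (by linarith), Real.sqrt_sq hL.le]
    have : Real.sqrt lam * Real.sqrt lam = lam := Real.mul_self_sqrt (by linarith)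
    calc _ = 4 * C * ((Real.sqrt lam * Real.sqrt lam) / L * Y) := by ring
      _ = _ := by rw [this]
  have h3 : (I + 1 : ℝ) * (τ * Y) ≤ (4 * L) * (τ * Y) := by gcongr
  linarith

theorem sum_le_thetaP (h : ModData ω χinv) (p : ℝ) (hp : 1 < p) : ∃ C : ℝ, 0 < C ∧
    ∀ lam, 2 ≤ lam → ∀ I : ℕ, (2:ℝ) ^ I ≤ lam → lam < 2 ^ (I + 1) →
    1 + ∑ i ∈ Finset.range I, 2 ^ (i + 1) * χinv (1 / 2 ^ i) ^ p + lam * χinv (1 / 2 ^ I) ^ p ≤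
      C * ∫ τ in (1:ℝ)..lam, (χinv (1 / τ)) ^ p := by
  set f : ℝ → ℝ := fun τ => (χinv (1 / τ)) ^ p with hf
  have hfa : ∀ s t, 0 < s → s ≤ t → f t ≤ f s := fun s t hs hst =>
    rpow_le_rpow (h.inv_pos (one_div_pos.2 (hs.trans_le hst))).le (h.Y_anti hs hst) (by linarith)
  have hfp : ∀ s, 0 < s → 0 < f s := fun s hs => rpow_pos_of_pos (h.inv_pos (one_div_pos.2 hs)) p
  have hIntg : ∀ a b, 1 ≤ a → a ≤ b → IntervalIntegrable f volume a b := by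
    intro a b ha hab
    apply AntitoneOn.intervalIntegrable
    rw [uIcc_of_le hab]
    intro s hs t ht hst
    exact hfa s t (by linarith [hs.1]) hst
  have hlow : ∀ a b, 1 ≤ a → a ≤ b → (b - a) * f b ≤ ∫ τ in a..b, f τ := by
    intro a b ha hab
    have := intervalIntegral.integral_mono_on (μ := volume) hab (intervalIntegrable_const (c := f b))
      (hIntg a b ha hab) (fun x hx => hfa x b (by linarith [hx.1]) hx.2)
    simpa using this
  have hdy : ∀ I : ℕ, ∑ i ∈ Finset.range I, 2 ^ (i + 2) * f (2 ^ (i + 1)) ≤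
      4 * ∫ τ in (1:ℝ)..2 ^ I, f τ := by
    intro I
    induction I with
    | zero => simp
    | succ I ih =>
      rw [Finset.sum_range_succ]
      have h1 : (1:ℝ) ≤ 2 ^ I := one_le_pow₀ (by norm_num)
      have h2 : (2:ℝ) ^ I ≤ 2 ^ (I + 1) := pow_le_pow_right₀ (by norm_num) (Nat.le_succ _)
      rw [← intervalIntegral.integral_add_adjacent_intervals (hIntg 1 (2 ^ I) le_rfl h1)
        (hIntg _ _ h1 h2)]
      have := hlow _ _ h1 h2
      have e : ((2:ℝ) ^ (I + 1) - 2 ^ I) = 2 ^ I := by ring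
      rw [e] at this
      have e2 : (2:ℝ) ^ (I + 2) = 4 * 2 ^ I := by ring
      rw [e2]; linarith
  refine ⟨4 + (1 + 2 * f 1) / f 2, by
    have := hfp 1 one_pos
    have := hfp 2 two_pos
    positivity, fun lam hl I hI1 hI2 => ?_⟩
  obtain ⟨J, rfl⟩ : ∃ J, I = J + 1 := by
    rcases I with _ | J
    · norm_num at hI2; linarith
    · exact ⟨J, rfl⟩
  have hJ1 : (1:ℝ) ≤ 2 ^ (J + 1) := one_le_pow₀ (by norm_num)
  have hA : (1 + 2 * f 1) ≤ (1 + 2 * f 1) / f 2 * ∫ τ in (1:ℝ)..lam, f τ := by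
    have h2 := hfp 2 two_pos
    have h1 := hfp 1 one_pos
    have : f 2 ≤ ∫ τ in (1:ℝ)..lam, f τ := by
      rw [← intervalIntegral.integral_add_adjacent_intervals (hIntg 1 2 le_rfl (by norm_num))
        (hIntg 2 lam (by norm_num) hl)]
      have h3 := hlow 1 2 le_rfl (by norm_num)
      have h4 := hlow 2 lam (by norm_num) hl
      have h5 : 0 ≤ (lam - 2) * f lam := mul_nonneg (by linarith) (hfp lam (by linarith)).le
      linarith
    calc (1 + 2 * f 1) = (1 + 2 * f 1) / f 2 * f 2 := by field_simp
      _ ≤ _ := by gcongr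
  have hB : 4 * ∫ τ in (1:ℝ)..2 ^ (J + 1), f τ ≤ 4 * ∫ τ in (1:ℝ)..lam, f τ := by
    rw [← intervalIntegral.integral_add_adjacent_intervals (hIntg 1 _ le_rfl hJ1)
        (hIntg _ lam hJ1 hI1)]
    have h4 := hlow _ lam hJ1 hI1
    have h5 : 0 ≤ (lam - 2 ^ (J + 1)) * f lam := mul_nonneg (by linarith) (hfp lam (by linarith)).le
    linarith
  have hC := hdy (J + 1)
  rw [Finset.sum_range_succ] at hC
  have hD : lam * f (2 ^ (J + 1)) ≤ 2 ^ (J + 2) * f (2 ^ (J + 1)) := by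
    have := hfp (2 ^ (J + 1)) (by positivity)
    gcongr
  have hE : ∑ i ∈ Finset.range (J + 1), 2 ^ (i + 1) * χinv (1 / 2 ^ i) ^ p =
      ∑ i ∈ Finset.range J, 2 ^ (i + 2) * f (2 ^ (i + 1)) + 2 * f 1 := by
    rw [Finset.sum_range_succ']
    simp [hf]
  rw [hE, add_mul]
  change 1 + _ + lam * f (2 ^ (J + 1)) ≤ _
  linarith

end ModData


/-! ### Part 6: estimates for a single bump -/

/-- All the auxiliary data. -/
structure Setup (ω χinv : ℝ → ℝ) (A : ℝ) (D : ℕ → ℝ) (G : ℕ → ℝ → ℝ) : Prop where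
  md : ModData ω χinv
  A_pos : 0 < A
  D_zero : D 0 ≤ 1
  D_eq : ∀ m, ω (D m) = A * (1 / 2) ^ m
  stair : IsStair D G

/-- The exponent of the amplitude. -/
def ampExp (q : ℕ) : ℕ := 2 ^ q + q + 1

namespace Setup

variable {ω χinv : ℝ → ℝ} {A : ℝ} {D : ℕ → ℝ} {G : ℕ → ℝ → ℝ}

theorem exists_setup (h : ModData ω χinv) : ∃ A D G, Setup ω χinv A D G := by
  obtain ⟨A, D, hA, hD0, hpos, hDω, hhalf⟩ := h.exists_scale
  obtain ⟨G, hG⟩ := exists_isStair D hpos hhalf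
  exact ⟨A, D, G, h, hA, hD0, hDω, hG⟩

theorem D_pos (h : Setup ω χinv A D G) (q : ℕ) : 0 < D q := h.stair.pos q

theorem D_le (h : Setup ω χinv A D G) (q : ℕ) : D q ≤ (1 / 2) ^ q := by
  have := h.stair.delta_le 0 q
  rw [zero_add] at this
  refine this.trans (mul_le_of_le_one_left (by positivity) h.D_zero)

theorem ramp (h : Setup ω χinv A D G) (q : ℕ) : IsRamp (G q) (D q) where
  pos := h.D_pos q
  mono := h.stair.mono q
  zero := h.stair.zero q
  one := h.stair.one q
  cont := h.stair.cont q

theorem exists_level (h : Setup ω χinv A D G) (q : ℕ) (y : ℝ) (hy : 0 < y) (hyD : y ≤ D q) :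
    ∃ k, D (q + k + 1) < y ∧ y ≤ D (q + k) := by
  classical
  have hex := h.stair.exists_small q hy
  have hne : Nat.find hex ≠ 0 := by
    intro h0
    have := Nat.find_spec hex
    rw [h0, add_zero] at this
    linarith
  obtain ⟨k, hk⟩ := Nat.exists_eq_succ_of_ne_zero hne
  refine ⟨k, ?_, ?_⟩
  · have := Nat.find_spec hex
    rwa [hk, Nat.succ_eq_add_one, ← add_assoc] at this
  · have := Nat.find_min hex (m := k) (by omega)
    exact not_lt.1 this

theorem count (h : Setup ω χinv A D G) (q : ℕ) (κ η y : ℝ) (hy : 0 < y) (F : Finset ℤ) :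
    ((F.filter (fun k : ℤ => 40 * y < ‖bumpV (G q) (D q) κ (η - k)‖)).card : ℝ) ≤
      18 * A * (1 / 2) ^ q / (y * ω y) := by
  have hωy := h.md.pos y hy
  have hA := h.A_pos
  rcases lt_or_ge (D q) y with c | c
  · have : F.filter (fun k : ℤ => 40 * y < ‖bumpV (G q) (D q) κ (η - k)‖) = ∅ := by
      rw [Finset.filter_eq_empty_iff]
      intro k _
      have := (h.ramp q).E1 κ (η - k)
      have := h.D_pos q
      linarith
    rw [this]
    simp only [Finset.card_empty, Nat.cast_zero]
    positivity
  · obtain ⟨m, hm1, hm2⟩ := h.exists_level q y hy c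
    have hy1 : y ≤ 1 := c.trans ((h.D_le q).trans (pow_le_one₀ (by norm_num) (by norm_num)))
    set N : ℕ := 2 ^ (m + 1) with hN
    have hN0 : 0 < N := by positivity
    have hsub : F.filter (fun k : ℤ => 40 * y < ‖bumpV (G q) (D q) κ (η - k)‖) ⊆
        (Finset.Icc (-(N:ℤ)) N).biUnion fun j =>
          F.filter (fun k : ℤ => |(k : ℝ) - (κ * (j / N) + η)| ≤ 1 / y) := by
      intro k hk
      rw [Finset.mem_filter] at hk
      by_contra hcon
      rw [Finset.mem_biUnion] at hcon
      push Not at hcon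
      refine absurd hk.2 (not_lt.2 ?_)
      apply (h.ramp q).E3 κ (η - k) y N hN0 hy
      · intro s t hst hyt
        have := h.stair.value (m + 1) q s t hst (by rw [← add_assoc]; linarith)
        rw [hN]; push_cast; exact this
      · intro j hj
        have := hcon j (Finset.mem_Icc.2 (abs_le.1 hj))
        rw [Finset.mem_filter] at this
        push Not at this
        have := this hk.1
        rw [abs_sub_comm] at this
        rwa [show κ * ((j:ℝ) / N) + (η - k) = κ * (j / N) + η - k by ring]
    have hcard : ((F.filter (fun k : ℤ => 40 * y < ‖bumpV (G q) (D q) κ (η - k)‖)).card : ℝ) ≤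
        ∑ j ∈ Finset.Icc (-(N:ℤ)) N,
          ((F.filter (fun k : ℤ => |(k : ℝ) - (κ * (j / N) + η)| ≤ 1 / y)).card : ℝ) := by
      exact_mod_cast (Finset.card_le_card hsub).trans Finset.card_biUnion_le
    have hy1' : 1 ≤ 1 / y := by rw [one_le_div hy]; exact hy1
    have hsum : ∑ j ∈ Finset.Icc (-(N:ℤ)) N,
          ((F.filter (fun k : ℤ => |(k : ℝ) - (κ * (j / N) + η)| ≤ 1 / y)).card : ℝ) ≤
          (2 * N + 1) * (3 * (1 / y)) := by
      refine (Finset.sum_le_sum fun j _ => (card_near F _ (1 / y) (by positivity)).trans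
        (show 2 * (1 / y) + 1 ≤ 3 * (1 / y) by linarith)).trans ?_
      rw [Finset.sum_const, nsmul_eq_mul, Int.card_Icc]
      have e : ((N:ℤ) + 1 - -(N:ℤ)).toNat = 2 * N + 1 := by omega
      rw [e]; push_cast; rfl
    have hω : ω y ≤ A * (1 / 2) ^ (q + m) := by
      rw [← h.D_eq]
      exact h.md.mono hy.le (h.D_pos _).le hm2
    have hN1 : (1:ℝ) ≤ N := by exact_mod_cast hN0
    have hNω : (N:ℝ) * ω y ≤ 2 * A * (1 / 2) ^ q := by
      calc (N:ℝ) * ω y ≤ N * (A * (1 / 2) ^ (q + m)) := by gcongr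
        _ = 2 * A * (1 / 2) ^ q * ((2:ℝ) ^ m * (1 / 2) ^ m) := by rw [hN]; push_cast; ring
        _ = _ := by rw [← mul_pow]; norm_num
    rw [le_div_iff₀ (by positivity)]
    calc _ ≤ (2 * N + 1) * (3 * (1 / y)) * (y * ω y) := by
          gcongr; exact hcard.trans hsum
      _ = 3 * (2 * N + 1) * ω y := by field_simp
      _ ≤ 3 * (3 * N) * ω y := by gcongr; linarith
      _ ≤ _ := by nlinarith

theorem count_dyadic (h : Setup ω χinv A D G) (q : ℕ) (κ η : ℝ) (i : ℕ) (F : Finset ℤ) :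
    ((F.filter (fun k : ℤ => 40 * χinv (1 / 2 ^ i) < ‖bumpV (G q) (D q) κ (η - k)‖)).card : ℝ) ≤
      18 * A * (1 / 2) ^ q * 2 ^ i := by
  have hp : (0:ℝ) < 1 / 2 ^ i := by positivity
  refine (h.count q κ η _ (h.md.inv_pos hp) F).trans (le_of_eq ?_)
  rw [h.md.inv_eq hp]; field_simp

theorem amp_le (q : ℕ) : (1 / 2 : ℝ) ^ ampExp q ≤ (1 / 2) ^ q :=
  pow_le_pow_of_le_one (by norm_num) (by norm_num) (by unfold ampExp; exact (Nat.le_add_left q _).trans (Nat.le_succ _))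

theorem bump_gen (h : Setup ω χinv A D G) (p : ℝ) (hp : 1 ≤ p) (q : ℕ) (κ₀ η lam : ℝ)
    (hκ : |κ₀| = lam * (1 / 2) ^ ampExp q) (hl : 2 ≤ lam) (I : ℕ) (F : Finset ℤ) :
    ∑ k ∈ F, ‖bumpV (G q) (D q) κ₀ (η - k)‖ ^ p ≤ (1 / 2) ^ q * ((18 * A + 3) * 8 ^ p +
      18 * A * 40 ^ p * ∑ i ∈ Finset.range I, 2 ^ (i + 1) * χinv (1 / 2 ^ i) ^ p +
      6 * 40 ^ p * (lam * χinv (1 / 2 ^ I) ^ p)) +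
      128 * (8 * (1 / 2) ^ q) ^ (p - 1) * min (lam * (1 / 2) ^ ampExp q) 1 := by
  have hA := h.A_pos
  refine bump_sum F (fun k => ‖bumpV (G q) (D q) κ₀ (η - k)‖) (8 * D q) 40 (18 * A) p
    (lam * (1 / 2) ^ ampExp q) η ((1 / 2) ^ q) lam (fun i => χinv (1 / 2 ^ i))
    (fun k => norm_nonneg _) (fun k => (h.ramp q).E1 _ _) ?_ (by positivity)
    (pow_le_one₀ (by norm_num) (by norm_num)) (by norm_num) (by positivity)
    (fun i => (h.md.inv_pos (by positivity)).le) hp I (by positivity) ?_ ?_ ?_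
  · have := h.D_le q; linarith
  · have := amp_le q; gcongr
  · intro i _ F
    exact h.count_dyadic q κ₀ η i F
  · intro k hk
    rw [← hκ] at hk ⊢
    rw [abs_sub_comm] at hk
    have := (h.ramp q).E2 κ₀ (η - k) hk
    rw [show ((k:ℝ) - η) ^ 2 = (η - k) ^ 2 by ring]
    exact this

theorem exists_dyadic (lam : ℝ) (hl : 2 ≤ lam) : ∃ I : ℕ, (2:ℝ) ^ I ≤ lam ∧ lam < 2 ^ (I + 1) :=
  exists_nat_pow_near (by linarith) (by norm_num)

theorem bump_p (h : Setup ω χinv A D G) (p : ℝ) (hp : 1 < p) (hp2 : p < 2) :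
    ∃ C : ℝ, 0 < C ∧ ∀ (q : ℕ) (κ₀ η lam : ℝ), |κ₀| = lam * (1 / 2) ^ ampExp q → 2 ≤ lam →
    ∀ F : Finset ℤ, ∑ k ∈ F, ‖bumpV (G q) (D q) κ₀ (η - k)‖ ^ p ≤
      C * ((1 / 2) ^ q) ^ (p - 1) * ∫ τ in (1:ℝ)..lam, (χinv (1 / τ)) ^ p := by
  obtain ⟨C, hC, hCl⟩ := h.md.sum_le_thetaP p hp
  have hA := h.A_pos
  set K := (18 * A + 3) * (8:ℝ) ^ p + 18 * A * 40 ^ p + 6 * 40 ^ p with hK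
  have hK0 : 0 < K := by positivity
  refine ⟨(K + 128 * 8 ^ (p - 1)) * C, by positivity, fun q κ₀ η lam hκ hl F => ?_⟩
  obtain ⟨I, hI1, hI2⟩ := exists_dyadic lam hl
  have h1 := h.bump_gen p hp.le q κ₀ η lam hκ hl I F
  have h2 := hCl lam hl I hI1 hI2
  have hr : (0:ℝ) < (1 / 2) ^ q := by positivity
  have hr1 : ((1:ℝ) / 2) ^ q ≤ 1 := pow_le_one₀ (by norm_num) (by norm_num)
  set r := ((1:ℝ) / 2) ^ q
  have hrp : r ≤ r ^ (p - 1) := by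
    calc r = r ^ (1:ℝ) := (rpow_one r).symm
      _ ≤ r ^ (p - 1) := rpow_le_rpow_of_exponent_ge hr hr1 (by linarith)
  set S := ∑ i ∈ Finset.range I, (2:ℝ) ^ (i + 1) * χinv (1 / 2 ^ i) ^ p with hS
  have hS0 : 0 ≤ S := Finset.sum_nonneg fun i _ => by
    have := h.md.inv_pos (show (0:ℝ) < 1 / 2 ^ i by positivity)
    positivity
  set Z := lam * χinv (1 / 2 ^ I) ^ p with hZ
  have hZ0 : 0 ≤ Z := by
    have := h.md.inv_pos (show (0:ℝ) < 1 / 2 ^ I by positivity)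
    positivity
  have hX1 : 1 ≤ 1 + S + Z := by linarith
  have hbr : (18 * A + 3) * (8:ℝ) ^ p + 18 * A * 40 ^ p * S + 6 * 40 ^ p * Z ≤ K * (1 + S + Z) := by
    rw [hK]
    have a1 : 0 < (18 * A + 3) * (8:ℝ) ^ p := by positivity
    have a2 : 0 < 18 * A * (40:ℝ) ^ p := by positivity
    have a3 : 0 < 6 * (40:ℝ) ^ p := by positivity
    nlinarith [mul_nonneg a1.le hS0, mul_nonneg a1.le hZ0, mul_nonneg a2.le hS0,
      mul_nonneg a2.le hZ0, mul_nonneg a3.le hS0, mul_nonneg a3.le hZ0]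
  have hrp0 : 0 < r ^ (p - 1) := by positivity
  calc _ ≤ _ := h1
    _ ≤ r ^ (p - 1) * (K * (1 + S + Z)) + 128 * (8 * r) ^ (p - 1) * (1 + S + Z) := by
        have hm : min (lam * (1 / 2) ^ ampExp q) 1 ≤ 1 + S + Z := (min_le_right _ _).trans hX1
        gcongr
    _ = (K + 128 * 8 ^ (p - 1)) * r ^ (p - 1) * (1 + S + Z) := by
        rw [mul_rpow (by norm_num) hr.le]; ring
    _ ≤ (K + 128 * 8 ^ (p - 1)) * r ^ (p - 1) * (C * ∫ τ in (1:ℝ)..lam, (χinv (1 / τ)) ^ p) := by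
        gcongr
    _ = _ := by ring

theorem bump_one (h : Setup ω χinv A D G) :
    ∃ C : ℝ, 0 < C ∧ ∀ (q : ℕ) (κ₀ η lam : ℝ), |κ₀| = lam * (1 / 2) ^ ampExp q → 2 ≤ lam →
    ∀ F : Finset ℤ, ∑ k ∈ F, ‖bumpV (G q) (D q) κ₀ (η - k)‖ ≤
      C * (1 / 2) ^ q * ModData.thetaOne χinv lam := by
  obtain ⟨C, hC, hCl⟩ := h.md.sum_le_thetaOne
  obtain ⟨C', hC', hCl'⟩ := h.md.log_le_thetaOne
  have hA := h.A_pos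
  set K1 := (18 * A + 3) * (8:ℝ) with hK1
  set K2 := 18 * A * (40:ℝ) + 6 * 40 with hK2
  have hK10 : 0 < K1 := by positivity
  have hK20 : 0 < K2 := by positivity
  refine ⟨K1 * (2 * C') + K2 * C + 128 * (2 * C'), by positivity, fun q κ₀ η lam hκ hl F => ?_⟩
  obtain ⟨I, hI1, hI2⟩ := exists_dyadic lam hl
  have h1 := h.bump_gen 1 le_rfl q κ₀ η lam hκ hl I F
  simp only [rpow_one, sub_self, rpow_zero, mul_one] at h1
  have h2 := hCl lam hl I hI1 hI2
  have h3 := hCl' lam hl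
  have hΘ := h.md.thetaOne_pos hl
  set Θ := ModData.thetaOne χinv lam
  have hr : (0:ℝ) < (1 / 2) ^ q := by positivity
  set r := ((1:ℝ) / 2) ^ q with hrd
  set S := ∑ i ∈ Finset.range I, (2:ℝ) ^ (i + 1) * χinv (1 / 2 ^ i) with hS
  have hS0 : 0 ≤ S := Finset.sum_nonneg fun i _ => by
    have := h.md.inv_pos (show (0:ℝ) < 1 / 2 ^ i by positivity)
    positivity
  set Z := lam * χinv (1 / 2 ^ I) with hZ
  have hZ0 : 0 ≤ Z := by
    have := h.md.inv_pos (show (0:ℝ) < 1 / 2 ^ I by positivity)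
    positivity
  have hl2 : (1:ℝ) / 2 < Real.log 2 := by have := Real.log_two_gt_d9; linarith
  have hone : 1 ≤ 2 * C' * Θ := by
    have : Real.log 2 ≤ Real.log lam := Real.log_le_log (by norm_num) hl
    nlinarith
  have hmin : min (lam * (1 / 2) ^ ampExp q) 1 ≤ r * (2 * C' * Θ) := by
    rcases le_total (lam * (1 / 2) ^ ampExp q) r with c | c
    · refine (min_le_left _ _).trans (c.trans ?_)
      nlinarith
    · refine (min_le_right _ _).trans ?_
      have hlam : (2:ℝ) ^ (2 ^ q) ≤ lam := by
        have e : ((1:ℝ) / 2) ^ ampExp q = r * ((1 / 2) ^ (2 ^ q) * (1 / 2)) := by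
          rw [hrd, ampExp]; ring
        rw [e] at c
        have c2 : 1 ≤ lam * ((1 / 2) ^ (2 ^ q) * (1 / 2)) := by
          by_contra hcon
          push Not at hcon
          nlinarith
        have e3 : ((1:ℝ) / 2) ^ (2 ^ q) * 2 ^ (2 ^ q) = 1 := by rw [← mul_pow]; norm_num
        have p1 : (0:ℝ) < 2 ^ (2 ^ q) := by positivity
        nlinarith
      have hlog : (2:ℝ) ^ q * (1 / 2) ≤ Real.log lam := by
        have := Real.log_le_log (by positivity) hlam
        rw [Real.log_pow] at this
        push_cast at this
        have p2 : (0:ℝ) < 2 ^ q := by positivity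
        nlinarith
      have e4 : r * 2 ^ q = 1 := by rw [hrd, ← mul_pow]; norm_num
      calc (1:ℝ) = r * (2 * (2 ^ q * (1 / 2))) := by linear_combination -e4
        _ ≤ r * (2 * (C' * Θ)) := by have := hlog.trans h3; nlinarith
        _ = _ := by ring
  have hbr : (18 * A + 3) * 8 + 18 * A * 40 * S + 6 * 40 * Z ≤ K1 * (2 * C' * Θ) + K2 * (C * Θ) := by
    have b1 : K1 ≤ K1 * (2 * C' * Θ) := by nlinarith
    have b2 : K2 * (S + Z) ≤ K2 * (C * Θ) := by gcongr
    have b3 : 18 * A * 40 * S + 6 * 40 * Z ≤ K2 * (S + Z) := by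
      rw [hK2]; nlinarith [mul_nonneg hA.le hZ0]
    linarith
  calc _ ≤ _ := h1
    _ ≤ r * (K1 * (2 * C' * Θ) + K2 * (C * Θ)) + 128 * (r * (2 * C' * Θ)) := by gcongr
    _ = _ := by ring

end Setup


/-! ### Part 7: placing the bumps -/

/-- Functions that are constant on a subinterval of each interval. -/
def LocConst (f : ℝ → ℝ) : Prop := ∀ u v : ℝ, u < v → ∃ u' v' c : ℝ, u ≤ u' ∧ u' < v' ∧ v' ≤ v ∧
  ∀ t ∈ Ioo u' v', f t = c

theorem LocConst.comp_sub {f : ℝ → ℝ} (h : LocConst f) (a : ℝ) : LocConst fun t => f (t - a) := by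
  intro u v huv
  obtain ⟨u', v', c, h1, h2, h3, h4⟩ := h (u - a) (v - a) (by linarith)
  refine ⟨u' + a, v' + a, c, by linarith, by linarith, by linarith, fun t ht => h4 _ ?_⟩
  exact ⟨by linarith [ht.1], by linarith [ht.2]⟩

theorem LocConst.map₂ {f g : ℝ → ℝ} (hf : LocConst f) (hg : LocConst g) (F : ℝ → ℝ → ℝ) :
    LocConst fun t => F (f t) (g t) := by
  intro u v huv
  obtain ⟨u', v', c, h1, h2, h3, h4⟩ := hf u v huv
  obtain ⟨ua, va, c', k1, k2, k3, k4⟩ := hg u' v' h2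
  refine ⟨ua, va, F c c', by linarith, k2, by linarith, fun t ht => ?_⟩
  simp only
  rw [h4 t ⟨by linarith [ht.1], by linarith [ht.2]⟩, k4 t ht]

namespace Setup

variable {ω χinv : ℝ → ℝ} {A : ℝ} {D : ℕ → ℝ} {G : ℕ → ℝ → ℝ}

theorem G_locConst (h : Setup ω χinv A D G) (q : ℕ) : LocConst (G q) := by
  intro u v huv
  obtain ⟨k, hk⟩ := h.stair.exists_small q (show 0 < v - u by linarith)
  exact h.stair.plateau k q u v huv hk

theorem psi_locConst (h : Setup ω χinv A D G) (q : ℕ) : LocConst (psi (G q) (D q)) := by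
  have g := h.G_locConst q
  have g1 := (g.map₂ (g.comp_sub (D q)) (fun a b => a - b)).map₂ (g.comp_sub (2 * D q))
    (fun a b => a - b)
  exact g1.map₂ (g.comp_sub (3 * D q)) (fun a b => a + b)

theorem G_mod (h : Setup ω χinv A D G) (q : ℕ) (s t : ℝ) :
    |G q s - G q t| ≤ 4 / A * 2 ^ q * ω |s - t| := by
  have hA := h.A_pos
  wlog hst : s ≤ t generalizing s t with H
  · have := H t s (by linarith)
    rwa [abs_sub_comm (G q t), abs_sub_comm t] at this
  rcases hst.eq_or_lt with rfl | hlt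
  · simp [h.md.zero]
  have hm := h.stair.mono q hst
  rw [abs_sub_comm, abs_of_nonneg (by linarith), abs_sub_comm, abs_of_pos (by linarith)]
  have hr : 0 < t - s := by linarith
  rcases lt_or_ge (D q) (t - s) with c | c
  · have h1 : ω (D q) ≤ ω (t - s) := h.md.mono (h.D_pos q).le hr.le c.le
    rw [h.D_eq] at h1
    have h2 := h.stair.nonneg q s
    have h3 := h.stair.le_one q t
    calc G q t - G q s ≤ 4 * 1 := by linarith
      _ = 4 / A * 2 ^ q * (A * (1 / 2) ^ q) := by
          have : (2:ℝ) ^ q * (1 / 2) ^ q = 1 := by rw [← mul_pow]; norm_num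
          field_simp; linarith
      _ ≤ _ := by gcongr
  · obtain ⟨k, hk1, hk2⟩ := h.exists_level q (t - s) hr c
    have h1 : ω (D (q + k + 1)) ≤ ω (t - s) := h.md.mono (h.D_pos _).le hr.le hk1.le
    rw [h.D_eq] at h1
    calc G q t - G q s ≤ 2 * (1 / 2) ^ k := h.stair.modulus k q s t hst hk2
      _ = 4 / A * 2 ^ q * (A * (1 / 2) ^ (q + k + 1)) := by
          have : (2:ℝ) ^ q * (1 / 2) ^ q = 1 := by rw [← mul_pow]; norm_num
          rw [pow_succ, pow_add]
          calc _ = (2:ℝ) * (1 / 2) ^ k * (2 ^ q * (1 / 2) ^ q) := by rw [this, mul_one]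
            _ = _ := by field_simp; ring
      _ ≤ _ := by gcongr

theorem psi_mod (h : Setup ω χinv A D G) (q : ℕ) (s t : ℝ) :
    |psi (G q) (D q) s - psi (G q) (D q) t| ≤ 16 / A * 2 ^ q * ω |s - t| := by
  have e : ∀ c : ℝ, |(s - c) - (t - c)| = |s - t| := fun c => by congr 1; ring
  have h0 := abs_le.1 (h.G_mod q s t)
  have h1 := abs_le.1 (h.G_mod q (s - D q) (t - D q))
  have h2 := abs_le.1 (h.G_mod q (s - 2 * D q) (t - 2 * D q))
  have h3 := abs_le.1 (h.G_mod q (s - 3 * D q) (t - 3 * D q))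
  rw [e] at h1 h2 h3
  have e2 : 16 / A * 2 ^ q * ω |s - t| = 4 * (4 / A * 2 ^ q * ω |s - t|) := by ring
  rw [e2, abs_le]
  unfold psi
  constructor <;> linarith [h0.1, h0.2, h1.1, h1.2, h2.1, h2.2, h3.1, h3.2]

theorem select_aux (h : Setup ω χinv A D G) (l : List (ℝ × ℕ)) (u v : ℝ) (huv : u < v) :
    ∃ u' v', u ≤ u' ∧ u' < v' ∧ v' ≤ v ∧ ∀ a ∈ l,
      (∃ c, ∀ t ∈ Ioo u' v', psi (G a.2) (D a.2) (t - a.1) = c) ∧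
      a.1 ∉ Ioo u' v' ∧ a.1 + D a.2 ∉ Ioo u' v' := by
  induction l with
  | nil => exact ⟨u, v, le_rfl, huv, le_rfl, by simp⟩
  | cons a l ih =>
    obtain ⟨u1, v1, h1, h2, h3, h4⟩ := ih
    obtain ⟨u2, v2, c, k1, k2, k3, k4⟩ := (h.psi_locConst a.2).comp_sub a.1 u1 v1 h2
    have avoid : ∀ z u v : ℝ, u < v → ∃ u' v', u ≤ u' ∧ u' < v' ∧ v' ≤ v ∧ z ∉ Ioo u' v' := by
      intro z u v huv
      by_cases hz : z ∈ Ioo u v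
      · exact ⟨u, z, le_rfl, hz.1, hz.2.le, fun hh => lt_irrefl _ hh.2⟩
      · exact ⟨u, v, le_rfl, huv, le_rfl, hz⟩
    obtain ⟨u3, v3, l1, l2, l3, l4⟩ := avoid a.1 u2 v2 k2
    obtain ⟨u4, v4, m1, m2, m3, m4⟩ := avoid (a.1 + D a.2) u3 v3 l2
    have sub3 : Ioo u4 v4 ⊆ Ioo u3 v3 := Ioo_subset_Ioo m1 m3
    have sub2 : Ioo u4 v4 ⊆ Ioo u2 v2 := Ioo_subset_Ioo (by linarith) (by linarith)
    have sub1 : Ioo u4 v4 ⊆ Ioo u1 v1 := Ioo_subset_Ioo (by linarith) (by linarith)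
    refine ⟨u4, v4, by linarith, m2, by linarith, fun b hb => ?_⟩
    rcases List.mem_cons.1 hb with rfl | hb
    · exact ⟨⟨c, fun t ht => k4 t (sub2 ht)⟩, fun hh => l4 (sub3 hh), m4⟩
    · obtain ⟨⟨c', hc'⟩, n1, n2⟩ := h4 b hb
      exact ⟨⟨c', fun t ht => hc' t (sub1 ht)⟩, fun hh => n1 (sub1 hh), fun hh => n2 (sub1 hh)⟩

theorem select (h : Setup ω χinv A D G) (l : List (ℝ × ℕ)) (u v : ℝ) (huv : u < v) (j : ℕ) :
    ∃ b : ℝ × ℕ, j ≤ b.2 ∧ u < b.1 ∧ b.1 + 4 * D b.2 < v ∧ ∀ a ∈ l,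
      (∃ c, ∀ t ∈ Icc b.1 (b.1 + 4 * D b.2), psi (G a.2) (D a.2) (t - a.1) = c) ∧
      a.1 ∉ Icc b.1 (b.1 + 4 * D b.2) ∧ a.1 + D a.2 ∉ Icc b.1 (b.1 + 4 * D b.2) := by
  obtain ⟨u', v', h1, h2, h3, h4⟩ := h.select_aux l u v huv
  obtain ⟨k, hk⟩ := h.stair.exists_small j (show 0 < (v' - u') / 16 by linarith)
  have hsub : Icc ((u' + v') / 2) ((u' + v') / 2 + 4 * D (j + k)) ⊆ Ioo u' v' := by
    intro t ht
    exact ⟨by linarith [ht.1], by linarith [ht.2]⟩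
  refine ⟨((u' + v') / 2, j + k), by simp, ?_, ?_, fun a ha => ?_⟩
  · simp only; linarith
  · simp only; linarith
  · obtain ⟨⟨c, hc⟩, n1, n2⟩ := h4 a ha
    exact ⟨⟨c, fun t ht => hc t (hsub ht)⟩, fun hh => n1 (hsub hh), fun hh => n2 (hsub hh)⟩

end Setup

/-- Histories of a recursive choice. -/
noncomputable def histList {α : Type} (g : ℕ → List α → α) : ℕ → List α
  | 0 => []
  | n + 1 => g n (histList g n) :: histList g n

theorem exists_hist {α : Type} (R : ℕ → List α → α → Prop) (hR : ∀ n l, ∃ b, R n l b) :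
    ∃ (f : ℕ → α) (L : ℕ → List α), (∀ n, R n (L n) (f n)) ∧ ∀ n i, i < n → f i ∈ L n := by
  choose g hg using hR
  refine ⟨fun n => g n (histList g n), histList g, fun n => hg _ _, fun n i hi => ?_⟩
  induction n with
  | zero => omega
  | succ n ih =>
    rw [histList, List.mem_cons]
    rcases Nat.lt_succ_iff_lt_or_eq.1 hi with c | rfl
    · exact Or.inr (ih c)
    · exact Or.inl rfl

theorem exists_intervals : ∃ u v : ℕ → ℝ, (∀ n, 0 < u n ∧ u n < v n ∧ v n < 2 * Real.pi) ∧
    ∀ a b : ℝ, 0 ≤ a → a < b → b ≤ 2 * Real.pi → ∃ n, a < u n ∧ v n < b := by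
  classical
  obtain ⟨e, he⟩ := exists_surjective_nat (ℚ × ℚ)
  set P : ℕ → Prop := fun n => 0 < ((e n).1 : ℝ) ∧ ((e n).1 : ℝ) < (e n).2 ∧
    ((e n).2 : ℝ) < 2 * Real.pi with hP
  refine ⟨fun n => if P n then ((e n).1 : ℝ) else 1, fun n => if P n then ((e n).2 : ℝ) else 2, ?_, ?_⟩
  · intro n
    by_cases c : P n
    · simp only [if_pos c]; exact c
    · simp only [if_neg c]
      have := Real.pi_gt_three
      exact ⟨by norm_num, by norm_num, by linarith⟩
  · intro a b ha hab hb
    obtain ⟨r, hr1, hr2⟩ := exists_rat_btwn hab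
    obtain ⟨s, hs1, hs2⟩ := exists_rat_btwn hr2
    obtain ⟨n, hn⟩ := he (r, s)
    have c : P n := by
      simp only [hP, hn]
      exact ⟨by linarith, hs1, by linarith⟩
    refine ⟨n, ?_⟩
    simp only [if_pos c, hn]
    exact ⟨hr1, hs2⟩

/-- The sequence of bumps. -/
structure BumpSeq (D : ℕ → ℝ) (G : ℕ → ℝ → ℝ) (x : ℕ → ℝ) (q : ℕ → ℕ) : Prop where
  q_ge : ∀ j, j ≤ q j
  x_pos : ∀ j, 0 < x j
  x_lt : ∀ j, x j + 4 * D (q j) < 2 * Real.pi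
  dense : ∀ a b : ℝ, 0 ≤ a → a < b → b ≤ 2 * Real.pi → ∃ n, a < x n ∧ x n + 4 * D (q n) < b
  const : ∀ i j, i < j → ∃ c, ∀ t ∈ Icc (x j) (x j + 4 * D (q j)),
    psi (G (q i)) (D (q i)) (t - x i) = c
  avoid1 : ∀ i j, i < j → x i ∉ Icc (x j) (x j + 4 * D (q j))
  avoid2 : ∀ i j, i < j → x i + D (q i) ∉ Icc (x j) (x j + 4 * D (q j))

theorem Setup.exists_bumpSeq {ω χinv : ℝ → ℝ} {A : ℝ} {D : ℕ → ℝ} {G : ℕ → ℝ → ℝ}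
    (h : Setup ω χinv A D G) : ∃ x q, BumpSeq D G x q := by
  obtain ⟨u, v, huv, hdense⟩ := exists_intervals
  obtain ⟨f, L, hf, hL⟩ := exists_hist _ (fun n l => h.select l (u n) (v n) (huv n).2.1 n)
  refine ⟨fun n => (f n).1, fun n => (f n).2, ?_, ?_, ?_, ?_, ?_, ?_, ?_⟩
  · exact fun j => (hf j).1
  · exact fun j => (huv j).1.trans (hf j).2.1
  · exact fun j => (hf j).2.2.1.trans (huv j).2.2
  · intro a b ha hab hb
    obtain ⟨n, h1, h2⟩ := hdense a b ha hab hb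
    exact ⟨n, h1.trans (hf n).2.1, (hf n).2.2.1.trans h2⟩
  · exact fun i j hij => ((hf j).2.2.2 _ (hL j i hij)).1
  · exact fun i j hij => ((hf j).2.2.2 _ (hL j i hij)).2.1
  · exact fun i j hij => ((hf j).2.2.2 _ (hL j i hij)).2.2


/-! ### Part 8: the diffeomorphism -/

/-- Reduction modulo the period. -/
noncomputable def redMod (t : ℝ) : ℝ := t - 2 * Real.pi * ⌊t / (2 * Real.pi)⌋

theorem redMod_mem (t : ℝ) : redMod t ∈ Ico 0 (2 * Real.pi) := by
  have hp := Real.two_pi_pos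
  have h1 := Int.floor_le (t / (2 * Real.pi))
  have h2 := Int.lt_floor_add_one (t / (2 * Real.pi))
  rw [le_div_iff₀ hp] at h1
  rw [div_lt_iff₀ hp] at h2
  unfold redMod
  constructor <;> linarith

theorem redMod_add (t : ℝ) : redMod (t + 2 * Real.pi) = redMod t := by
  have hp := Real.two_pi_pos
  unfold redMod
  rw [add_div, div_self hp.ne', Int.floor_add_one]
  push_cast; ring

theorem redMod_of_mem (t : ℝ) (ht : t ∈ Ico 0 (2 * Real.pi)) : redMod t = t := by
  have hp := Real.two_pi_pos
  have : ⌊t / (2 * Real.pi)⌋ = 0 := by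
    rw [Int.floor_eq_zero_iff]
    exact ⟨div_nonneg ht.1 hp.le, (div_lt_one hp).2 ht.2⟩
  unfold redMod
  rw [this]; simp

theorem periodize {ω χinv : ℝ → ℝ} (md : ModData ω χinv) (β Bs : ℝ → ℝ) (C : ℝ) (hC : 0 < C)
    (hmod : ∀ s t, |β s - β t| ≤ C * ω |s - t|) (hβ : ∀ t, |β t| ≤ 1 / 2)
    (h0 : β 0 = 0) (h2 : β (2 * Real.pi) = 0) (hB : ∀ t, HasDerivAt Bs (β t) t)
    (hB0 : Bs 0 = 0) (hB2 : Bs (2 * Real.pi) = 0) :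
    ∃ h : ℝ → ℝ, ContDiff ℝ 1 h ∧ (∀ t : ℝ, h (t + 2 * Real.pi) = h t + 2 * Real.pi) ∧
      StrictMono h ∧ (∀ t : ℝ, 0 < deriv h t) ∧
      (∃ C : ℝ, 0 < C ∧ ∀ s t : ℝ, |deriv h s - deriv h t| ≤ C * ω |s - t|) ∧
      (∀ t ∈ Icc 0 (2 * Real.pi), deriv h t = 1 + β t) ∧
      (∀ t ∈ Icc 0 (2 * Real.pi), h t = t + Bs t) := by
  have hp := Real.two_pi_pos
  set w : ℝ → ℝ := fun t => 1 + β (redMod t) with hw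
  have hwmod : ∀ s t, |w s - w t| ≤ 2 * C * ω |s - t| := by
    intro s t
    wlog hst : s ≤ t generalizing s t with H
    · have := H t s (by linarith)
      rwa [abs_sub_comm (w t), abs_sub_comm t] at this
    have hωn : 0 ≤ ω |s - t| := by
      rw [← md.zero]; exact md.mono (mem_Ici.2 le_rfl) (mem_Ici.2 (abs_nonneg (s - t))) (abs_nonneg (s - t))
    have e : w s - w t = β (redMod s) - β (redMod t) := by simp only [hw]; ring
    rw [e]
    have hs := redMod_mem s
    have ht := redMod_mem t
    have hfl : ⌊s / (2 * Real.pi)⌋ ≤ ⌊t / (2 * Real.pi)⌋ :=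
      Int.floor_le_floor (div_le_div_of_nonneg_right hst hp.le)
    rcases hfl.eq_or_lt with c | c
    · have := hmod (redMod s) (redMod t)
      have e2 : redMod s - redMod t = s - t := by unfold redMod; rw [c]; ring
      rw [e2] at this
      nlinarith [mul_nonneg hC.le hωn]
    · have c' : (⌊s / (2 * Real.pi)⌋ : ℝ) + 1 ≤ ⌊t / (2 * Real.pi)⌋ := by exact_mod_cast c
      have c2 := mul_le_mul_of_nonneg_left c' hp.le
      have a1 := hmod (redMod s) (2 * Real.pi)
      have a2 := hmod (redMod t) 0
      rw [h2, sub_zero, abs_sub_comm (redMod s), abs_of_pos (show 0 < 2 * Real.pi - redMod s by linarith [hs.2])] at a1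
      rw [h0, sub_zero, sub_zero, abs_of_nonneg ht.1] at a2
      have b1 : ω (2 * Real.pi - redMod s) ≤ ω |s - t| := by
        apply md.mono (mem_Ici.2 (by linarith [hs.2])) (mem_Ici.2 (abs_nonneg (s - t)))
        rw [abs_sub_comm, abs_of_nonneg (by linarith)]
        have := ht.1
        unfold redMod at this ⊢
        linarith
      have b2 : ω (redMod t) ≤ ω |s - t| := by
        apply md.mono (mem_Ici.2 ht.1) (mem_Ici.2 (abs_nonneg (s - t)))
        rw [abs_sub_comm, abs_of_nonneg (by linarith)]
        have := hs.2
        unfold redMod at this ⊢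
        linarith
      have := abs_sub (β (redMod s)) (β (redMod t))
      have d1 := mul_le_mul_of_nonneg_left b1 hC.le
      have d2 := mul_le_mul_of_nonneg_left b2 hC.le
      linarith
  have hwc : Continuous w := by
    rw [continuous_iff_continuousAt]
    intro t
    have hω0 : Filter.Tendsto (fun s => 2 * C * ω |s - t|) (nhds t) (nhds 0) := by
      have h1 : Filter.Tendsto (fun s : ℝ => |s - t|) (nhds t) (nhdsWithin 0 (Ici 0)) := by
        apply tendsto_nhdsWithin_of_tendsto_nhds_of_eventually_within
        · have : Continuous fun s : ℝ => |s - t| := by fun_prop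
          simpa using this.tendsto t
        · exact Filter.Eventually.of_forall fun s => mem_Ici.2 (abs_nonneg (s - t))
      have h3 := (md.cont 0 (mem_Ici.2 le_rfl)).tendsto.comp h1
      rw [md.zero] at h3
      simpa using h3.const_mul (2 * C)
    rw [ContinuousAt, tendsto_iff_dist_tendsto_zero]
    exact squeeze_zero (fun _ => dist_nonneg) (fun s => by rw [Real.dist_eq]; exact hwmod s t) hω0
  have hwpos : ∀ t, 0 < w t := fun t => by
    have := abs_le.1 (hβ (redMod t))
    simp only [hw]; linarith [this.1]
  have hwper : Function.Periodic w (2 * Real.pi) := fun t => by simp only [hw, redMod_add]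
  have hwIcc : ∀ t ∈ Icc 0 (2 * Real.pi), w t = 1 + β t := by
    intro t ht
    rcases ht.2.eq_or_lt with c | c
    · have := hwper 0
      rw [zero_add, ← c] at this
      rw [this, hw]
      simp only
      rw [redMod_of_mem 0 ⟨le_rfl, hp⟩, h0, c, h2]
    · simp only [hw]
      rw [redMod_of_mem t ⟨ht.1, c⟩]
  set h : ℝ → ℝ := fun t => ∫ x in (0:ℝ)..t, w x with hh
  have hder : ∀ t, HasDerivAt h (w t) t := fun t =>
    intervalIntegral.integral_hasDerivAt_right (hwc.intervalIntegrable _ _)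
      (hwc.stronglyMeasurableAtFilter _ _) hwc.continuousAt
  have hderiv : deriv h = w := funext fun t => (hder t).deriv
  have hβc : Continuous fun t => 1 + β t := by
    rw [continuous_iff_continuousAt]
    intro t
    have hω0 : Filter.Tendsto (fun s => C * ω |s - t|) (nhds t) (nhds 0) := by
      have h1 : Filter.Tendsto (fun s : ℝ => |s - t|) (nhds t) (nhdsWithin 0 (Ici 0)) := by
        apply tendsto_nhdsWithin_of_tendsto_nhds_of_eventually_within
        · have : Continuous fun s : ℝ => |s - t| := by fun_prop
          simpa using this.tendsto t
        · exact Filter.Eventually.of_forall fun s => mem_Ici.2 (abs_nonneg (s - t))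
      have h3 := (md.cont 0 (mem_Ici.2 le_rfl)).tendsto.comp h1
      rw [md.zero] at h3
      simpa using h3.const_mul C
    rw [ContinuousAt, tendsto_iff_dist_tendsto_zero]
    refine squeeze_zero (fun _ => dist_nonneg) (fun s => ?_) hω0
    rw [Real.dist_eq, add_sub_add_left_eq_sub]; exact hmod s t
  have hval : ∀ t ∈ Icc 0 (2 * Real.pi), h t = t + Bs t := by
    intro t ht
    have e1 : h t = ∫ x in (0:ℝ)..t, (1 + β x) := by
      simp only [hh]
      apply intervalIntegral.integral_congr
      intro x hx
      rw [uIcc_of_le ht.1] at hx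
      exact hwIcc x ⟨hx.1, hx.2.trans ht.2⟩
    rw [e1, intervalIntegral.integral_eq_sub_of_hasDerivAt (f := fun t => t + Bs t)
      (fun x _ => (hasDerivAt_id x).fun_add (hB x)) (hβc.intervalIntegrable _ _)]
    rw [hB0]; ring
  refine ⟨h, ?_, ?_, ?_, ?_, ?_, ?_, hval⟩
  · rw [contDiff_one_iff_deriv]
    exact ⟨fun t => (hder t).differentiableAt, by rw [hderiv]; exact hwc⟩
  · intro t
    have e1 := hwper.intervalIntegral_add_eq t 0
    have e2 := hval (2 * Real.pi) ⟨hp.le, le_rfl⟩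
    rw [hB2, add_zero] at e2
    rw [zero_add] at e1
    have e3 := intervalIntegral.integral_add_adjacent_intervals (μ := volume)
      (hwc.intervalIntegrable 0 t) (hwc.intervalIntegrable t (t + 2 * Real.pi))
    simp only [hh] at e2 ⊢
    rw [← e3, e1, e2]
  · exact strictMono_of_deriv_pos fun t => by rw [hderiv]; exact hwpos t
  · intro t; rw [hderiv]; exact hwpos t
  · exact ⟨2 * C, by positivity, fun s t => by rw [hderiv]; exact hwmod s t⟩
  · intro t ht; rw [hderiv]; exact hwIcc t ht

/-- Derivative of the j-th bump. -/
noncomputable def bD (D : ℕ → ℝ) (G : ℕ → ℝ → ℝ) (x : ℕ → ℝ) (q : ℕ → ℕ) (j : ℕ) (t : ℝ) : ℝ :=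
  (1 / 2) ^ ampExp (q j) * psi (G (q j)) (D (q j)) (t - x j)

/-- The j-th bump. -/
noncomputable def bI (D : ℕ → ℝ) (G : ℕ → ℝ → ℝ) (x : ℕ → ℝ) (q : ℕ → ℕ) (j : ℕ) (t : ℝ) : ℝ :=
  (1 / 2) ^ ampExp (q j) * bumpInt (G (q j)) (D (q j)) (t - x j)

namespace BumpSeq

variable {ω χinv : ℝ → ℝ} {A : ℝ} {D : ℕ → ℝ} {G : ℕ → ℝ → ℝ} {x : ℕ → ℝ} {q : ℕ → ℕ}

theorem bI_deriv (h : Setup ω χinv A D G) (j : ℕ) (t : ℝ) :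
    HasDerivAt (bI D G x q j) (bD D G x q j t) t := by
  have h1 := ((h.ramp (q j)).bumpInt_deriv (t - x j)).comp_sub_const t (x j)
  exact h1.const_mul _

theorem bD_cont (h : Setup ω χinv A D G) (j : ℕ) : Continuous (bD D G x q j) := by
  have := (h.ramp (q j)).psi_cont
  unfold bD
  fun_prop

theorem bI_cont (h : Setup ω χinv A D G) (j : ℕ) : Continuous (bI D G x q j) := by
  have := (h.ramp (q j)).bumpInt_cont
  unfold bI
  fun_prop

theorem amp_le' (b : BumpSeq D G x q) (j : ℕ) :
    (1 / 2 : ℝ) ^ ampExp (q j) ≤ 1 / 4 * (1 / 2) ^ j := by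
  have e : (1 / 4 : ℝ) * (1 / 2) ^ j = (1 / 2) ^ (j + 2) := by ring
  rw [e]
  apply pow_le_pow_of_le_one (by norm_num) (by norm_num)
  have := b.q_ge j
  have : 1 ≤ 2 ^ q j := Nat.one_le_two_pow
  unfold ampExp
  generalize 2 ^ q j = z at *
  omega

theorem bD_le (h : Setup ω χinv A D G) (b : BumpSeq D G x q) (j : ℕ) (t : ℝ) :
    |bD D G x q j t| ≤ 1 / 4 * (1 / 2) ^ j := by
  unfold bD
  rw [abs_mul, abs_of_pos (by positivity)]
  exact (mul_le_of_le_one_right (by positivity) ((h.ramp (q j)).psi_abs_le _)).trans (b.amp_le' j)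

theorem bD_mod (h : Setup ω χinv A D G) (b : BumpSeq D G x q) (j : ℕ) (s t : ℝ) :
    |bD D G x q j s - bD D G x q j t| ≤ 16 / A * ω |s - t| * (1 / 2) ^ j := by
  have hA := h.A_pos
  have hωn : 0 ≤ ω |s - t| := by
    rw [← h.md.zero]; exact h.md.mono (mem_Ici.2 le_rfl) (mem_Ici.2 (abs_nonneg (s - t))) (abs_nonneg (s - t))
  unfold bD
  rw [← mul_sub, abs_mul, abs_of_pos (by positivity)]
  have h1 := h.psi_mod (q j) (s - x j) (t - x j)
  rw [sub_sub_sub_cancel_right] at h1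
  have h2 : (1 / 2 : ℝ) ^ ampExp (q j) * 2 ^ q j ≤ (1 / 2) ^ j := by
    have e : (1 / 2 : ℝ) ^ ampExp (q j) * 2 ^ q j = (1 / 2) ^ (2 ^ q j + 1) := by
      have e1 : (1 / 2 : ℝ) ^ q j * 2 ^ q j = 1 := by rw [← mul_pow]; norm_num
      unfold ampExp
      rw [pow_succ, pow_add]
      calc _ = (1 / 2 : ℝ) ^ 2 ^ q j * (1 / 2) * ((1 / 2 : ℝ) ^ q j * 2 ^ q j) := by ring
        _ = _ := by rw [e1, mul_one, pow_succ]
    rw [e]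
    apply pow_le_pow_of_le_one (by norm_num) (by norm_num)
    have := b.q_ge j
    have := (Nat.lt_two_pow_self (n := q j)).le
    omega
  calc _ ≤ (1 / 2 : ℝ) ^ ampExp (q j) * (16 / A * 2 ^ q j * ω |s - t|) := by gcongr
    _ = 16 / A * ω |s - t| * ((1 / 2 : ℝ) ^ ampExp (q j) * 2 ^ q j) := by ring
    _ ≤ _ := by gcongr

theorem bD_sum (h : Setup ω χinv A D G) (b : BumpSeq D G x q) (t : ℝ) :
    Summable fun j => bD D G x q j t :=
  Summable.of_norm_bounded (summable_geometric_two.mul_left (1 / 4)) fun j => by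
    rw [Real.norm_eq_abs]; exact b.bD_le h j t

theorem bI_zero (h : Setup ω χinv A D G) (b : BumpSeq D G x q) (j : ℕ) (t : ℝ) (ht : t ≤ x j) :
    bI D G x q j t = 0 := by
  unfold bI
  rw [(h.ramp (q j)).bumpInt_left _ (by linarith), mul_zero]

theorem bI_end (h : Setup ω χinv A D G) (j : ℕ) (t : ℝ)
    (ht : x j + 4 * D (q j) ≤ t) : bI D G x q j t = 0 := by
  unfold bI
  rw [(h.ramp (q j)).bumpInt_right _ (by linarith), mul_zero]

theorem bD_zero (h : Setup ω χinv A D G) (j : ℕ) (t : ℝ) (ht : t ≤ x j) :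
    bD D G x q j t = 0 := by
  unfold bD
  rw [(h.ramp (q j)).psi_left _ (by linarith), mul_zero]

theorem bD_end (h : Setup ω χinv A D G) (j : ℕ) (t : ℝ)
    (ht : x j + 4 * D (q j) ≤ t) : bD D G x q j t = 0 := by
  unfold bD
  rw [(h.ramp (q j)).psi_right _ (by linarith), mul_zero]

theorem bD_out (h : Setup ω χinv A D G) (j : ℕ) (t : ℝ)
    (ht : t ∉ Icc (x j) (x j + 4 * D (q j))) : bD D G x q j t = 0 := by
  by_cases c : t ≤ x j
  · exact bD_zero h j t c
  · apply bD_end h j t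
    by_contra hcon
    push Not at hcon c
    exact ht ⟨c.le, hcon.le⟩

theorem bI_sum (h : Setup ω χinv A D G) (b : BumpSeq D G x q) (t : ℝ) :
    Summable fun j => bI D G x q j t :=
  summable_of_summable_hasDerivAt (summable_geometric_two.mul_left (1 / 4))
    (fun j t => bI_deriv h j t) (fun j t => by rw [Real.norm_eq_abs]; exact b.bD_le h j t)
    (y₀ := 0) (by
      have : (fun j => bI D G x q j 0) = fun _ => 0 := funext fun j =>
        b.bI_zero h j 0 (b.x_pos j).le
      rw [this]; exact summable_zero) t

theorem exists_diffeo (h : Setup ω χinv A D G) (b : BumpSeq D G x q) :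
    ∃ f : ℝ → ℝ, ContDiff ℝ 1 f ∧ (∀ t : ℝ, f (t + 2 * Real.pi) = f t + 2 * Real.pi) ∧
      StrictMono f ∧ (∀ t : ℝ, 0 < deriv f t) ∧
      (∃ C : ℝ, 0 < C ∧ ∀ s t : ℝ, |deriv f s - deriv f t| ≤ C * ω |s - t|) ∧
      (∀ t ∈ Icc 0 (2 * Real.pi), deriv f t = 1 + ∑' j, bD D G x q j t) ∧
      (∀ t ∈ Icc 0 (2 * Real.pi), f t = t + ∑' j, bI D G x q j t) := by
  have hA := h.A_pos
  have hgeo : ∑' j : ℕ, ((1:ℝ) / 2) ^ j = 2 := tsum_geometric_two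
  apply periodize h.md (fun t => ∑' j, bD D G x q j t) (fun t => ∑' j, bI D G x q j t)
    (16 / A * 2) (by positivity)
  · intro s t
    rw [← (b.bD_sum h s).tsum_sub (b.bD_sum h t)]
    have := tsum_of_norm_bounded (summable_geometric_two.mul_left (16 / A * ω |s - t|)).hasSum
      (fun j => by rw [Real.norm_eq_abs]; exact b.bD_mod h j s t)
    rw [tsum_mul_left, hgeo, Real.norm_eq_abs] at this
    linarith
  · intro t
    have := tsum_of_norm_bounded (summable_geometric_two.mul_left (1 / 4 : ℝ)).hasSum
      (fun j => by rw [Real.norm_eq_abs]; exact b.bD_le h j t)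
    rw [tsum_mul_left, hgeo, Real.norm_eq_abs] at this
    linarith
  · rw [tsum_congr fun j => bD_zero h j 0 (b.x_pos j).le, tsum_zero]
  · rw [tsum_congr fun j => bD_end h j _ (b.x_lt j).le, tsum_zero]
  · intro t
    exact hasDerivAt_tsum (summable_geometric_two.mul_left (1 / 4))
      (fun j t => bI_deriv h j t) (fun j t => by rw [Real.norm_eq_abs]; exact b.bD_le h j t)
      (b.bI_sum h 0) t
  · rw [tsum_congr fun j => b.bI_zero h j 0 (b.x_pos j).le, tsum_zero]
  · rw [tsum_congr fun j => bI_end h j _ (b.x_lt j).le, tsum_zero]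

theorem jump (h : Setup ω χinv A D G) (b : BumpSeq D G x q) (n : ℕ) :
    ∑' j, bD D G x q j (x n + D (q n)) ≠ ∑' j, bD D G x q j (x n) := by
  have hD := h.D_pos (q n)
  intro heq
  rw [← sub_eq_zero, ← (b.bD_sum h _).tsum_sub (b.bD_sum h _), tsum_eq_single n] at heq
  · unfold bD at heq
    rw [add_sub_cancel_left, sub_self, (h.ramp (q n)).psi_at, (h.ramp (q n)).psi_left 0 le_rfl] at heq
    have : (0:ℝ) < (1 / 2) ^ ampExp (q n) := by positivity
    linarith
  · intro i hi
    rcases lt_or_gt_of_ne hi with c | c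
    · obtain ⟨v, hv⟩ := b.const i n c
      unfold bD
      rw [hv _ ⟨by linarith, by linarith⟩, hv _ ⟨by linarith, by linarith⟩, sub_self]
    · rw [bD_out h i _ (b.avoid2 n i c), bD_out h i _ (b.avoid1 n i c), sub_self]

theorem not_linear (h : Setup ω χinv A D G) (b : BumpSeq D G x q) (f : ℝ → ℝ)
    (hper : ∀ t : ℝ, f (t + 2 * Real.pi) = f t + 2 * Real.pi)
    (hf : ∀ t ∈ Icc 0 (2 * Real.pi), deriv f t = 1 + ∑' j, bD D G x q j t)
    (u v : ℝ) (huv : u < v) : ¬ ∃ a c : ℝ, ∀ t ∈ Ioo u v, f t = a * t + c := by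
  rintro ⟨a, c, hlin⟩
  have hp := Real.two_pi_pos
  have hnat : ∀ (m : ℕ) t, f (t + 2 * Real.pi * m) = f t + 2 * Real.pi * m := by
    intro m
    induction m with
    | zero => intro t; simp
    | succ m ih =>
      intro t
      have e : t + 2 * Real.pi * (m + 1 : ℕ) = (t + 2 * Real.pi * m) + 2 * Real.pi := by
        push_cast; ring
      rw [e, hper, ih]; push_cast; ring
  have hIntg : ∀ (m : ℤ) t, f (t + 2 * Real.pi * m) = f t + 2 * Real.pi * m := by
    intro m t
    rcases Int.eq_nat_or_neg m with ⟨k, rfl | rfl⟩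
    · exact_mod_cast hnat k t
    · have := hnat k (t + 2 * Real.pi * ((-(k:ℤ) : ℤ) : ℝ))
      push_cast at this ⊢
      rw [show t + 2 * Real.pi * -(k:ℝ) + 2 * Real.pi * k = t by ring] at this
      linarith
  set m := ⌊u / (2 * Real.pi)⌋ with hm
  have hu := redMod_mem u
  have eu : redMod u = u - 2 * Real.pi * m := rfl
  rw [eu] at hu
  obtain ⟨n, hn1, hn2⟩ := b.dense (u - 2 * Real.pi * m) (min (v - 2 * Real.pi * m) (2 * Real.pi)) hu.1
    (lt_min (by linarith) hu.2) (min_le_right _ _)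
  have hn3 := hn2.trans_le (min_le_left _ _)
  have hD := h.D_pos (q n)
  have hder : ∀ t ∈ Icc (x n) (x n + 4 * D (q n)), deriv f t = a := by
    intro t ht
    have hev : f =ᶠ[nhds t] fun t => a * (t + 2 * Real.pi * m) + c - 2 * Real.pi * m := by
      have hmem : Ioo (u - 2 * Real.pi * m) (v - 2 * Real.pi * m) ∈ nhds t :=
        Ioo_mem_nhds (by linarith [ht.1]) (by linarith [ht.2])
      filter_upwards [hmem] with s hs
      have := hlin (s + 2 * Real.pi * m) ⟨by linarith [hs.1], by linarith [hs.2]⟩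
      rw [hIntg] at this
      linarith
    rw [hev.deriv_eq]
    have hd : HasDerivAt (fun t => a * (t + 2 * Real.pi * m) + c - 2 * Real.pi * m) (a * 1) t :=
      ((((hasDerivAt_id t).add_const _).const_mul a).add_const c).sub_const _
    rw [hd.deriv, mul_one]
  have hx0 := b.x_pos n
  have hx2 := b.x_lt n
  have d1 := hder (x n) ⟨le_rfl, by linarith⟩
  have d2 := hder (x n + D (q n)) ⟨by linarith, by linarith⟩
  rw [hf _ ⟨by linarith, by linarith⟩] at d1
  rw [hf _ ⟨by linarith, by linarith⟩] at d2
  exact b.jump h n (by linarith)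

end BumpSeq


/-! ### Part 9: Fourier assembly -/

theorem ap_abstract (c : ℕ → ℤ → ℂ) (cl : ℤ → ℂ) (p K ρ : ℝ) (hp : 1 ≤ p) (hK : 0 ≤ K)
    (hρ0 : 0 ≤ ρ) (hρ1 : ρ < 1) (h0 : ∀ F : Finset ℤ, ∑ k ∈ F, ‖c 0 k‖ ^ p ≤ 1)
    (hstep : ∀ (N : ℕ) (F : Finset ℤ), ∑ k ∈ F, ‖c (N + 1) k - c N k‖ ^ p ≤ (K * ρ ^ N) ^ p)
    (hlim : ∀ k, Filter.Tendsto (fun N => c N k) Filter.atTop (nhds (cl k))) :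
    (∑' k : ℤ, ((‖cl k‖₊ : ℝ≥0∞) ^ p)) ^ (1 / p) ≤ ENNReal.ofReal (1 + K / (1 - ρ)) := by
  have hp0 : 0 < p := by linarith
  have hp1 : 0 ≤ 1 / p := by positivity
  have hB : 0 ≤ 1 + K / (1 - ρ) := by
    have : 0 ≤ K / (1 - ρ) := div_nonneg hK (by linarith)
    linarith
  have key : ∀ (F : Finset ℤ) (N : ℕ),
      (∑ k ∈ F, ‖c N k‖ ^ p) ^ (1 / p) ≤ 1 + K * ∑ i ∈ Finset.range N, ρ ^ i := by
    intro F N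
    induction N with
    | zero =>
      simp only [Finset.range_zero, Finset.sum_empty, mul_zero, add_zero]
      exact Real.rpow_le_one (Finset.sum_nonneg fun k _ => by positivity) (h0 F) hp1
    | succ N ih =>
      have h1 : (∑ k ∈ F, ‖c (N + 1) k‖ ^ p) ^ (1 / p) ≤
          (∑ k ∈ F, (‖c N k‖ + ‖c (N + 1) k - c N k‖) ^ p) ^ (1 / p) := by
        apply Real.rpow_le_rpow (Finset.sum_nonneg fun k _ => by positivity) _ hp1
        apply Finset.sum_le_sum
        intro k _
        apply Real.rpow_le_rpow (norm_nonneg _) _ hp0.le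
        have := norm_add_le (c N k) (c (N + 1) k - c N k)
        rwa [add_sub_cancel] at this
      have h2 := Real.Lp_add_le_of_nonneg F hp (f := fun k => ‖c N k‖)
        (g := fun k => ‖c (N + 1) k - c N k‖) (fun k _ => norm_nonneg _) (fun k _ => norm_nonneg _)
      have h3 : (∑ k ∈ F, ‖c (N + 1) k - c N k‖ ^ p) ^ (1 / p) ≤ K * ρ ^ N := by
        have := Real.rpow_le_rpow (Finset.sum_nonneg fun k _ => by positivity) (hstep N F) hp1
        rwa [← Real.rpow_mul (by positivity), mul_one_div_cancel hp0.ne', Real.rpow_one] at this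
      rw [Finset.sum_range_succ, mul_add]
      linarith
  have key2 : ∀ (F : Finset ℤ) (N : ℕ), ∑ k ∈ F, ‖c N k‖ ^ p ≤ (1 + K / (1 - ρ)) ^ p := by
    intro F N
    have h1 : ∑ i ∈ Finset.range N, ρ ^ i ≤ (1 - ρ)⁻¹ := by
      rw [← tsum_geometric_of_lt_one hρ0 hρ1]
      exact (summable_geometric_of_lt_one hρ0 hρ1).sum_le_tsum _ (fun i _ => by positivity)
    have h2 : (∑ k ∈ F, ‖c N k‖ ^ p) ^ (1 / p) ≤ 1 + K / (1 - ρ) := by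
      rw [div_eq_mul_inv K]
      have := mul_le_mul_of_nonneg_left h1 hK
      linarith [key F N]
    have hs : 0 ≤ ∑ k ∈ F, ‖c N k‖ ^ p := Finset.sum_nonneg fun k _ => by positivity
    have := Real.rpow_le_rpow (by positivity) h2 hp0.le
    rwa [← Real.rpow_mul hs, one_div_mul_cancel hp0.ne', Real.rpow_one] at this
  have key3 : ∀ F : Finset ℤ, ∑ k ∈ F, ‖cl k‖ ^ p ≤ (1 + K / (1 - ρ)) ^ p := by
    intro F
    apply le_of_tendsto' (f := fun N => ∑ k ∈ F, ‖c N k‖ ^ p) (x := Filter.atTop) _ (key2 F)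
    apply tendsto_finsetSum
    intro k _
    exact ((hlim k).norm).rpow_const (Or.inr hp0.le)
  have key4 : ∑' k : ℤ, ((‖cl k‖₊ : ℝ≥0∞) ^ p) ≤ ENNReal.ofReal (1 + K / (1 - ρ)) ^ p := by
    rw [ENNReal.tsum_eq_iSup_sum]
    apply iSup_le
    intro F
    rw [ENNReal.ofReal_rpow_of_nonneg hB hp0.le]
    refine le_trans (le_of_eq ?_) (ENNReal.ofReal_le_ofReal (key3 F))
    rw [ENNReal.ofReal_sum_of_nonneg fun k _ => by positivity]
    apply Finset.sum_congr rfl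
    intro k _
    rw [← ENNReal.ofReal_rpow_of_nonneg (norm_nonneg _) hp0.le, ofReal_norm]
    rfl
  have := ENNReal.rpow_le_rpow key4 hp1
  rwa [← ENNReal.rpow_mul, mul_one_div_cancel hp0.ne', ENNReal.rpow_one] at this

/-- Partial sums of the construction. -/
noncomputable def hN (D : ℕ → ℝ) (G : ℕ → ℝ → ℝ) (x : ℕ → ℝ) (q : ℕ → ℕ) (N : ℕ) (t : ℝ) : ℝ :=
  t + ∑ j ∈ Finset.range N, bI D G x q j t

namespace BumpSeq

variable {ω χinv : ℝ → ℝ} {A : ℝ} {D : ℕ → ℝ} {G : ℕ → ℝ → ℝ} {x : ℕ → ℝ} {q : ℕ → ℕ}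

theorem hN_cont (h : Setup ω χinv A D G) (N : ℕ) : Continuous (hN D G x q N) := by
  have := fun j => bI_cont (x := x) (q := q) h j
  unfold hN
  fun_prop

theorem hN_affine (h : Setup ω χinv A D G) (b : BumpSeq D G x q) (N : ℕ) :
    ∃ γ α : ℝ, ∀ s ∈ Icc 0 (4 * D (q N)), hN D G x q N (s + x N) = γ + α * s := by
  have hsum : ∀ M, M ≤ N → ∃ γ α : ℝ, ∀ s ∈ Icc 0 (4 * D (q N)),
      hN D G x q M (s + x N) = γ + α * s := by
    intro M
    induction M with
    | zero =>
      intro _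
      exact ⟨x N, 1, fun s _ => by simp [hN]; ring⟩
    | succ M ih =>
      intro hM
      obtain ⟨γ, α, hγ⟩ := ih (by omega)
      obtain ⟨v, hv⟩ := b.const M N (by omega)
      have hc : ∀ s ∈ Icc 0 (4 * D (q N)), bD D G x q M (s + x N) = (1 / 2) ^ ampExp (q M) * v := by
        intro s hs
        unfold bD
        rw [hv _ ⟨by linarith [hs.1], by linarith [hs.2]⟩]
      refine ⟨γ + bI D G x q M (x N), α + (1 / 2) ^ ampExp (q M) * v, fun s hs => ?_⟩
      have e : hN D G x q (M + 1) (s + x N) = hN D G x q M (s + x N) + bI D G x q M (s + x N) := by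
        unfold hN; rw [Finset.sum_range_succ]; ring
      have hI : bI D G x q M (s + x N) - bI D G x q M (0 + x N) =
          ∫ _u in (0:ℝ)..s, (1 / 2 : ℝ) ^ ampExp (q M) * v := by
        have hcont : Continuous fun u => bD D G x q M (u + x N) := by
          have := bD_cont (x := x) (q := q) h M
          fun_prop
        rw [← intervalIntegral.integral_eq_sub_of_hasDerivAt (f := fun u => bI D G x q M (u + x N))
          (f' := fun u => bD D G x q M (u + x N))
          (fun u _ => (bI_deriv h M (u + x N)).comp_add_const u (x N)) (hcont.intervalIntegrable _ _)]
        apply intervalIntegral.integral_congr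
        intro u hu
        rw [uIcc_of_le hs.1] at hu
        exact hc u ⟨hu.1, hu.2.trans hs.2⟩
      rw [intervalIntegral.integral_const, zero_add, smul_eq_mul, sub_zero] at hI
      rw [e, hγ s hs]
      linarith
  exact hsum N le_rfl

theorem coef_step (h : Setup ω χinv A D G) (b : BumpSeq D G x q) (n : ℤ) (N : ℕ) :
    ∃ η : ℝ, ∀ k : ℤ,
    ‖fourierCoef (fun t => Complex.exp (Complex.I * (n : ℂ) * (hN D G x q (N + 1) t : ℂ))) k -
      fourierCoef (fun t => Complex.exp (Complex.I * (n : ℂ) * (hN D G x q N t : ℂ))) k‖ ≤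
    ‖bumpV (G (q N)) (D (q N)) (n * (1 / 2) ^ ampExp (q N)) (η - k)‖ := by
  obtain ⟨γ, α, hγ⟩ := b.hN_affine h N
  refine ⟨n * α, fun k => ?_⟩
  have hD := h.D_pos (q N)
  have hx0 := b.x_pos N
  have hx2 := b.x_lt N
  have hc1 := hN_cont (x := x) (q := q) h N
  have hc2 := hN_cont (x := x) (q := q) h (N + 1)
  have hcb := bI_cont (x := x) (q := q) h N
  set g : ℝ → ℂ := fun t => Complex.exp (Complex.I * (n : ℂ) * (hN D G x q N t : ℂ)) *
    (Complex.exp (Complex.I * (n : ℂ) * (bI D G x q N t : ℂ)) - 1) *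
      Complex.exp (-Complex.I * (k : ℂ) * (t : ℂ)) with hg
  have hgc : Continuous g := by fun_prop
  have e1 : fourierCoef (fun t => Complex.exp (Complex.I * (n : ℂ) * (hN D G x q (N + 1) t : ℂ))) k -
      fourierCoef (fun t => Complex.exp (Complex.I * (n : ℂ) * (hN D G x q N t : ℂ))) k =
      (1 / (2 * (Real.pi : ℂ))) * ∫ t in (0:ℝ)..(2 * Real.pi), g t := by
    unfold fourierCoef
    rw [← mul_sub, ← intervalIntegral.integral_sub
      (Continuous.intervalIntegrable (by fun_prop) _ _) (Continuous.intervalIntegrable (by fun_prop) _ _)]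
    congr 2
    funext t
    have e : hN D G x q (N + 1) t = hN D G x q N t + bI D G x q N t := by
      unfold hN; rw [Finset.sum_range_succ]; ring
    simp only [hg]
    rw [e, Complex.ofReal_add, mul_add, Complex.exp_add]
    ring
  have z1 : ∫ t in (0:ℝ)..(x N), g t = 0 := by
    rw [intervalIntegral.integral_congr (g := fun _ => (0:ℂ)), intervalIntegral.integral_zero]
    intro t ht
    rw [uIcc_of_le hx0.le] at ht
    simp only [hg]
    rw [b.bI_zero h N t ht.2]; simp
  have z2 : ∫ t in (x N + 4 * D (q N))..(2 * Real.pi), g t = 0 := by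
    rw [intervalIntegral.integral_congr (g := fun _ => (0:ℂ)), intervalIntegral.integral_zero]
    intro t ht
    rw [uIcc_of_le hx2.le] at ht
    simp only [hg]
    rw [bI_end h N t ht.1]; simp
  have e2 : ∫ t in (0:ℝ)..(2 * Real.pi), g t = ∫ t in (x N)..(x N + 4 * D (q N)), g t := by
    rw [← intervalIntegral.integral_add_adjacent_intervals (hgc.intervalIntegrable 0 (x N))
      (hgc.intervalIntegrable (x N) _),
      ← intervalIntegral.integral_add_adjacent_intervals
      (hgc.intervalIntegrable (x N) (x N + 4 * D (q N))) (hgc.intervalIntegrable _ (2 * Real.pi)),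
      z1, z2]
    ring
  have e3 : ∫ t in (x N)..(x N + 4 * D (q N)), g t = ∫ s in (0:ℝ)..(4 * D (q N)), g (s + x N) := by
    rw [intervalIntegral.integral_comp_add_right, zero_add, add_comm (x N)]
  have e4 : ∫ s in (0:ℝ)..(4 * D (q N)), g (s + x N) =
      Complex.exp (((n * γ - k * x N : ℝ) : ℂ) * Complex.I) *
        bumpV (G (q N)) (D (q N)) (n * (1 / 2) ^ ampExp (q N)) (n * α - k) := by
    unfold bumpV
    rw [← intervalIntegral.integral_const_mul]
    apply intervalIntegral.integral_congr
    intro s hs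
    rw [uIcc_of_le (by linarith)] at hs
    simp only [hg]
    rw [hγ s hs]
    have e5 : Complex.I * (n : ℂ) * (bI D G x q N (s + x N) : ℂ) = Complex.I *
        ((n * (1 / 2) ^ ampExp (q N) * bumpInt (G (q N)) (D (q N)) s : ℝ) : ℂ) := by
      unfold bI
      rw [add_sub_cancel_right]
      push_cast; ring
    rw [e5]
    have e6 : Complex.exp (Complex.I * (n : ℂ) * ((γ + α * s : ℝ) : ℂ)) *
        Complex.exp (-Complex.I * (k : ℂ) * ((s + x N : ℝ) : ℂ)) =
        Complex.exp (((n * γ - k * x N : ℝ) : ℂ) * Complex.I) *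
        Complex.exp (Complex.I * (((n * α - k) * s : ℝ) : ℂ)) := by
      rw [← Complex.exp_add, ← Complex.exp_add]
      congr 1
      push_cast; ring
    linear_combination (Complex.exp (Complex.I *
        ((n * (1 / 2) ^ ampExp (q N) * bumpInt (G (q N)) (D (q N)) s : ℝ) : ℂ)) - 1) * e6
  rw [e1, e2, e3, e4, norm_mul, norm_mul, Complex.norm_exp_ofReal_mul_I, one_mul]
  apply mul_le_of_le_one_left (norm_nonneg _)
  rw [norm_div, norm_mul, norm_one, Complex.norm_real, Complex.norm_ofNat, Real.norm_eq_abs,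
    abs_of_pos Real.pi_pos, div_le_one Real.two_pi_pos]
  linarith [Real.pi_gt_three]

theorem coef_zero (n : ℤ) (p : ℝ) (hp : 1 ≤ p) (F : Finset ℤ) :
    ∑ k ∈ F, ‖fourierCoef (fun t => Complex.exp (Complex.I * (n : ℂ) * (hN D G x q 0 t : ℂ))) k‖ ^ p
      ≤ 1 := by
  have hpi : (Real.pi : ℂ) ≠ 0 := by exact_mod_cast Real.pi_ne_zero
  have hv : ∀ k : ℤ, fourierCoef (fun t => Complex.exp (Complex.I * (n : ℂ) * (hN D G x q 0 t : ℂ))) k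
      = if k = n then 1 else 0 := by
    intro k
    unfold fourierCoef
    have e : ∀ t : ℝ, Complex.exp (Complex.I * (n : ℂ) * (hN D G x q 0 t : ℂ)) *
        Complex.exp (-Complex.I * (k : ℂ) * (t : ℂ)) =
        Complex.exp ((Complex.I * ((n - k : ℤ) : ℂ)) * (t : ℂ)) := by
      intro t
      rw [← Complex.exp_add]
      congr 1
      simp [hN]; ring
    simp only [e]
    split_ifs with hk
    · subst hk
      simp
      field_simp
    · have hne : Complex.I * ((n - k : ℤ) : ℂ) ≠ 0 := by
        apply mul_ne_zero Complex.I_ne_zero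
        exact_mod_cast sub_ne_zero.2 (Ne.symm hk)
      rw [integral_exp_mul_complex hne]
      have : Complex.exp (Complex.I * ((n - k : ℤ) : ℂ) * ((2 * Real.pi : ℝ) : ℂ)) = 1 := by
        rw [Complex.exp_eq_one_iff]
        exact ⟨n - k, by push_cast; ring⟩
      rw [this]; simp
  calc _ = ∑ k ∈ F, (if k = n then (1:ℝ) else 0) := by
        apply Finset.sum_congr rfl
        intro k _
        rw [hv]
        split_ifs
        · simp
        · rw [norm_zero, Real.zero_rpow (by linarith)]
    _ ≤ 1 := by
        rw [Finset.sum_ite_eq']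
        split_ifs <;> norm_num

theorem coef_lim (h : Setup ω χinv A D G) (b : BumpSeq D G x q) (f : ℝ → ℝ)
    (hf : ∀ t ∈ Icc 0 (2 * Real.pi), f t = t + ∑' j, bI D G x q j t) (n k : ℤ) :
    Filter.Tendsto (fun N => fourierCoef
      (fun t => Complex.exp (Complex.I * (n : ℂ) * (hN D G x q N t : ℂ))) k) Filter.atTop
      (nhds (fourierCoef (fun t => Complex.exp (Complex.I * (n : ℂ) * (f t : ℂ))) k)) := by
  unfold fourierCoef
  apply Filter.Tendsto.const_mul
  apply intervalIntegral.tendsto_integral_filter_of_dominated_convergence (fun _ => (1:ℝ))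
  · refine Filter.Eventually.of_forall fun N => ?_
    have := hN_cont (x := x) (q := q) h N
    apply Continuous.aestronglyMeasurable
    fun_prop
  · refine Filter.Eventually.of_forall fun N => Filter.Eventually.of_forall fun t _ => ?_
    have e1 : Complex.I * (n : ℂ) * (hN D G x q N t : ℂ) =
      ((n * hN D G x q N t : ℝ) : ℂ) * Complex.I := by push_cast; ring
    have e2 : -Complex.I * (k : ℂ) * (t : ℂ) = ((-k * t : ℝ) : ℂ) * Complex.I := by push_cast; ring
    rw [norm_mul]
    beta_reduce
    rw [e1, e2, Complex.norm_exp_ofReal_mul_I, Complex.norm_exp_ofReal_mul_I, one_mul]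
  · exact intervalIntegrable_const
  · refine Filter.Eventually.of_forall fun t ht => ?_
    rw [uIoc_of_le Real.two_pi_pos.le] at ht
    have h1 : Filter.Tendsto (fun N => hN D G x q N t) Filter.atTop (nhds (f t)) := by
      rw [hf t ⟨ht.1.le, ht.2⟩]
      exact (b.bI_sum h t).hasSum.tendsto_sum_nat.const_add t
    have hc : Continuous fun y : ℝ => Complex.exp (Complex.I * (n : ℂ) * (y : ℂ)) *
        Complex.exp (-Complex.I * (k : ℂ) * (t : ℂ)) := by fun_prop
    exact (hc.tendsto (f t)).comp h1

theorem abs_kappa (n : ℤ) (m : ℕ) : |(n : ℝ) * (1 / 2) ^ m| = |(n : ℝ)| * (1 / 2) ^ m := by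
  rw [abs_mul, abs_of_pos (show (0:ℝ) < (1 / 2) ^ m by positivity)]

theorem bound_one (h : Setup ω χinv A D G) (b : BumpSeq D G x q) (f : ℝ → ℝ)
    (hf : ∀ t ∈ Icc 0 (2 * Real.pi), f t = t + ∑' j, bI D G x q j t) :
    ∃ C : ℝ, 0 < C ∧ ∀ n : ℤ, 2 ≤ |(n : ℝ)| →
      ApNorm 1 (fun t => Complex.exp (Complex.I * (n : ℂ) * (f t : ℂ))) ≤
        ENNReal.ofReal (C * ModData.thetaOne χinv |(n : ℝ)|) := by
  obtain ⟨C, hC, hCb⟩ := h.bump_one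
  obtain ⟨C', hC', hCl⟩ := h.md.log_le_thetaOne
  refine ⟨2 * C' + 2 * C, by positivity, fun n hn => ?_⟩
  have hT := h.md.thetaOne_pos hn
  set T := ModData.thetaOne χinv |(n : ℝ)| with hTdef
  have := ap_abstract (fun N k => fourierCoef
      (fun t => Complex.exp (Complex.I * (n : ℂ) * (hN D G x q N t : ℂ))) k)
    (fun k => fourierCoef (fun t => Complex.exp (Complex.I * (n : ℂ) * (f t : ℂ))) k) 1 (C * T) (1 / 2)
    le_rfl (by positivity) (by norm_num) (by norm_num) (coef_zero n 1 le_rfl)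
    (fun N F => by
      obtain ⟨η, hη⟩ := b.coef_step h n N
      have h1 := hCb (q N) (n * (1 / 2) ^ ampExp (q N)) η |(n : ℝ)| (abs_kappa n _) hn F
      simp only [Real.rpow_one]
      have h2 : (1 / 2 : ℝ) ^ q N ≤ (1 / 2) ^ N :=
        pow_le_pow_of_le_one (by norm_num) (by norm_num) (b.q_ge N)
      calc _ ≤ ∑ k ∈ F, ‖bumpV (G (q N)) (D (q N)) (n * (1 / 2) ^ ampExp (q N)) (η - k)‖ :=
            Finset.sum_le_sum fun k _ => hη k
        _ ≤ C * (1 / 2) ^ q N * T := h1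
        _ ≤ C * (1 / 2) ^ N * T := by gcongr
        _ = _ := by ring) (fun k => b.coef_lim h f hf n k)
  refine le_trans this (ENNReal.ofReal_le_ofReal ?_)
  have h1 := hCl _ hn
  have h2 : Real.log 2 ≤ Real.log |(n : ℝ)| := Real.log_le_log (by norm_num) hn
  have h3 := Real.log_two_gt_d9
  norm_num
  linarith

theorem bound_p (h : Setup ω χinv A D G) (b : BumpSeq D G x q) (f : ℝ → ℝ)
    (hf : ∀ t ∈ Icc 0 (2 * Real.pi), f t = t + ∑' j, bI D G x q j t) (p : ℝ) (hp : 1 < p)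
    (hp2 : p < 2) :
    ∃ C : ℝ, 0 < C ∧ ∀ n : ℤ, 2 ≤ |(n : ℝ)| →
      ApNorm p (fun t => Complex.exp (Complex.I * (n : ℂ) * (f t : ℂ))) ≤
        ENNReal.ofReal (C * (∫ τ in (1:ℝ)..|(n : ℝ)|, (χinv (1 / τ)) ^ p) ^ (1 / p)) := by
  obtain ⟨C, hC, hCb⟩ := h.bump_p p hp hp2
  obtain ⟨C', hC', hCl⟩ := h.md.sum_le_thetaP p hp
  have hp0 : 0 < p := by linarith
  set ρ : ℝ := (1 / 2) ^ ((p - 1) / p) with hρ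
  have hρ0 : 0 < ρ := by positivity
  have hρ1 : ρ < 1 := Real.rpow_lt_one (by norm_num) (by norm_num) (div_pos (by linarith) hp0)
  have hρp : ∀ N : ℕ, (ρ ^ N) ^ p = ((1 / 2 : ℝ) ^ N) ^ (p - 1) := by
    intro N
    rw [hρ, ← Real.rpow_natCast, ← Real.rpow_natCast, ← Real.rpow_mul (by positivity),
      ← Real.rpow_mul (by positivity), ← Real.rpow_mul (by positivity)]
    congr 1
    field_simp
  have hρ2 : 0 < 1 - ρ := by linarith
  refine ⟨C' ^ (1 / p) + C ^ (1 / p) / (1 - ρ), by positivity, fun n hn => ?_⟩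
  obtain ⟨I, hI1, hI2⟩ := Setup.exists_dyadic |(n : ℝ)| hn
  have h1 := hCl _ hn I hI1 hI2
  set J := ∫ τ in (1:ℝ)..|(n : ℝ)|, (χinv (1 / τ)) ^ p with hJ
  have h1' : 1 ≤ C' * J := by
    refine le_trans ?_ h1
    have p1 : ∀ i : ℕ, 0 ≤ χinv (1 / 2 ^ i) := fun i => (h.md.inv_pos (by positivity)).le
    have p2 : 0 ≤ ∑ i ∈ Finset.range I, (2:ℝ) ^ (i + 1) * χinv (1 / 2 ^ i) ^ p :=
      Finset.sum_nonneg fun i _ => mul_nonneg (by positivity) (Real.rpow_nonneg (p1 i) _)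
    have p3 : 0 ≤ |(n : ℝ)| * χinv (1 / 2 ^ I) ^ p :=
      mul_nonneg (by positivity) (Real.rpow_nonneg (p1 I) _)
    linarith
  have hJ0 : 0 < J := by
    by_contra hcon
    push Not at hcon
    nlinarith
  have := ap_abstract (fun N k => fourierCoef
      (fun t => Complex.exp (Complex.I * (n : ℂ) * (hN D G x q N t : ℂ))) k)
    (fun k => fourierCoef (fun t => Complex.exp (Complex.I * (n : ℂ) * (f t : ℂ))) k) p
    ((C * J) ^ (1 / p)) ρ hp.le (by positivity) hρ0.le hρ1 (coef_zero n p hp.le)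
    (fun N F => by
      obtain ⟨η, hη⟩ := b.coef_step h n N
      have h1 := hCb (q N) (n * (1 / 2) ^ ampExp (q N)) η |(n : ℝ)| (abs_kappa n _) hn F
      have h2 : (1 / 2 : ℝ) ^ q N ≤ (1 / 2) ^ N :=
        pow_le_pow_of_le_one (by norm_num) (by norm_num) (b.q_ge N)
      have h3 : ((1 / 2 : ℝ) ^ q N) ^ (p - 1) ≤ ((1 / 2) ^ N) ^ (p - 1) :=
        Real.rpow_le_rpow (by positivity) h2 (by linarith)
      calc _ ≤ ∑ k ∈ F, ‖bumpV (G (q N)) (D (q N)) (n * (1 / 2) ^ ampExp (q N)) (η - k)‖ ^ p :=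
            Finset.sum_le_sum fun k _ => Real.rpow_le_rpow (norm_nonneg _) (hη k) hp0.le
        _ ≤ C * ((1 / 2) ^ q N) ^ (p - 1) * J := h1
        _ ≤ C * ((1 / 2) ^ N) ^ (p - 1) * J := by gcongr
        _ = _ := by
          rw [Real.mul_rpow (by positivity) (by positivity), hρp, ← Real.rpow_mul (by positivity),
            one_div_mul_cancel hp0.ne', Real.rpow_one]
          ring) (fun k => b.coef_lim h f hf n k)
  refine le_trans this (ENNReal.ofReal_le_ofReal ?_)
  have h4 : 1 ≤ C' ^ (1 / p) * J ^ (1 / p) := by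
    rw [← Real.mul_rpow hC'.le hJ0.le]
    exact Real.one_le_rpow h1' (by positivity)
  rw [Real.mul_rpow hC.le hJ0.le, add_mul, mul_div_right_comm]
  linarith

end BumpSeq

/-- Theorem 4: if ω(2δ) < 2ω(δ) for small δ, there exists a nowhere
linear C^{1,ω}-diffeomorphism h of the circle with ‖e^{inh}‖_{A_p} = O(Θ_p(|n|))
for all 1 ≤ p < 2. -/
theorem statement16
    -- ω is a modulus of continuity: continuous non-decreasing on [0,∞), ω(0)=0, ω(δ)>0 for δ>0,
    -- with χ(δ) = δ·ω(δ) strictly increasing and unbounded, and χinv its inverse.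
    (ω : ℝ → ℝ)
    (hω_cont : ContinuousOn ω (Ici 0)) (hω_mono : MonotoneOn ω (Ici 0))
    (hω_zero : ω 0 = 0) (hω_pos : ∀ δ : ℝ, 0 < δ → 0 < ω δ)
    (hχ_mono : StrictMonoOn (fun δ => δ * ω δ) (Ici 0))
    (hχ_unbdd : ∀ y : ℝ, ∃ δ : ℝ, 0 ≤ δ ∧ y < δ * ω δ)
    (χinv : ℝ → ℝ)
    (hχinv_left : ∀ δ : ℝ, 0 ≤ δ → χinv (δ * ω δ) = δ)
    (hχinv_right : ∀ y : ℝ, 0 ≤ y → 0 ≤ χinv y ∧ χinv y * ω (χinv y) = y)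
    (hω_doubling : ∃ δ₀ : ℝ, 0 < δ₀ ∧ ∀ δ : ℝ, 0 < δ → δ < δ₀ → ω (2 * δ) < 2 * ω δ) :
    ∃ h : ℝ → ℝ,
      -- h is a C^{1,ω}-diffeomorphism of the circle
      ContDiff ℝ 1 h ∧
      (∀ t : ℝ, h (t + 2 * Real.pi) = h t + 2 * Real.pi) ∧
      StrictMono h ∧
      (∀ t : ℝ, 0 < deriv h t) ∧
      (∃ C : ℝ, 0 < C ∧ ∀ s t : ℝ, |deriv h s - deriv h t| ≤ C * ω |s - t|) ∧
      -- h is nowhere linear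
      (∀ u v : ℝ, u < v → ¬ ∃ a b : ℝ, ∀ t ∈ Ioo u v, h t = a * t + b) ∧
      -- ‖e^{inh}‖_{A₁} = O(Θ₁(|n|)) with Θ₁(y) = (y/log y)·χ^{-1}((log y)²/y)
      (∃ C : ℝ, 0 < C ∧ ∀ n : ℤ, 2 ≤ |(n : ℝ)| →
        ApNorm 1 (fun t => Complex.exp (Complex.I * (n : ℂ) * (h t : ℂ))) ≤
          ENNReal.ofReal (C * ((|(n : ℝ)| / Real.log |(n : ℝ)|) *
            χinv ((Real.log |(n : ℝ)|) ^ 2 / |(n : ℝ)|)))) ∧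
      -- ‖e^{inh}‖_{A_p} = O(Θ_p(|n|)) for 1 < p < 2
      (∀ p : ℝ, 1 < p → p < 2 →
        ∃ C : ℝ, 0 < C ∧ ∀ n : ℤ, 2 ≤ |(n : ℝ)| →
          ApNorm p (fun t => Complex.exp (Complex.I * (n : ℂ) * (h t : ℂ))) ≤
            ENNReal.ofReal (C * (∫ τ in (1:ℝ)..|(n : ℝ)|, (χinv (1 / τ)) ^ p) ^ (1 / p))) := by
  have md : ModData ω χinv :=
    ⟨hω_cont, hω_mono, hω_zero, hω_pos, hχ_mono, hχinv_right, hω_doubling⟩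
  obtain ⟨A, D, G, hS⟩ := Setup.exists_setup md
  obtain ⟨x, q, b⟩ := hS.exists_bumpSeq
  obtain ⟨f, h1, h2, h3, h4, h5, h6, h7⟩ := b.exists_diffeo hS
  exact ⟨f, h1, h2, h3, h4, h5, fun u v huv => b.not_linear hS f h2 h6 u v huv,
    b.bound_one hS f h7, fun p hp hp2 => b.bound_p hS f h7 p hp hp2⟩
end

section
/- Let 1 ≤ p < 2 and let φ be an absolutely continuous real 2π-periodic function whose derivative φ′ belongs to L²(𝕋) (in particular, this holds for every real φ ∈ C¹(𝕋)). Then ‖e^{iλφ}‖_{A_p(𝕋)} = O(|λ|^{1/p − 1/2}) as |λ| → ∞, λ ∈ ℝ. -/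
open MeasureTheory Real Set
open scoped ENNReal

lemma aux_W (L : ℝ) (hL : 1 ≤ L) :
    ∑' k : ℤ, ENNReal.ofReal ((1 + (k:ℝ)^2 / L^2)⁻¹) ≤ ENNReal.ofReal (8 * L) := by
  have hL0 : 0 < L := by linarith
  have key : ∀ n : ℕ, ((1 + (n:ℝ)^2 / L^2)⁻¹) ≤
      4 * L^2 * (1 / (L + n) - 1 / (L + (n + 1 : ℕ))) := by
    intro n
    have hn : (0:ℝ) ≤ n := n.cast_nonneg
    have h1 : (1 + (n:ℝ)^2 / L^2)⁻¹ = L^2 / (L^2 + n^2) := by field_simp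
    have h2 : 4 * L^2 * (1 / (L + n) - 1 / (L + (n + 1 : ℕ))) =
        4 * L^2 / ((L + n) * (L + n + 1)) := by
      push_cast
      field_simp
      ring
    rw [h1, h2, div_le_div_iff₀ (by positivity) (by positivity)]
    have : (L + n) * (L + n + 1) ≤ 4 * (L^2 + n^2) := by
      nlinarith [sq_nonneg (L - n), mul_nonneg hn (sub_nonneg.2 hL)]
    nlinarith [mul_le_mul_of_nonneg_left this (sq_nonneg L)]
  have hsum : ∀ m : ℕ, ∑ n ∈ Finset.range m, ((1 + (n:ℝ)^2 / L^2)⁻¹) ≤ 4 * L := by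
    intro m
    calc _ ≤ ∑ n ∈ Finset.range m, 4 * L^2 * (1 / (L + n) - 1 / (L + (n + 1 : ℕ))) :=
          Finset.sum_le_sum fun n _ => key n
      _ = 4 * L^2 * (1 / (L + (0:ℕ)) - 1 / (L + m)) := by
          rw [← Finset.mul_sum, Finset.sum_range_sub' (fun n : ℕ => 1 / (L + n))]
      _ ≤ 4 * L^2 * (1 / L) := by
          gcongr
          have : 0 ≤ 1 / (L + m) := by positivity
          simp only [Nat.cast_zero, add_zero]
          linarith
      _ = 4 * L := by field_simp
  have hE : ∑' n : ℕ, ENNReal.ofReal ((1 + (n:ℝ)^2 / L^2)⁻¹) ≤ ENNReal.ofReal (4 * L) := by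
    refine ENNReal.tsum_le_of_sum_range_le fun m => ?_
    rw [← ENNReal.ofReal_sum_of_nonneg (fun _ _ => by positivity)]
    exact ENNReal.ofReal_le_ofReal (hsum m)
  have hE2 : ∑' n : ℕ, ENNReal.ofReal ((1 + (((-((n:ℤ)+1) : ℤ)):ℝ)^2 / L^2)⁻¹) ≤
      ENNReal.ofReal (4 * L) := by
    refine le_trans (ENNReal.tsum_le_tsum fun n => ?_) hE
    apply ENNReal.ofReal_le_ofReal
    have hn : (0:ℝ) ≤ n := n.cast_nonneg
    have hsq : (n:ℝ)^2 ≤ (((-((n:ℤ)+1) : ℤ)):ℝ)^2 := by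
      push_cast
      nlinarith
    gcongr ?_⁻¹
    exact add_le_add_right (div_le_div_of_nonneg_right hsq (by positivity)) _
  rw [tsum_of_nat_of_neg_add_one ENNReal.summable ENNReal.summable]
  refine (add_le_add (by simpa only [Int.cast_natCast] using hE) hE2).trans ?_
  rw [← ENNReal.ofReal_add (by positivity) (by positivity)]
  apply ENNReal.ofReal_le_ofReal
  linarith

lemma aux_holder (p : ℝ) (hp1 : 1 ≤ p) (hp2 : p < 2) (c : ℤ → ℂ) (B L : ℝ) (hL : 1 ≤ L)
    (hB : 0 ≤ B) (h : ∑' k : ℤ, ENNReal.ofReal ((1 + (k:ℝ)^2 / L^2) * ‖c k‖^2) ≤ ENNReal.ofReal B) :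
    (∑' k : ℤ, ((‖c k‖₊ : ℝ≥0∞) ^ p)) ^ (1 / p) ≤
      ENNReal.ofReal (B ^ (1/2 : ℝ) * 8 ^ (1 / p - 1 / 2) * L ^ (1 / p - 1 / 2)) := by
  have hp0 : 0 < p := by linarith
  have hL0 : 0 < L := by linarith
  have h2p : 0 < 2 - p := by linarith
  set A : ℤ → ℝ≥0∞ := fun k => ENNReal.ofReal ((1 + (k:ℝ)^2 / L^2) * ‖c k‖^2) with hA
  set W : ℤ → ℝ≥0∞ := fun k => ENNReal.ofReal ((1 + (k:ℝ)^2 / L^2)⁻¹) with hW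
  have hpt : ∀ k, ((‖c k‖₊ : ℝ≥0∞) ^ p) = A k ^ (p/2) * W k ^ (p/2) := by
    intro k
    rw [← ENNReal.mul_rpow_of_nonneg _ _ (by positivity), hA, hW]
    simp only
    rw [← ENNReal.ofReal_mul (by positivity)]
    have : (1 + (k:ℝ)^2 / L^2) * ‖c k‖^2 * (1 + (k:ℝ)^2 / L^2)⁻¹ = ‖c k‖^2 := by
      have : (1 + (k:ℝ)^2 / L^2) ≠ 0 := by positivity
      field_simp
    rw [this, ENNReal.ofReal_pow (norm_nonneg _), ofReal_norm, ← ENNReal.rpow_natCast,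
      ← ENNReal.rpow_mul]
    congr 1
    push_cast; ring
  have hconj : (2/p).HolderConjugate (2/(2-p)) := by
    rw [Real.holderConjugate_iff]
    constructor
    · rw [lt_div_iff₀ hp0]; linarith
    · field_simp; ring
  have H := ENNReal.lintegral_mul_le_Lp_mul_Lq (Measure.count : Measure ℤ) hconj
    (f := fun k => A k ^ (p/2)) (g := fun k => W k ^ (p/2))
    (Measurable.of_discrete).aemeasurable (Measurable.of_discrete).aemeasurable
  simp only [lintegral_count, Pi.mul_apply, ← ENNReal.rpow_mul] at H
  have e1 : p / 2 * (2/p) = 1 := by field_simp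
  have e2 : p / 2 * (2/(2-p)) = p / (2-p) := by field_simp
  have hWle : ∀ k, W k ^ (p/(2-p)) ≤ W k := by
    intro k
    have h1 : W k ≤ 1 := by
      rw [hW]; simp only
      rw [← ENNReal.ofReal_one]
      apply ENNReal.ofReal_le_ofReal
      apply inv_le_one_of_one_le₀
      have : 0 ≤ (k:ℝ)^2 / L^2 := by positivity
      linarith
    have h2 : 1 ≤ p/(2-p) := by rw [le_div_iff₀ h2p]; linarith
    calc W k ^ (p/(2-p)) ≤ W k ^ (1:ℝ) := ENNReal.rpow_le_rpow_of_exponent_ge h1 h2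
      _ = W k := ENNReal.rpow_one _
  have hs : 0 ≤ 1 / p - 1 / 2 := by
    rw [sub_nonneg]; exact one_div_le_one_div_of_le hp0 hp2.le
  have hWs : ∑' k, W k ^ (p/(2-p)) ≤ ENNReal.ofReal (8 * L) :=
    (ENNReal.tsum_le_tsum hWle).trans (aux_W L hL)
  rw [e1, e2] at H
  simp only [ENNReal.rpow_one] at H
  calc (∑' k : ℤ, ((‖c k‖₊ : ℝ≥0∞) ^ p)) ^ (1 / p)
      = (∑' k, A k ^ (p/2) * W k ^ (p/2)) ^ (1/p) := by simp_rw [hpt]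
    _ ≤ (ENNReal.ofReal B ^ (1/(2/p)) * ENNReal.ofReal (8*L) ^ (1/(2/(2-p)))) ^ (1/p) := by
        refine ENNReal.rpow_le_rpow (H.trans ?_) (by positivity)
        gcongr
    _ = ENNReal.ofReal B ^ (1/2:ℝ) * ENNReal.ofReal (8*L) ^ (1 / p - 1 / 2) := by
        rw [ENNReal.mul_rpow_of_nonneg _ _ (by positivity), ← ENNReal.rpow_mul, ← ENNReal.rpow_mul]
        congr 2
        · field_simp
        · field_simp
    _ = _ := by
        rw [ENNReal.ofReal_rpow_of_nonneg hB (by positivity),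
          ENNReal.ofReal_rpow_of_nonneg (by positivity) hs,
          ← ENNReal.ofReal_mul (by positivity), Real.mul_rpow (by positivity) hL0.le, mul_assoc]

lemma aux_parseval (g : ℝ → ℂ) (hg : MemLp g 2 (volume.restrict (Ioc 0 (2 * Real.pi)))) :
    HasSum (fun k : ℤ => ‖fourierCoef g k‖^2)
      ((2 * Real.pi)⁻¹ * ∫ t in (0:ℝ)..(2 * Real.pi), ‖g t‖^2) := by
  have h := hasSum_sq_fourierCoeffOn (two_pi_pos) hg
  rw [sub_zero, smul_eq_mul] at h
  convert h using 4 with k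
  rw [fourierCoeffOn_eq_integral, fourierCoef]
  rw [Complex.real_smul]
  congr 1
  · push_cast; simp
  · apply intervalIntegral.integral_congr
    intro t _
    simp only [smul_eq_mul]
    rw [mul_comm, fourier_coe_apply]
    congr 2
    have : (Real.pi : ℂ) ≠ 0 := by exact_mod_cast Real.pi_ne_zero
    push_cast
    simp only [sub_zero]
    field_simp

lemma aux_comp (s s' : ℝ → ℝ) (hs : ∀ x, HasDerivAt s (s' x) x) (hlip : LipschitzWith 1 s)
    (ψ ψ' : ℝ → ℝ) (a b : ℝ) (hac : AbsolutelyContinuousOnInterval ψ a b)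
    (hd : ∀ᵐ x, x ∈ uIcc a b → HasDerivAt ψ (ψ' x) x) :
    ∫ t in a..b, s' (ψ t) * ψ' t = s (ψ b) - s (ψ a) := by
  have hac2 : AbsolutelyContinuousOnInterval (fun t => s (ψ t)) a b := by
    refine squeeze_zero (fun t => ?_) (fun t => ?_) hac
    · exact Finset.sum_nonneg (fun i hi ↦ by positivity)
    · refine Finset.sum_le_sum fun i _ => ?_
      simpa using hlip.dist_le_mul (ψ (t.2 i).1) (ψ (t.2 i).2)
  rw [← hac2.integral_deriv_eq_sub]
  apply intervalIntegral.integral_congr_ae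
  filter_upwards [hd] with x hx hx2
  exact (((hs (ψ x)).comp x (hx (uIoc_subset_uIcc hx2))).deriv).symm

lemma aux_ofReal {g : ℝ → ℝ} {a b : ℝ} (h : IntervalIntegrable g volume a b) :
    IntervalIntegrable (fun t => (g t : ℂ)) volume a b :=
  ⟨h.1.ofReal, h.2.ofReal⟩

lemma aux_parts (φ φ' : ℝ → ℝ)
    (hφ_per : ∀ t : ℝ, φ (t + 2 * Real.pi) = φ t)
    (hφ'_locint : ∀ t : ℝ, IntervalIntegrable φ' volume 0 t)
    (hφ_ac : ∀ t : ℝ, φ t = φ 0 + ∫ s in (0:ℝ)..t, φ' s) (lam : ℝ) (k : ℤ) :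
    fourierCoef (fun t => (lam * φ' t : ℝ) * Complex.exp (Complex.I * (lam : ℂ) * (φ t : ℂ))) k =
      k * fourierCoef (fun t => Complex.exp (Complex.I * (lam : ℂ) * (φ t : ℂ))) k := by
  set b := 2 * Real.pi with hb
  have hint := hφ'_locint b
  have hfun : φ = fun t => φ 0 + ∫ s in (0:ℝ)..t, φ' s := funext hφ_ac
  have hacφ : AbsolutelyContinuousOnInterval φ 0 b := by
    rw [hfun]
    have h1 : AbsolutelyContinuousOnInterval (fun _ : ℝ => φ 0) 0 b :=
      ContDiffOn.absolutelyContinuousOnInterval contDiffOn_const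
    exact h1.add (hint.absolutelyContinuousOnInterval_intervalIntegral (by simp))
  have hdφ : ∀ᵐ x, x ∈ uIcc 0 b → HasDerivAt φ (φ' x) x := by
    filter_upwards [hint.ae_hasDerivAt_integral] with x hx hx2
    rw [hfun]
    exact (hx hx2 0 (by simp)).const_add _
  set ψ : ℝ → ℝ := fun t => lam * φ t - k * t with hψ
  set ψ' : ℝ → ℝ := fun t => lam * φ' t - k with hψ'
  have hac : AbsolutelyContinuousOnInterval ψ 0 b := by
    have h1 : AbsolutelyContinuousOnInterval (fun t : ℝ => (k:ℝ) * t) 0 b :=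
      ContDiffOn.absolutelyContinuousOnInterval (by fun_prop)
    exact (hacφ.const_mul lam).sub h1
  have hd : ∀ᵐ x, x ∈ uIcc 0 b → HasDerivAt ψ (ψ' x) x := by
    filter_upwards [hdφ] with x hx hx2
    have h1 := ((hx hx2).const_mul lam).sub ((hasDerivAt_id x).const_mul (k:ℝ))
    rw [mul_one] at h1
    exact h1
  have hψb : ψ b = ψ 0 - k * (2 * Real.pi) := by
    have := hφ_per 0
    rw [zero_add] at this
    simp only [hψ, this]
    rw [hb]
    ring
  have hsin : LipschitzWith 1 Real.sin := by
    apply lipschitzWith_of_nnnorm_deriv_le Real.differentiable_sin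
    intro x
    rw [Real.deriv_sin, ← NNReal.coe_le_coe]
    simpa using Real.abs_cos_le_one x
  have hcos : LipschitzWith 1 Real.cos := by
    apply lipschitzWith_of_nnnorm_deriv_le Real.differentiable_cos
    intro x
    rw [Real.deriv_cos, ← NNReal.coe_le_coe]
    simpa using Real.abs_sin_le_one x
  have I1 : ∫ t in (0:ℝ)..b, Real.cos (ψ t) * ψ' t = 0 := by
    rw [aux_comp Real.sin Real.cos Real.hasDerivAt_sin hsin ψ ψ' 0 b hac hd, hψb,
      Real.sin_sub_int_mul_two_pi, sub_self]
  have I2 : ∫ t in (0:ℝ)..b, -Real.sin (ψ t) * ψ' t = 0 := by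
    rw [aux_comp Real.cos (fun x => -Real.sin x) Real.hasDerivAt_cos hcos ψ ψ' 0 b hac hd, hψb,
      Real.cos_sub_int_mul_two_pi, sub_self]
  have hcont : ContinuousOn ψ (uIcc 0 b) := hac.continuousOn
  have hψ'int : IntervalIntegrable ψ' volume 0 b :=
    (hint.const_mul lam).sub intervalIntegrable_const
  have J1 : IntervalIntegrable (fun t => Real.cos (ψ t) * ψ' t) volume 0 b :=
    hψ'int.continuousOn_mul (Real.continuous_cos.comp_continuousOn hcont)
  have J2 : IntervalIntegrable (fun t => -Real.sin (ψ t) * ψ' t) volume 0 b :=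
    hψ'int.continuousOn_mul (Real.continuous_sin.comp_continuousOn hcont).neg
  have I3 : ∫ t in (0:ℝ)..b, (ψ' t : ℂ) * Complex.exp (Complex.I * (ψ t : ℂ)) = 0 := by
    have : ∀ t, (ψ' t : ℂ) * Complex.exp (Complex.I * (ψ t : ℂ)) =
        ((Real.cos (ψ t) * ψ' t : ℝ) : ℂ) - Complex.I * ((-Real.sin (ψ t) * ψ' t : ℝ) : ℂ) := by
      intro t
      rw [mul_comm Complex.I, Complex.exp_mul_I]
      push_cast
      ring
    simp_rw [this]
    rw [intervalIntegral.integral_sub (aux_ofReal J1) ((aux_ofReal J2).const_mul _),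
      intervalIntegral.integral_const_mul, intervalIntegral.integral_ofReal,
      intervalIntegral.integral_ofReal, I1, I2]
    simp
  have hexp : ContinuousOn (fun t => Complex.exp (Complex.I * (ψ t : ℂ))) (uIcc 0 b) := by
    fun_prop
  have K1 : IntervalIntegrable (fun t => ((lam * φ' t : ℝ) : ℂ) * Complex.exp (Complex.I * (ψ t : ℂ)))
      volume 0 b := (aux_ofReal (hint.const_mul lam)).mul_continuousOn hexp
  have K2 : IntervalIntegrable (fun t => (k : ℂ) * Complex.exp (Complex.I * (ψ t : ℂ)))
      volume 0 b := hexp.intervalIntegrable.const_mul _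
  have I4 : ∫ t in (0:ℝ)..b, ((lam * φ' t : ℝ) : ℂ) * Complex.exp (Complex.I * (ψ t : ℂ)) =
      k * ∫ t in (0:ℝ)..b, Complex.exp (Complex.I * (ψ t : ℂ)) := by
    rw [← intervalIntegral.integral_const_mul, ← sub_eq_zero, ← intervalIntegral.integral_sub K1 K2,
      ← I3]
    apply intervalIntegral.integral_congr
    intro t _
    simp only [hψ']
    push_cast
    ring
  have hE : ∀ t : ℝ, Complex.exp (Complex.I * (lam : ℂ) * (φ t : ℂ)) *
      Complex.exp (-Complex.I * (k : ℂ) * (t : ℂ)) = Complex.exp (Complex.I * (ψ t : ℂ)) := by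
    intro t
    rw [← Complex.exp_add]
    congr 1
    simp only [hψ]
    push_cast
    ring
  unfold fourierCoef
  simp_rw [mul_assoc _ (Complex.exp (Complex.I * (lam : ℂ) * (φ _ : ℂ))), hE]
  rw [I4]
  ring

/-- estimate (1): for an absolutely continuous real 2π-periodic φ with
φ′ ∈ L²(𝕋), ‖e^{iλφ}‖_{A_p} = O(|λ|^{1/p − 1/2}) as |λ| → ∞, for 1 ≤ p < 2. -/
theorem statement17
    (p : ℝ) (hp1 : 1 ≤ p) (hp2 : p < 2)
    (φ φ' : ℝ → ℝ)
    (hφ_per : ∀ t : ℝ, φ (t + 2 * Real.pi) = φ t)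
    -- φ is absolutely continuous with derivative φ′
    (hφ'_locint : ∀ t : ℝ, IntervalIntegrable φ' volume 0 t)
    (hφ_ac : ∀ t : ℝ, φ t = φ 0 + ∫ s in (0:ℝ)..t, φ' s)
    -- φ′ ∈ L²(𝕋)
    (hφ'_L2 : IntervalIntegrable (fun s => (φ' s) ^ 2) volume 0 (2 * Real.pi)) :
    ∃ C : ℝ, 0 < C ∧ ∃ Λ : ℝ, 1 ≤ Λ ∧ ∀ lam : ℝ, Λ ≤ |lam| →
      ApNorm p (fun t => Complex.exp (Complex.I * (lam : ℂ) * (φ t : ℂ))) ≤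
        ENNReal.ofReal (C * |lam| ^ (1 / p - 1 / 2)) := by
  set b := 2 * Real.pi with hb
  have hb0 : 0 < b := Real.two_pi_pos
  set M : ℝ := b⁻¹ * ∫ t in (0:ℝ)..b, (φ' t)^2 with hM
  have hM0 : 0 ≤ M := by
    apply mul_nonneg (by positivity)
    exact intervalIntegral.integral_nonneg hb0.le fun _ _ => sq_nonneg _
  refine ⟨(1 + M) ^ (1/2 : ℝ) * 8 ^ (1 / p - 1 / 2), by positivity, 1, le_rfl, fun lam hlam => ?_⟩
  unfold ApNorm
  refine aux_holder p hp1 hp2 _ (1 + M) |lam| hlam (by linarith) ?_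
  set f : ℝ → ℂ := fun t => Complex.exp (Complex.I * (lam : ℂ) * (φ t : ℂ)) with hf
  have hcontφ : Continuous φ := by
    have hfun : φ = fun t => φ 0 + ∫ s in (0:ℝ)..t, φ' s := funext hφ_ac
    rw [hfun]
    exact continuous_const.add (intervalIntegral.continuous_primitive
      (fun x y => (hφ'_locint x).symm.trans (hφ'_locint y)) 0)
  have hcontf : Continuous f := by fun_prop
  have hnorm : ∀ t, ‖f t‖ = 1 := by
    intro t
    have : Complex.I * (lam : ℂ) * (φ t : ℂ) = ((lam * φ t : ℝ) : ℂ) * Complex.I := by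
      push_cast; ring
    rw [hf]; simp only
    rw [this, Complex.norm_exp_ofReal_mul_I]
  have hfL2 : MemLp f 2 (volume.restrict (Ioc 0 b)) :=
    MemLp.of_bound hcontf.aestronglyMeasurable 1 (Filter.Eventually.of_forall fun t => (hnorm t).le)
  have P1 := aux_parseval f hfL2
  simp only [hnorm] at P1
  have hφ'm : AEStronglyMeasurable φ' (volume.restrict (Ioc 0 b)) :=
    ((intervalIntegrable_iff_integrableOn_Ioc_of_le hb0.le).1 (hφ'_locint b)).aestronglyMeasurable
  have hφ'2 : MemLp φ' 2 (volume.restrict (Ioc 0 b)) :=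
    (memLp_two_iff_integrable_sq hφ'm).2
      ((intervalIntegrable_iff_integrableOn_Ioc_of_le hb0.le).1 hφ'_L2)
  have hgL2 : MemLp (fun t => ((lam * φ' t : ℝ) : ℂ) * f t) 2 (volume.restrict (Ioc 0 b)) := by
    refine (hφ'2.const_mul lam).of_le ?_ (Filter.Eventually.of_forall fun t => ?_)
    · exact (Complex.continuous_ofReal.comp_aestronglyMeasurable (hφ'm.const_mul lam)).mul
        hcontf.aestronglyMeasurable
    · rw [norm_mul, hnorm, mul_one, Complex.norm_real]
  have P2 := aux_parseval _ hgL2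
  have hparts : ∀ k : ℤ, fourierCoef (fun t => ((lam * φ' t : ℝ) : ℂ) * f t) k =
      k * fourierCoef f k := aux_parts φ φ' hφ_per hφ'_locint hφ_ac lam
  simp only [hparts, norm_mul, hnorm, mul_one, Complex.norm_real, mul_pow, Real.norm_eq_abs, sq_abs,
    intervalIntegral.integral_const_mul, Complex.norm_intCast] at P2
  have hl0 : lam ≠ 0 := by
    rintro rfl
    simp at hlam
    linarith
  have P3 := P1.add (P2.mul_left (lam^2)⁻¹)
  have hval : (2 * Real.pi)⁻¹ * (∫ t in (0:ℝ)..(2*Real.pi), (1:ℝ)^2) +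
      (lam^2)⁻¹ * ((2 * Real.pi)⁻¹ * (lam^2 * ∫ t in (0:ℝ)..(2*Real.pi), (φ' t)^2)) = 1 + M := by
    rw [hM, ← hb]
    simp
    field_simp
  rw [hval] at P3
  have hterm : (fun k : ℤ => ENNReal.ofReal ((1 + (k:ℝ)^2 / |lam|^2) * ‖fourierCoef f k‖^2)) =
      fun k : ℤ => ENNReal.ofReal (‖fourierCoef f k‖^2 +
        (lam^2)⁻¹ * ((k:ℝ)^2 * ‖fourierCoef f k‖^2)) := by
    funext k
    congr 1
    rw [sq_abs]
    field_simp
  rw [hterm, ← ENNReal.ofReal_tsum_of_nonneg (fun k => by positivity) P3.summable, P3.tsum_eq]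
end
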